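/- arXiv:1410.3247 — 4 statements merged into one kernel-verified Lean document; each statement's English description precedes it below -/
import Mathlib

section
/- Let (P, A_1,…,A_n) be a regular poset of width w, and suppose L ⊆ P induces a (2w+1)-ladder in P with lower leg x_1,…,x_{2w+1} and upper leg y_1,…,y_{2w+1}. Then A(y_1) ⊑ A(x_{2w+1}). -/
/-- `S` is an antichain with respect to the order relation `le`. -/
def IsAntichainOn {α : Type*} (le : α → α → Prop) (S : Finset α) : Prop :=
  ∀ a ∈ S, ∀ b ∈ S, a ≠ b → ¬ le a b ∧ ¬ le b a

/-- The poset `(α, le)` has width `w`: there is an antichain of size `w`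
and every antichain has size at most `w`. -/
def IsWidth {α : Type*} (le : α → α → Prop) (w : ℕ) : Prop :=
  (∃ S : Finset α, IsAntichainOn le S ∧ S.card = w) ∧
    ∀ S : Finset α, IsAntichainOn le S → S.card ≤ w

/-- `g` is an `n`-Grundy coloring of the poset `(α, le)`:
`g` takes values in `{1,…,n}`, is surjective onto `{1,…,n}`,
each color class is a chain (G1), and each vertex of color `j`
has an incomparable witness of every smaller color (G3). -/
def IsGrundy {α : Type*} (le : α → α → Prop) (n : ℕ) (g : α → ℕ) : Prop :=
  (∀ v, 1 ≤ g v ∧ g v ≤ n) ∧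
  (∀ i, 1 ≤ i → i ≤ n → ∃ v, g v = i) ∧
  (∀ u v, g u = g v → le u v ∨ le v u) ∧
  (∀ v i, 1 ≤ i → i < g v → ∃ u, (¬ le u v ∧ ¬ le v u) ∧ g u = i)

/-- `c` is the First-Fit chain partition of the poset `(α, le)` presented in the
strict total order `prec`: every vertex `v` gets the least color `c v ≥ 1` such
that all `prec`-earlier vertices of the same color are comparable to `v`. -/
def IsFFColoring {α : Type*} (le prec : α → α → Prop) (c : α → ℕ) : Prop :=
  ∀ v, 1 ≤ c v ∧
    (∀ u, prec u v → c u = c v → le u v ∨ le v u) ∧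
    (∀ j, 1 ≤ j → j < c v → ∃ u, prec u v ∧ c u = j ∧ ¬ le u v ∧ ¬ le v u)

/-- The sequences `x` (lower leg) and `y` (upper leg) form an induced copy of
the `m`-ladder `L_m` in the poset `(α, le)`. -/
def IsLadderIn {α : Type*} (le : α → α → Prop) {m : ℕ} (x y : Fin m → α) : Prop :=
  (∀ i j : Fin m, i < j → le (x i) (x j) ∧ x i ≠ x j) ∧
  (∀ i j : Fin m, i < j → le (y i) (y j) ∧ y i ≠ y j) ∧
  (∀ i : Fin m, le (x i) (y i) ∧ x i ≠ y i) ∧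
  (∀ i j : Fin m, i < j → ¬ le (y i) (x j) ∧ ¬ le (x j) (y i))

/-- The poset `(α, le)` contains no induced copy of the `m`-ladder `L_m`. -/
def LFree {α : Type*} (le : α → α → Prop) (m : ℕ) : Prop :=
  ¬ ∃ x y : Fin m → α, IsLadderIn le x y

/-- `A ⊑ B`: every element of `A` is `le`-below some element of `B`. -/
def Below {α : Type*} (le : α → α → Prop) (A B : Finset α) : Prop :=
  ∀ a ∈ A, ∃ b ∈ B, le a b

/-- `A ⊏ B`: `A ⊑ B` and `A ≠ B`. -/
def StrictBelow {α : Type*} (le : α → α → Prop) (A B : Finset α) : Prop :=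
  Below le A B ∧ A ≠ B

/-- The bipartite poset induced by antichains `A` and `B` (with `A` below `B`)
is a core: `|A| = |B|` and every comparable pair `x ≤ y` with `x ∈ A`, `y ∈ B`
is a Dilworth edge, i.e. belongs to a perfect matching of comparable pairs. -/
def IsCore {α : Type*} (le : α → α → Prop) (A B : Finset α) : Prop :=
  A.card = B.card ∧
    ∀ x ∈ A, ∀ y ∈ B, le x y →
      ∃ f : α → α, Set.BijOn f ↑A ↑B ∧ (∀ a ∈ A, le a (f a)) ∧ f x = y

/-- `A j = A_{s(i)}`: among the antichains presented before `A i`, it is the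
`⊑`-least one strictly above `A i`. -/
def IsSuccIdx {α : Type*} (le : α → α → Prop) {n : ℕ} (A : Fin n → Finset α)
    (i j : Fin n) : Prop :=
  j < i ∧ StrictBelow le (A i) (A j) ∧
    ∀ k : Fin n, k < i → StrictBelow le (A i) (A k) → Below le (A j) (A k)

/-- `A j = A_{p(i)}`: among the antichains presented before `A i`, it is the
`⊑`-greatest one strictly below `A i`. -/
def IsPredIdx {α : Type*} (le : α → α → Prop) {n : ℕ} (A : Fin n → Finset α)
    (i j : Fin n) : Prop :=
  j < i ∧ StrictBelow le (A j) (A i) ∧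
    ∀ k : Fin n, k < i → StrictBelow le (A k) (A i) → Below le (A k) (A j)

/-- `(P, A_1, …, A_n)` is a regular poset of width `w`: the `A i` are pairwise
disjoint maximum antichains (each of size `w`, the width of `P`) covering `P`,
linearly ordered by `⊑`; consecutive-at-presentation-time pairs induce cores
(R4); and every comparability with an earlier antichain factors through the
`⊑`-neighbors at presentation time (R5). -/
def IsRegularPoset {α : Type*} (le : α → α → Prop) (w : ℕ) {n : ℕ}
    (A : Fin n → Finset α) : Prop :=
  (∀ v : α, ∃ i, v ∈ A i) ∧
  (∀ i j : Fin n, i ≠ j → ∀ v ∈ A i, v ∉ A j) ∧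
  (∀ i, IsAntichainOn le (A i)) ∧
  (∀ i, (A i).card = w) ∧
  IsWidth le w ∧
  (∀ i j : Fin n, Below le (A i) (A j) ∨ Below le (A j) (A i)) ∧
  (∀ i j : Fin n, IsSuccIdx le A i j → IsCore le (A i) (A j)) ∧
  (∀ i j : Fin n, IsPredIdx le A i j → IsCore le (A j) (A i)) ∧
  (∀ (i j : Fin n) (x y : α), x ∈ A i → y ∈ A j → le x y → x ≠ y →
    (j < i → ∃ k, IsSuccIdx le A i k ∧ ∃ z ∈ A k, le x z ∧ x ≠ z ∧ le z y) ∧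
    (i < j → ∃ k, IsPredIdx le A j k ∧ ∃ z ∈ A k, le x z ∧ le z y ∧ z ≠ y))

/-- `x` is an ascending chain: increasing both in the poset and in color. -/
def IsAscending {α : Type*} (le : α → α → Prop) (g : α → ℕ) {k : ℕ}
    (x : Fin k → α) : Prop :=
  ∀ i j : Fin k, i < j → (le (x i) (x j) ∧ x i ≠ x j) ∧ g (x i) < g (x j)

/-- `x` is a descending chain: decreasing in the poset, increasing in color. -/
def IsDescending {α : Type*} (le : α → α → Prop) (g : α → ℕ) {k : ℕ}
    (x : Fin k → α) : Prop :=
  ∀ i j : Fin k, i < j → (le (x j) (x i) ∧ x i ≠ x j) ∧ g (x i) < g (x j)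

/-- The order of the lexicographic product `P · Q`. -/
def LexLe {α β : Type*} (leP : α → α → Prop) (leQ : β → β → Prop) :
    α × β → α × β → Prop :=
  fun a b => (leP a.1 b.1 ∧ a.1 ≠ b.1) ∨ (a.1 = b.1 ∧ leQ a.2 b.2)

theorem below_trans6 {α : Type} {le : α → α → Prop} (hle : IsPartialOrder α le)
    {A B C : Finset α} (h1 : Below le A B) (h2 : Below le B C) : Below le A C := by
  intro a ha
  obtain ⟨b, hb, hab⟩ := h1 a ha
  obtain ⟨c, hc, hbc⟩ := h2 b hb
  exact ⟨c, hc, hle.trans _ _ _ hab hbc⟩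

theorem below_refl6 {α : Type} {le : α → α → Prop} (hle : IsPartialOrder α le)
    (A : Finset α) : Below le A A := fun a ha => ⟨a, ha, hle.refl a⟩

/-- Mutually `⊑`-related antichains of a regular poset share elements of the first. -/
theorem below_antisymm_mem6 {α : Type} {le : α → α → Prop} (hle : IsPartialOrder α le)
    {A B : Finset α} (hA : IsAntichainOn le A) (h1 : Below le A B) (h2 : Below le B A)
    {u : α} (hu : u ∈ A) : u ∈ B := by
  obtain ⟨b, hb, hub⟩ := h1 u hu
  obtain ⟨c, hc, hbc⟩ := h2 b hb
  have huc : u = c := by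
    by_contra hne
    exact (hA u hu c hc hne).1 (hle.trans _ _ _ hub hbc)
  subst huc
  have : u = b := hle.antisymm _ _ hub hbc
  rwa [this]

theorem index_unique6 {α : Type} {le : α → α → Prop} {w n : ℕ} {A : Fin n → Finset α}
    (hreg : IsRegularPoset le w A) {i j : Fin n} {u : α} (hi : u ∈ A i) (hj : u ∈ A j) :
    i = j := by
  by_contra hne
  exact hreg.2.1 i j hne u hi hj

theorem below_of_le6 {α : Type} {le : α → α → Prop} (hle : IsPartialOrder α le) {w n : ℕ}
    {A : Fin n → Finset α} (hreg : IsRegularPoset le w A) {i j : Fin n} {u v : α}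
    (hu : u ∈ A i) (hv : v ∈ A j) (huv : le u v) : Below le (A i) (A j) := by
  rcases hreg.2.2.2.2.2.1 i j with h | h
  · exact h
  · obtain ⟨z, hz, hvz⟩ := h v hv
    have huz : u = z := by
      by_contra hne
      exact (hreg.2.2.1 i u hu z hz hne).1 (hle.trans _ _ _ huv hvz)
    subst huz
    have : u = v := hle.antisymm _ _ huv hvz
    subst this
    rw [index_unique6 hreg hu hv]
    exact below_refl6 hle _

theorem ne_of_index_ne6 {α : Type} {le : α → α → Prop} {w n : ℕ} {A : Fin n → Finset α}
    (hreg : IsRegularPoset le w A) {i j : Fin n} {u : α} (hu : u ∈ A i) (hij : i ≠ j) :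
    A i ≠ A j := fun h => hij (index_unique6 hreg hu (h ▸ hu))

/-- A comparability factors through `A g` if `A g` is either the earliest antichain in
`[A g, A j]`, or the earliest antichain in `[A i, A g]`. -/
theorem factor6 {α : Type} {le : α → α → Prop} (hle : IsPartialOrder α le) {w n : ℕ}
    {A : Fin n → Finset α} (hreg : IsRegularPoset le w A) (g : Fin n) :
    ∀ (N : ℕ) (i j : Fin n) (u v : α), (i : ℕ) + j ≤ N → u ∈ A i → v ∈ A j → le u v →
      Below le (A i) (A g) → Below le (A g) (A j) →
      ((∀ k, Below le (A g) (A k) → Below le (A k) (A j) → g ≤ k) ∨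
        (∀ k, Below le (A i) (A k) → Below le (A k) (A g) → g ≤ k)) →
      ∃ z ∈ A g, le u z ∧ le z v := by
  intro N
  induction N using Nat.strong_induction_on with
  | _ N ih =>
  intro i j u v hN hu hv huv hig hgj hmin
  by_cases h1 : i = g
  · subst h1; exact ⟨u, hu, hle.refl u, huv⟩
  by_cases h2 : j = g
  · subst h2; exact ⟨v, hv, huv, hle.refl v⟩
  have hij : i ≠ j := by
    intro h
    subst h
    exact h1 (index_unique6 hreg hu (below_antisymm_mem6 hle (hreg.2.2.1 i) hig hgj hu))
  have hne : u ≠ v := by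
    intro h
    subst h
    exact hij (index_unique6 hreg hu hv)
  have hsi : StrictBelow le (A i) (A g) := ⟨hig, ne_of_index_ne6 hreg hu h1⟩
  have hsj : StrictBelow le (A g) (A j) := ⟨hgj, (ne_of_index_ne6 hreg hv h2).symm⟩
  have hR := hreg.2.2.2.2.2.2.2.2 i j u v hu hv huv hne
  have hmin' : g ≤ j ∨ g ≤ i := by
    rcases hmin with h | h
    · exact Or.inl (h j hgj (below_refl6 hle _))
    · exact Or.inr (h i (below_refl6 hle _) hig)
  rcases lt_or_gt_of_ne hij with hlt | hlt
  · have hg : g < j := by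
      rcases hmin' with h | h
      · exact lt_of_le_of_ne h (Ne.symm h2)
      · exact lt_of_le_of_lt h hlt
    obtain ⟨k, ⟨hk1, hk2, hk3⟩, z, hz, huz, hzv, -⟩ := hR.2 hlt
    have hgk := hk3 g hg hsj
    have hk1' : (k : ℕ) < j := hk1
    obtain ⟨t, ht, hut, htz⟩ := ih ((i : ℕ) + k) (by omega) i k u z le_rfl hu hz huz hig hgk
      (hmin.imp (fun h l hl1 hl2 => h l hl1 (below_trans6 hle hl2 hk2.1)) id)
    exact ⟨t, ht, hut, hle.trans _ _ _ htz hzv⟩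
  · have hg : g < i := by
      rcases hmin' with h | h
      · exact lt_of_le_of_lt h hlt
      · exact lt_of_le_of_ne h (Ne.symm h1)
    obtain ⟨k, ⟨hk1, hk2, hk3⟩, z, hz, huz, -, hzv⟩ := hR.1 hlt
    have hkg := hk3 g hg hsi
    have hk1' : (k : ℕ) < i := hk1
    obtain ⟨t, ht, hzt, htv⟩ := ih ((k : ℕ) + j) (by omega) k j z v le_rfl hz hv hzv hkg hgj
      (hmin.imp id (fun h l hl1 hl2 => h l (below_trans6 hle hk2.1 hl1) hl2))
    exact ⟨t, ht, hle.trans _ _ _ huz hzt, htv⟩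

/-- At most `w` rungs of a ladder factor through a common antichain. -/
theorem rungs_card6 {α : Type} {le : α → α → Prop} (hle : IsPartialOrder α le) {w n : ℕ}
    {A : Fin n → Finset α} (hreg : IsRegularPoset le w A) {m : ℕ} {x y : Fin m → α}
    (hlad : IsLadderIn le x y) (g : Fin n) (S : Finset (Fin m))
    (hS : ∀ i ∈ S, ∃ z ∈ A g, le (x i) z ∧ le z (y i)) : S.card ≤ w := by
  rw [← hreg.2.2.2.1 g]
  rcases S.eq_empty_or_nonempty with h | ⟨i0, -⟩
  · simp [h]
  haveI : Nonempty α := ⟨x i0⟩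
  choose! z hz using hS
  refine Finset.card_le_card_of_injOn z (fun i hi => (hz i hi).1) ?_
  intro i hi j hj hij
  by_contra hne
  rcases lt_or_gt_of_ne hne with h | h
  · exact (hlad.2.2.2 i j h).2 (hle.trans _ _ _ (hz j hj).2.1 (hij ▸ (hz i hi).2.2))
  · exact (hlad.2.2.2 j i h).2 (hle.trans _ _ _ (hz i hi).2.1 (hij ▸ (hz j hj).2.2))

/-- For a `(2w+1)`-ladder induced in a regular poset of width `w`
with lower leg `x` and upper leg `y`, one has `A(y 1) ⊑ A(x (2w+1))`. -/
theorem stmt_6 {α : Type} [Fintype α] (le : α → α → Prop)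
    (hle : IsPartialOrder α le) (w : ℕ) {n : ℕ} (A : Fin n → Finset α)
    (hreg : IsRegularPoset le w A)
    (x y : Fin (2 * w + 1) → α) (hlad : IsLadderIn le x y)
    (a b : Fin n) (ha : y ⟨0, by omega⟩ ∈ A a)
    (hb : x ⟨2 * w, by omega⟩ ∈ A b) :
    Below le (A a) (A b) := by
  classical
  rcases hreg.2.2.2.2.2.1 a b with h | hba
  · exact h
  exfalso
  choose lv hlv using hreg.1
  have hlva := index_unique6 hreg (hlv _) ha
  have hlvb := index_unique6 hreg (hlv _) hb
  have hx : ∀ i j, i ≤ j → Below le (A (lv (x i))) (A (lv (x j))) := by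
    intro i j hij
    rcases hij.eq_or_lt with h | h
    · rw [h]; exact below_refl6 hle _
    · exact below_of_le6 hle hreg (hlv _) (hlv _) (hlad.1 i j h).1
  have hy : ∀ i j, i ≤ j → Below le (A (lv (y i))) (A (lv (y j))) := by
    intro i j hij
    rcases hij.eq_or_lt with h | h
    · rw [h]; exact below_refl6 hle _
    · exact below_of_le6 hle hreg (hlv _) (hlv _) (hlad.2.1 i j h).1
  have hxb : ∀ i, Below le (A (lv (x i))) (A b) := by
    intro i
    rw [← hlvb]
    exact hx _ _ (Fin.le_def.2 (by have := i.2; simp only; omega))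
  have hby : ∀ i, Below le (A b) (A (lv (y i))) := by
    intro i
    refine below_trans6 hle hba ?_
    rw [← hlva]
    exact hy _ _ (Fin.le_def.2 (by simp))
  -- the earliest antichain in the interval spanned by each rung
  have hG : ∀ i, ∃ g, (Below le (A (lv (x i))) (A g) ∧ Below le (A g) (A (lv (y i)))) ∧
      ∀ k, Below le (A (lv (x i))) (A k) → Below le (A k) (A (lv (y i))) → g ≤ k := by
    intro i
    obtain ⟨g, hg, hmin⟩ := (Finset.univ.filter fun g =>
      Below le (A (lv (x i))) (A g) ∧ Below le (A g) (A (lv (y i)))).exists_min_image id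
        ⟨b, by simp [hxb i, hby i]⟩
    refine ⟨g, by simpa using hg, fun k h1 h2 => hmin k (by simp [h1, h2])⟩
  choose G hG1 hG2 using hG
  let S : Finset (Fin (2 * w + 1)) := Finset.univ.filter fun i => Below le (A (G i)) (A b)
  have hSc : S.card ≤ w := by
    rcases S.eq_empty_or_nonempty with h | h
    · simp [h]
    obtain ⟨p, hp, hmax⟩ := S.exists_max_image id h
    have hpb : Below le (A (G p)) (A b) := by simpa [S] using hp
    refine rungs_card6 hle hreg hlad (G p) S fun i hi => ?_
    have hip : i ≤ p := hmax i hi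
    exact factor6 hle hreg (G p) _ _ _ _ _ le_rfl (hlv _) (hlv _) (hlad.2.2.1 i).1
      (below_trans6 hle (hx i p hip) (hG1 p).1) (below_trans6 hle hpb (hby i))
      (Or.inl fun k h1 h2 => hG2 p k (below_trans6 hle (hG1 p).1 h1)
        (below_trans6 hle h2 (hy i p hip)))
  have hTc : Sᶜ.card ≤ w := by
    rcases Sᶜ.eq_empty_or_nonempty with h | h
    · simp [h]
    obtain ⟨p, hp, hmin⟩ := Sᶜ.exists_min_image id h
    have hpb : Below le (A b) (A (G p)) :=
      (hreg.2.2.2.2.2.1 b (G p)).resolve_right (by simpa [S] using hp)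
    refine rungs_card6 hle hreg hlad (G p) Sᶜ fun i hi => ?_
    have hip : p ≤ i := hmin i hi
    exact factor6 hle hreg (G p) _ _ _ _ _ le_rfl (hlv _) (hlv _) (hlad.2.2.1 i).1
      (below_trans6 hle (hxb i) hpb) (below_trans6 hle (hG1 p).2 (hy p i hip))
      (Or.inr fun k h1 h2 => hG2 p k (below_trans6 hle (hx p i hip) h1)
        (below_trans6 hle h2 (hG1 p).2))
  have := Finset.card_add_card_compl S
  rw [Fintype.card_fin] at this
  omega
end

section
/- Let m ≥ 2, let w ≥ 2, and let P be a finite L_m-free poset of width w admitting an n-Grundy coloring. Then there exist a finite L_m-free poset of width at most ⌊w/2⌋ admitting an n₁-Grundy coloring and a finite L_m-free poset of width at most w−1 admitting an n₂-Grundy coloring such that n ≤ m²·w⁴·n₁ + n₂. -/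
/-! ### Auxiliary material for the proof -/

/-- Existence of a finite `L_m`-free poset of width at most `h` with a `k`-Grundy coloring. -/
def Adm (m h k : ℕ) : Prop :=
  ∃ (N : ℕ) (le : Fin N → Fin N → Prop) (g : Fin N → ℕ),
    IsPartialOrder (Fin N) le ∧ LFree le m ∧
    (∀ S : Finset (Fin N), IsAntichainOn le S → S.card ≤ h) ∧ IsGrundy le k g

/-- Standing hypotheses on the colored poset. -/
structure Ctx {α : Type} (le : α → α → Prop) (g : α → ℕ) (m w : ℕ) : Prop where
  refl : ∀ a, le a a
  trans : ∀ a b c, le a b → le b c → le a c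
  antisymm : ∀ a b, le a b → le b a → a = b
  free : LFree le m
  width : ∀ S : Finset α, IsAntichainOn le S → S.card ≤ w
  g1 : ∀ u v, g u = g v → le u v ∨ le v u
  g3 : ∀ u v, g u < g v → ∃ z, (¬ le z v ∧ ¬ le v z) ∧ g z = g u

theorem antichain_flip {α : Type} {le : α → α → Prop} {S : Finset α}
    (h : IsAntichainOn (fun a b => le b a) S) : IsAntichainOn le S :=
  fun a ha b hb hab => (h a ha b hb hab).symm

theorem Ctx.dual {α : Type} {le : α → α → Prop} {g : α → ℕ} {m w : ℕ}
    (C : Ctx le g m w) : Ctx (fun a b => le b a) g m w where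
  refl := C.refl
  trans a b c h1 h2 := C.trans c b a h2 h1
  antisymm a b h1 h2 := C.antisymm a b h2 h1
  free := by
    rintro ⟨x, y, h1, h2, h3, h4⟩
    refine C.free ⟨fun i => y i.rev, fun i => x i.rev, ?_, ?_, ?_, ?_⟩
    · intro i j hij
      have := h2 j.rev i.rev (Fin.rev_lt_rev.2 hij)
      exact ⟨this.1, this.2.symm⟩
    · intro i j hij
      have := h1 j.rev i.rev (Fin.rev_lt_rev.2 hij)
      exact ⟨this.1, this.2.symm⟩
    · intro i
      exact ⟨(h3 i.rev).1, (h3 i.rev).2.symm⟩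
    · intro i j hij
      have := h4 j.rev i.rev (Fin.rev_lt_rev.2 hij)
      exact ⟨this.1, this.2⟩
  width S hS := C.width S (antichain_flip hS)
  g1 u v h := (C.g1 u v h).symm
  g3 u v h := by
    obtain ⟨z, ⟨h1, h2⟩, h3⟩ := C.g3 u v h
    exact ⟨z, ⟨h2, h1⟩, h3⟩

/-- Mirsky-type lemma. -/
theorem mirsky {ι : Type} (r : ι → ι → Prop) (M : ℕ) : ∀ (K : Finset ι)
    (_ : ∀ a ∈ K, ∀ b ∈ K, ∀ c ∈ K, r a b → r b c → r a c)
    (_ : ¬ ∃ f : Fin (M + 1) → ι, (∀ i, f i ∈ K) ∧ ∀ i j, i < j → r (f i) (f j)),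
    ∃ K' ⊆ K, (∀ a ∈ K', ∀ b ∈ K', ¬ r a b ) ∧ K.card ≤ M * K'.card := by
  classical
  induction M with
  | zero =>
    intro K _ hc
    refine ⟨∅, Finset.empty_subset _, by simp, ?_⟩
    by_contra hne
    have : K.Nonempty := Finset.card_pos.1 (by omega)
    obtain ⟨a, ha⟩ := this
    refine hc ⟨fun _ => a, fun _ => ha, fun i j hij => ?_⟩
    exact absurd hij (by omega)
  | succ M ih =>
    intro K ht hc
    set K0 := K.filter (fun a => ∀ b ∈ K, ¬ r b a) with hK0
    set K1 := K.filter (fun a => ¬ ∀ b ∈ K, ¬ r b a) with hK1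
    have hsub : K1 ⊆ K := Finset.filter_subset _ _
    have hcard : K0.card + K1.card = K.card := Finset.card_filter_add_card_filter_not _
    obtain ⟨K', hK', hanti, hle⟩ := ih K1
      (fun a ha b hb c hc => ht a (hsub ha) b (hsub hb) c (hsub hc)) (by
        rintro ⟨f, hf, hf'⟩
        have h0 := hf 0
        rw [hK1, Finset.mem_filter] at h0
        obtain ⟨h0K, h0'⟩ := h0
        push Not at h0'
        obtain ⟨b, hb, hr⟩ := h0'
        refine hc ⟨Fin.cons b f, ?_, ?_⟩
        · intro i
          refine Fin.cases ?_ ?_ i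
          · simpa using hb
          · intro i
            simpa using hsub (hf i)
        · intro i j
          refine Fin.cases ?_ ?_ j
          · intro h
            exact absurd h (by simp)
          · intro j
            refine Fin.cases ?_ ?_ i
            · intro _
              simp only [Fin.cons_zero, Fin.cons_succ]
              rcases Fin.eq_zero_or_eq_succ j with rfl | ⟨j', rfl⟩
              · exact hr
              · exact ht b hb _ h0K _ (hsub (hf _)) hr (hf' _ _ (Fin.succ_pos _))
            · intro i h
              simp only [Fin.cons_succ]
              exact hf' _ _ (Fin.succ_lt_succ_iff.1 h))
    by_cases hcmp : K0.card ≤ K'.card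
    · refine ⟨K', hK'.trans hsub, hanti, ?_⟩
      rw [← hcard]
      nlinarith
    · refine ⟨K0, Finset.filter_subset _ _, ?_, ?_⟩
      · intro a ha b hb
        exact (Finset.mem_filter.1 hb).2 a (Finset.mem_filter.1 ha).1
      · rw [← hcard]
        have := Nat.mul_le_mul_left M (Nat.le_of_not_le hcmp)
        nlinarith

/-- Strict domination: some color-`j` element of `S` lies above all color-`i` elements of `S`. -/
def Up {α : Type} (le : α → α → Prop) (g : α → ℕ) (S : Set α) (i j : ℕ) : Prop :=
  i < j ∧ ∃ x ∈ S, g x = j ∧ ∀ u ∈ S, g u = i → le u x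

/-- Order convexity. -/
def Cvx {α : Type} (le : α → α → Prop) (S : Set α) : Prop :=
  ∀ a ∈ S, ∀ b ∈ S, ∀ z, le a z → le z b → z ∈ S

theorem no_ladder {α : Type} {le : α → α → Prop} {g : α → ℕ} {m w : ℕ} (hm : 1 ≤ m)
    (C : Ctx le g m w) (x y : Fin ((m - 1) * w + 1) → α)
    (hx : ∀ i j, i < j → le (x i) (x j) ∧ x i ≠ x j)
    (hxy : ∀ i, le (x i) (y i))
    (hinc : ∀ i j, i < j → ¬ le (y i) (x j) ∧ ¬ le (x j) (y i))
    (hne : ∀ i, x i ≠ y i) : False := by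
  classical
  obtain ⟨k, rfl⟩ : ∃ k, m = k + 1 := ⟨m - 1, by omega⟩
  by_cases hch : ∃ f : Fin (k + 1) → Fin ((k + 1 - 1) * w + 1),
      (∀ i, f i ∈ (Finset.univ : Finset (Fin ((k + 1 - 1) * w + 1)))) ∧
      ∀ i j, i < j → (f i < f j ∧ le (y (f i)) (y (f j)))
  · obtain ⟨f, -, hf⟩ := hch
    refine C.free ⟨fun i => x (f i), fun i => y (f i), ?_, ?_, ?_, ?_⟩
    · intro i j hij
      exact hx _ _ (hf i j hij).1
    · intro i j hij
      refine ⟨(hf i j hij).2, fun h => ?_⟩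
      refine (hinc _ _ (hf i j hij).1).2 ?_
      change y (f i) = y (f j) at h
      rw [h]
      exact hxy _
    · intro i
      exact ⟨hxy _, hne _⟩
    · intro i j hij
      exact hinc _ _ (hf i j hij).1
  · obtain ⟨K', -, hanti, hcard⟩ := mirsky
      (fun s t : Fin ((k + 1 - 1) * w + 1) => s < t ∧ le (y s) (y t)) k Finset.univ
      (fun a _ b _ c _ h1 h2 => ⟨h1.1.trans h2.1, C.trans _ _ _ h1.2 h2.2⟩) hch
    have key : ∀ s ∈ K', ∀ t ∈ K', s < t → ¬ le (y s) (y t) ∧ ¬ le (y t) (y s) := by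
      intro s hs t ht hst
      refine ⟨fun h => hanti s hs t ht ⟨hst, h⟩, fun h => ?_⟩
      exact (hinc s t hst).2 (C.trans _ _ _ (hxy t) h)
    have key2 : ∀ s ∈ K', ∀ t ∈ K', s ≠ t → ¬ le (y s) (y t) ∧ ¬ le (y t) (y s) := by
      intro s hs t ht hst
      rcases lt_or_gt_of_ne hst with h | h
      · exact key s hs t ht h
      · exact (key t ht s hs h).symm
    have hinj : Set.InjOn y (K' : Set (Fin ((k + 1 - 1) * w + 1))) := by
      intro s hs t ht hst
      by_contra hne'
      refine (key2 s hs t ht hne').1 ?_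
      rw [hst]
      exact C.refl _
    have hwK : K'.card ≤ w := by
      rw [← Finset.card_image_of_injOn hinj]
      apply C.width
      intro a ha b hb hab
      rw [Finset.mem_image] at ha hb
      obtain ⟨s, hs, rfl⟩ := ha
      obtain ⟨t, ht, rfl⟩ := hb
      exact key2 s hs t ht (fun h => hab (by rw [h]))
    have h1 := Nat.mul_le_mul_left k hwK
    simp only [Finset.card_univ, Fintype.card_fin, Nat.add_sub_cancel] at hcard
    omega

theorem no_up_chain {α : Type} {le : α → α → Prop} {g : α → ℕ} {m w : ℕ} (hm : 1 ≤ m)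
    (C : Ctx le g m w) (S : Set α) (hS : Cvx le S) (f : Fin ((m - 1) * w + 1 + 1) → ℕ)
    (hhit : ∀ i, ∃ x ∈ S, g x = f i)
    (hf : ∀ i j, i < j → Up le g S (f i) (f j)) : False := by
  have hx : ∀ i : Fin ((m - 1) * w + 1 + 1), ∃ x ∈ S, g x = f i ∧
      ∀ j, j < i → ∀ u ∈ S, g u = f j → le u x := by
    intro i
    rcases Fin.eq_zero_or_eq_succ i with rfl | ⟨i, rfl⟩
    · obtain ⟨x, hxS, hgx⟩ := hhit 0
      exact ⟨x, hxS, hgx, fun j hj => absurd hj (by simp)⟩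
    · obtain ⟨-, x, hxS, hgx, hu⟩ := hf i.castSucc i.succ Fin.castSucc_lt_succ
      refine ⟨x, hxS, hgx, fun j hj u huS hgu => ?_⟩
      rcases (Fin.le_castSucc_iff.2 hj).eq_or_lt with rfl | hlt
      · exact hu u huS hgu
      · obtain ⟨-, x', hxS', hgx', hu'⟩ := hf j i.castSucc hlt
        exact C.trans _ _ _ (hu' u huS hgu) (hu x' hxS' hgx')
  choose x hxS hgx hxu using hx
  have hlt : ∀ i j, i < j → f i < f j := fun i j hij => (hf i j hij).1
  have hxlt : ∀ i j, i < j → le (x i) (x j) := fun i j hij =>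
    hxu j i hij (x i) (hxS i) (hgx i)
  have hy : ∀ i : Fin ((m - 1) * w + 1), ∃ y, (¬ le y (x i.succ) ∧ ¬ le (x i.succ) y) ∧
      g y = f i.castSucc := by
    intro i
    obtain ⟨z, hz, hgz⟩ := C.g3 (x i.castSucc) (x i.succ) (by
      rw [hgx, hgx]; exact hlt _ _ Fin.castSucc_lt_succ)
    exact ⟨z, hz, by rw [hgz, hgx]⟩
  choose y hyi hgy using hy
  have hyS : ∀ i, y i ∉ S := fun i h =>
    (hyi i).1 (hxu _ i.castSucc Fin.castSucc_lt_succ _ h (hgy i))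
  have hxy : ∀ i, le (x i.castSucc) (y i) := by
    intro i
    rcases C.g1 (x i.castSucc) (y i) (by rw [hgx, hgy]) with h | h
    · exact h
    · exact absurd (C.trans _ _ _ h (hxlt _ _ Fin.castSucc_lt_succ)) (hyi i).1
  refine no_ladder hm C (fun i => x i.castSucc) y ?_ hxy ?_ ?_
  · intro i j hij
    have hij' : i.castSucc < j.castSucc := hij
    refine ⟨hxlt _ _ hij', fun h => ?_⟩
    have h1 := hlt _ _ hij'
    have h2 := congrArg g h
    simp only [hgx] at h2
    omega
  · intro i j hij
    have hij' : i.castSucc < j.castSucc := hij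
    refine ⟨fun h => hyS i (hS _ (hxS _) _ (hxS _) _ (hxy i) h), fun h => ?_⟩
    have hle : i.succ ≤ j.castSucc := Fin.succ_le_castSucc_iff.2 hij
    rcases hle.eq_or_lt with e | l
    · exact (hyi i).2 (by rw [e]; exact h)
    · exact (hyi i).2 (C.trans _ _ _ (hxlt _ _ l) h)
  · intro i h
    exact hyS i (h ▸ hxS _)

theorem transport {α : Type} [Fintype α] {le : α → α → Prop} {g : α → ℕ} {m w : ℕ}
    (C : Ctx le g m w) (S : Set α) (h : ℕ)
    (hwid : ∀ A : Finset α, (∀ a ∈ A, a ∈ S) → IsAntichainOn le A → A.card ≤ h)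
    (K : Finset ℕ) (hhit : ∀ k ∈ K, ∃ x ∈ S, g x = k)
    (hw : ∀ x ∈ S, g x ∈ K → ∀ i ∈ K, i < g x → ∃ u ∈ S, (¬ le u x ∧ ¬ le x u) ∧ g u = i) :
    Adm m h K.card := by
  classical
  let Q := {x : α // x ∈ S ∧ g x ∈ K}
  let e : Fin (Fintype.card Q) ≃ Q := (Fintype.equivFin Q).symm
  let o : Fin K.card ≃o K := K.orderIsoOfFin rfl
  let G : Q → Fin K.card := fun q => o.symm ⟨g q.1, q.2.2⟩
  have hG : ∀ p q : Q, G p = G q → g p.1 = g q.1 := by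
    intro p q h
    have := o.symm.injective h
    exact congrArg Subtype.val this
  have hG' : ∀ (q : Q) (i : Fin K.card), g q.1 = (o i).1 → G q = i := by
    intro q i h
    have : (⟨g q.1, q.2.2⟩ : K) = o i := Subtype.ext h
    change o.symm ⟨g q.1, q.2.2⟩ = i
    rw [this, OrderIso.symm_apply_apply]
  refine ⟨Fintype.card Q, fun a b => le (e a).1 (e b).1, fun a => (G (e a)).1 + 1, ?_, ?_, ?_, ?_⟩
  · exact
      { refl := fun a => C.refl _
        trans := fun a b c => C.trans _ _ _
        antisymm := fun a b h1 h2 => e.injective (Subtype.ext (C.antisymm _ _ h1 h2)) }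
  · rintro ⟨x, y, h1, h2, h3, h4⟩
    have hinj : ∀ a b, a ≠ b → (e a).1 ≠ (e b).1 := fun a b hab h =>
      hab (e.injective (Subtype.ext h))
    exact C.free ⟨fun i => (e (x i)).1, fun i => (e (y i)).1,
      fun i j hij => ⟨(h1 i j hij).1, hinj _ _ (h1 i j hij).2⟩,
      fun i j hij => ⟨(h2 i j hij).1, hinj _ _ (h2 i j hij).2⟩,
      fun i => ⟨(h3 i).1, hinj _ _ (h3 i).2⟩, h4⟩
  · intro A hA
    have hinj : Function.Injective (fun a => (e a).1) := fun a b h =>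
      e.injective (Subtype.ext h)
    rw [← Finset.card_image_of_injective A hinj]
    apply hwid
    · intro a ha
      obtain ⟨b, -, rfl⟩ := Finset.mem_image.1 ha
      exact (e b).2.1
    · intro a ha b hb hab
      obtain ⟨a', ha', rfl⟩ := Finset.mem_image.1 ha
      obtain ⟨b', hb', rfl⟩ := Finset.mem_image.1 hb
      exact hA a' ha' b' hb' (fun h => hab (by rw [h]))
  · refine ⟨fun a => ⟨Nat.succ_pos _, (G (e a)).2⟩, ?_, ?_, ?_⟩
    · intro i hi1 hi2
      obtain ⟨x, hxS, hgx⟩ := hhit (o ⟨i - 1, by omega⟩).1 (o ⟨i - 1, by omega⟩).2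
      refine ⟨e.symm ⟨x, hxS, by rw [hgx]; exact (o ⟨i - 1, by omega⟩).2⟩, ?_⟩
      beta_reduce
      rw [Equiv.apply_symm_apply, hG' _ _ hgx]
      simp only
      omega
    · intro a b h
      exact C.g1 _ _ (hG _ _ (Fin.ext (by simpa using h)))
    · intro a i hi1 hi2
      beta_reduce at hi2
      have hiK : i - 1 < K.card := by have := (G (e a)).2; omega
      have hlt : (o ⟨i - 1, hiK⟩).1 < g (e a).1 := by
        have h1 : (⟨i - 1, hiK⟩ : Fin K.card) < G (e a) := by
          rw [Fin.lt_def]; simp only; omega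
        have h2 := o.strictMono h1
        have h3 : o (G (e a)) = ⟨g (e a).1, (e a).2.2⟩ := o.apply_symm_apply _
        rw [h3] at h2
        exact h2
      obtain ⟨u, huS, hinc, hgu⟩ := hw (e a).1 (e a).2.1 (e a).2.2 _ (o ⟨i - 1, hiK⟩).2 hlt
      refine ⟨e.symm ⟨u, huS, by rw [hgu]; exact (o ⟨i - 1, hiK⟩).2⟩, ?_, ?_⟩
      · simpa only [Equiv.apply_symm_apply] using hinc
      · beta_reduce
        rw [Equiv.apply_symm_apply, hG' _ _ hgu]
        simp only
        omega

theorem grundy_of_no_conflict {α : Type} [Fintype α] {le : α → α → Prop} {g : α → ℕ} {m w : ℕ}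
    (C : Ctx le g m w) (S : Set α) (hS : Cvx le S) (h : ℕ)
    (hwid : ∀ A : Finset α, (∀ a ∈ A, a ∈ S) → IsAntichainOn le A → A.card ≤ h)
    (K : Finset ℕ) (hhit : ∀ k ∈ K, ∃ x ∈ S, g x = k)
    (h1 : ∀ i ∈ K, ∀ j ∈ K, ¬ Up le g S i j)
    (h2 : ∀ i ∈ K, ∀ j ∈ K, ¬ Up (fun a b => le b a) g S i j) :
    Adm m h K.card := by
  refine transport C S h hwid K hhit ?_
  intro x hx hxK i hi hix
  obtain ⟨u0, hu0, hgu0⟩ := hhit i hi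
  obtain ⟨z, hz, hgz⟩ := C.g3 u0 x (by omega)
  have e1 : ∃ u ∈ S, g u = i ∧ ¬ le u x := by
    by_contra hcon
    push Not at hcon
    exact h1 i hi (g x) hxK ⟨hix, x, hx, rfl, hcon⟩
  have e2 : ∃ u ∈ S, g u = i ∧ ¬ le x u := by
    by_contra hcon
    push Not at hcon
    exact h2 i hi (g x) hxK ⟨hix, x, hx, rfl, hcon⟩
  obtain ⟨u, hu, hgu, hux⟩ := e1
  obtain ⟨u', hu', hgu', hux'⟩ := e2
  by_cases c1 : le x u
  · by_cases c2 : le u' x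
    · refine ⟨z, ?_, hz, by omega⟩
      refine hS u' hu' u hu z ?_ ?_
      · rcases C.g1 u' z (by omega) with q | q
        · exact q
        · exact absurd (C.trans _ _ _ q c2) hz.1
      · rcases C.g1 z u (by omega) with q | q
        · exact q
        · exact absurd (C.trans _ _ _ c1 q) hz.2
    · exact ⟨u', hu', ⟨c2, hux'⟩, hgu'⟩
  · exact ⟨u, hu, ⟨hux, c1⟩, hgu⟩

theorem Cvx.dual {α : Type} {le : α → α → Prop} {S : Set α} (h : Cvx le S) :
    Cvx (fun a b => le b a) S :=
  fun a ha b hb z h1 h2 => h b hb a ha z h2 h1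

theorem up_trans {α : Type} {le : α → α → Prop} {g : α → ℕ} {m w : ℕ}
    (C : Ctx le g m w) {S : Set α} {i j k : ℕ} (h1 : Up le g S i j) (h2 : Up le g S j k) :
    Up le g S i k := by
  obtain ⟨hij, x, hx, hgx, hxu⟩ := h1
  obtain ⟨hjk, y, hy, hgy, hyu⟩ := h2
  exact ⟨hij.trans hjk, y, hy, hgy, fun u hu hgu =>
    C.trans _ _ _ (hxu u hu hgu) (hyu x hx hgx)⟩

theorem conv_bound {α : Type} [Fintype α] {le : α → α → Prop} {g : α → ℕ} {m w : ℕ} (hm : 1 ≤ m)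
    (C : Ctx le g m w) (S : Set α) (hS : Cvx le S) (h : ℕ)
    (hwid : ∀ A : Finset α, (∀ a ∈ A, a ∈ S) → IsAntichainOn le A → A.card ≤ h)
    (K : Finset ℕ) (hhit : ∀ k ∈ K, ∃ x ∈ S, g x = k) :
    ∃ k, Adm m h k ∧ k ≤ K.card ∧
      K.card ≤ ((m - 1) * w + 1) * (((m - 1) * w + 1) * k) := by
  obtain ⟨K1, hK1, hanti1, hc1⟩ := mirsky (Up le g S) ((m - 1) * w + 1) K
    (fun a _ b _ c _ h1 h2 => up_trans C h1 h2)
    (by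
      rintro ⟨f, hf, hf'⟩
      exact no_up_chain hm C S hS f (fun i => hhit _ (hf i)) hf')
  obtain ⟨K2, hK2, hanti2, hc2⟩ := mirsky (Up (fun a b => le b a) g S) ((m - 1) * w + 1) K1
    (fun a _ b _ c _ h1 h2 => up_trans C.dual h1 h2)
    (by
      rintro ⟨f, hf, hf'⟩
      exact no_up_chain hm C.dual S hS.dual f (fun i => hhit _ (hK1 (hf i))) hf')
  refine ⟨K2.card, ?_, Finset.card_le_card (hK2.trans hK1), ?_⟩
  · exact grundy_of_no_conflict C S hS h hwid K2 (fun k hk => hhit k (hK1 (hK2 hk)))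
      (fun i hi j hj => hanti1 i (hK2 hi) j (hK2 hj)) hanti2
  · exact hc1.trans (Nat.mul_le_mul_left _ hc2)

/-- Elements incomparable to `v`. -/
def Inc {α : Type} (le : α → α → Prop) (v : α) : Set α := {x | ¬ le x v ∧ ¬ le v x}

theorem inc_cvx {α : Type} {le : α → α → Prop} {g : α → ℕ} {m w : ℕ}
    (C : Ctx le g m w) (v : α) : Cvx le (Inc le v) :=
  fun a ha b hb z h1 h2 => ⟨fun h => ha.1 (C.trans _ _ _ h1 h), fun h => hb.2 (C.trans _ _ _ h h2)⟩

theorem exists_max {α : Type} [Fintype α] {le : α → α → Prop} {g : α → ℕ} {m w : ℕ}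
    (C : Ctx le g m w) (p : α → Prop) (x : α) (hx : p x) :
    ∃ y, p y ∧ le x y ∧ ∀ z, p z → le y z → z = y := by
  classical
  letI : PartialOrder α :=
    { le := le
      le_refl := C.refl
      le_trans := C.trans
      le_antisymm := C.antisymm }
  obtain ⟨y, hxy, hy⟩ := Finset.exists_le_maximal (Finset.univ.filter p)
    (Finset.mem_filter.2 ⟨Finset.mem_univ x, hx⟩)
  refine ⟨y, (Finset.mem_filter.1 hy.1).2, hxy, fun z hz hyz => ?_⟩
  exact C.antisymm _ _ (hy.2 (Finset.mem_filter.2 ⟨Finset.mem_univ z, hz⟩) hyz) hyz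

open Classical in
theorem antichain_inc_card {α : Type} {le : α → α → Prop} {g : α → ℕ} {m w : ℕ}
    (C : Ctx le g m w) (v : α) (A : Finset α) (hA : IsAntichainOn le A)
    (h : ∀ a ∈ A, a ∈ Inc le v) : A.card ≤ w - 1 := by
  have hv : v ∉ A := fun hv => (h v hv).1 (C.refl v)
  have := C.width (insert v A) (by
    intro a ha b hb hab
    rw [Finset.mem_insert] at ha hb
    rcases ha with rfl | ha <;> rcases hb with rfl | hb
    · exact absurd rfl hab
    · exact (h b hb).symm
    · exact h a ha
    · exact hA a ha b hb hab)
  rw [Finset.card_insert_of_notMem hv] at this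
  omega

open Classical in
theorem conflict_cover {α : Type} [Fintype α] {le : α → α → Prop} {g : α → ℕ} {m w n n₁ : ℕ}
    (hm : 1 ≤ m) (C : Ctx le g m w) (v : α)
    (hgn : ∀ x, 1 ≤ g x ∧ g x ≤ n) (hn₁ : ∀ k ≤ n, Adm m (w / 2) k → k ≤ n₁) :
    ∃ B : Finset ℕ,
      B.card ≤ 2 * ((w - 1) * (((m - 1) * w + 1) * (((m - 1) * w + 1) * n₁))) ∧
      ∀ i j, i ∉ B → j ∉ B → (∃ u ∈ Inc le v, g u = i) → ¬ Up le g (Inc le v) i j := by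
  set M := (m - 1) * w + 1 with hM
  let V : α → Set α := fun x => {u | u ∈ Inc le v ∧ le x u}
  let Y : α → Set α := fun x => {y | le v y ∧ y ∈ Inc le x}
  let small : Set α → Prop := fun S =>
    ∀ A : Finset α, (∀ a ∈ A, a ∈ S) → IsAntichainOn le A → A.card ≤ w / 2
  let col : Set α → Finset ℕ := fun S => (Finset.univ.filter (fun a => a ∈ S)).image g
  have hcol : ∀ S x, x ∈ S → g x ∈ col S := fun S x hx =>
    Finset.mem_image_of_mem _ (Finset.mem_filter.2 ⟨Finset.mem_univ _, hx⟩)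
  have hVc : ∀ x, Cvx le (V x) := fun x a ha b hb z h1 h2 =>
    ⟨inc_cvx C v a ha.1 b hb.1 z h1 h2, C.trans _ _ _ ha.2 h1⟩
  have hYc : ∀ x, Cvx le (Y x) := fun x a ha b hb z h1 h2 =>
    ⟨C.trans _ _ _ ha.1 h1, inc_cvx C x a ha.2 b hb.2 z h1 h2⟩
  have hbound : ∀ S, Cvx le S → small S → (col S).card ≤ M * (M * n₁) := by
    intro S hS hsm
    obtain ⟨k, hk, hkc, hb⟩ := conv_bound hm C S hS (w / 2) hsm (col S) (by
      intro k hk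
      obtain ⟨x, hx, rfl⟩ := Finset.mem_image.1 hk
      exact ⟨x, (Finset.mem_filter.1 hx).2, rfl⟩)
    have hcn : (col S).card ≤ n := by
      have : col S ⊆ Finset.Icc 1 n := by
        intro k hk
        obtain ⟨x, -, rfl⟩ := Finset.mem_image.1 hk
        exact Finset.mem_Icc.2 (hgn x)
      simpa using Finset.card_le_card this
    have := hn₁ k (hkc.trans hcn) hk
    exact hb.trans (Nat.mul_le_mul_left _ (Nat.mul_le_mul_left _ this))
  have hsmall : ∀ x ∈ Inc le v, small (Y x) ∨ small (V x) := by
    intro x hx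
    by_contra hcon
    rw [not_or] at hcon
    obtain ⟨h1, h2⟩ := hcon
    simp only [small] at h1 h2
    push Not at h1 h2
    obtain ⟨A, hA, hAa, hAc⟩ := h1
    obtain ⟨B, hB, hBa, hBc⟩ := h2
    have hAB : ∀ a ∈ A, ∀ b ∈ B, ¬ le a b ∧ ¬ le b a := by
      intro a ha b hb
      exact ⟨fun h => (hB b hb).1.2 (C.trans _ _ _ (hA a ha).1 h),
        fun h => (hA a ha).2.2 (C.trans _ _ _ (hB b hb).2 h)⟩
    have hd : Disjoint A B := by
      rw [Finset.disjoint_left]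
      intro a ha hb
      exact (hAB a ha a hb).1 (C.refl a)
    have := C.width (A ∪ B) (by
      intro a ha b hb hab
      rw [Finset.mem_union] at ha hb
      rcases ha with ha | ha <;> rcases hb with hb | hb
      · exact hAa a ha b hb hab
      · exact hAB a ha b hb
      · exact (hAB b hb a ha).symm
      · exact hBa a ha b hb hab)
    rw [Finset.card_union_of_disjoint hd] at this
    omega
  let MY : Finset α := Finset.univ.filter (fun x => (x ∈ Inc le v ∧ small (Y x)) ∧
    ∀ z, z ∈ Inc le v ∧ small (Y z) → le x z → z = x)
  let MV : Finset α := Finset.univ.filter (fun x => (x ∈ Inc le v ∧ small (V x)) ∧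
    ∀ z, z ∈ Inc le v ∧ small (V z) → le z x → z = x)
  have hMY : MY.card ≤ w - 1 := by
    apply antichain_inc_card C v
    · intro a ha b hb hab
      have ha := (Finset.mem_filter.1 ha).2
      have hb := (Finset.mem_filter.1 hb).2
      exact ⟨fun h => hab (ha.2 b hb.1 h).symm, fun h => hab (hb.2 a ha.1 h)⟩
    · intro a ha
      exact (Finset.mem_filter.1 ha).2.1.1
  have hMV : MV.card ≤ w - 1 := by
    apply antichain_inc_card C v
    · intro a ha b hb hab
      have ha := (Finset.mem_filter.1 ha).2
      have hb := (Finset.mem_filter.1 hb).2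
      exact ⟨fun h => hab (hb.2 a ha.1 h), fun h => hab (ha.2 b hb.1 h).symm⟩
    · intro a ha
      exact (Finset.mem_filter.1 ha).2.1.1
  refine ⟨MY.biUnion (fun x => col (Y x)) ∪ MV.biUnion (fun x => col (V x)), ?_, ?_⟩
  · have h1 := Finset.card_biUnion_le_card_mul MY (fun x => col (Y x)) (M * (M * n₁))
      (fun x hx => hbound _ (hYc x) (Finset.mem_filter.1 hx).2.1.2)
    have h2 := Finset.card_biUnion_le_card_mul MV (fun x => col (V x)) (M * (M * n₁))
      (fun x hx => hbound _ (hVc x) (Finset.mem_filter.1 hx).2.1.2)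
    have h3 := Nat.mul_le_mul_right (M * (M * n₁)) hMY
    have h4 := Nat.mul_le_mul_right (M * (M * n₁)) hMV
    have h5 := Finset.card_union_le (MY.biUnion (fun x => col (Y x)))
      (MV.biUnion (fun x => col (V x)))
    omega
  · rintro i j hi hj ⟨u, hu, hgu⟩ ⟨hij, x, hx, hgx, hxu⟩
    rw [Finset.mem_union, not_or] at hi hj
    obtain ⟨z, hz, hgz⟩ := C.g3 u x (by omega)
    have huz : le u z := by
      rcases C.g1 u z hgz.symm with h | h
      · exact h
      · exact absurd (C.trans _ _ _ h (hxu u hu hgu)) hz.1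
    have hvz : le v z := by
      by_contra hvz
      by_cases hzv : le z v
      · exact hu.1 (C.trans _ _ _ huz hzv)
      · exact hz.1 (hxu z ⟨hzv, hvz⟩ (by omega))
    rcases hsmall x hx with hs | hs
    · obtain ⟨x', hx', hle, hmax⟩ :=
        exists_max C (fun x => x ∈ Inc le v ∧ small (Y x)) x ⟨hx, hs⟩
      refine hi.1 (Finset.mem_biUnion.2 ⟨x', Finset.mem_filter.2
        ⟨Finset.mem_univ _, hx', hmax⟩, ?_⟩)
      have : z ∈ Y x' := ⟨hvz, fun h => hx'.1.2 (C.trans _ _ _ hvz h),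
        fun h => hz.2 (C.trans _ _ _ hle h)⟩
      have h' := hcol _ _ this
      rwa [hgz, hgu] at h'
    · obtain ⟨x', hx', hle, hmax⟩ :=
        exists_max C.dual (fun x => x ∈ Inc le v ∧ small (V x)) x ⟨hx, hs⟩
      refine hj.2 (Finset.mem_biUnion.2 ⟨x', Finset.mem_filter.2
        ⟨Finset.mem_univ _, hx', hmax⟩, ?_⟩)
      have : x ∈ V x' := ⟨hx, hle⟩
      have h' := hcol _ _ this
      rwa [hgx] at h'

/-- a recursion step: if an `L_m`-free poset of width `w ≥ 2`
has an `n`-Grundy coloring, then there are `L_m`-free posets of width at most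
`⌊w/2⌋` and `w−1` with `n₁`- and `n₂`-Grundy colorings such that
`n ≤ m²·w⁴·n₁ + n₂`. -/
theorem stmt_11 {α : Type} [Fintype α] (le : α → α → Prop)
    (hle : IsPartialOrder α le) (m w n : ℕ) (hm : 2 ≤ m) (hw : 2 ≤ w)
    (hfree : LFree le m) (hwidth : IsWidth le w)
    (g : α → ℕ) (hg : IsGrundy le n g) :
    ∃ (N₁ N₂ : ℕ) (le₁ : Fin N₁ → Fin N₁ → Prop)
      (le₂ : Fin N₂ → Fin N₂ → Prop) (n₁ n₂ : ℕ)
      (g₁ : Fin N₁ → ℕ) (g₂ : Fin N₂ → ℕ),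
      IsPartialOrder (Fin N₁) le₁ ∧ LFree le₁ m ∧
      (∀ S : Finset (Fin N₁), IsAntichainOn le₁ S → S.card ≤ w / 2) ∧
      IsGrundy le₁ n₁ g₁ ∧
      IsPartialOrder (Fin N₂) le₂ ∧ LFree le₂ m ∧
      (∀ S : Finset (Fin N₂), IsAntichainOn le₂ S → S.card ≤ w - 1) ∧
      IsGrundy le₂ n₂ g₂ ∧
      n ≤ m ^ 2 * w ^ 4 * n₁ + n₂ := by
  classical
  obtain ⟨hg1, hg2, hg3, hg4⟩ := hg
  have C : Ctx le g m w :=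
    { refl := hle.refl
      trans := hle.trans
      antisymm := hle.antisymm
      free := hfree
      width := hwidth.2
      g1 := hg3
      g3 := fun u v huv => hg4 v (g u) (hg1 u).1 huv }
  obtain ⟨⟨S0, hS0, hS0c⟩, -⟩ := hwidth
  obtain ⟨p, -⟩ : S0.Nonempty := Finset.card_pos.1 (by omega)
  have hn : 1 ≤ n := (hg1 p).1.trans (hg1 p).2
  obtain ⟨v, hv⟩ := hg2 n hn le_rfl
  let n₁ := Nat.findGreatest (Adm m (w / 2)) n
  have hadm1 : Adm m (w / 2) 1 := by
    have := transport C {x | x = p} (w / 2) (by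
      intro A hA _
      have : A ⊆ {p} := fun a ha => Finset.mem_singleton.2 (hA a ha)
      have := Finset.card_le_card this
      simp only [Finset.card_singleton] at this
      omega) {g p} (by
        intro k hk
        exact ⟨p, rfl, (Finset.mem_singleton.1 hk).symm⟩) (by
        rintro x rfl _ i hi hlt
        rw [Finset.mem_singleton] at hi
        omega)
    simpa using this
  have hn₁ : ∀ k ≤ n, Adm m (w / 2) k → k ≤ n₁ := fun k hk h => Nat.le_findGreatest hk h
  have hn₁1 : 1 ≤ n₁ := hn₁ 1 hn hadm1
  have hn₁a : Adm m (w / 2) n₁ := Nat.findGreatest_spec hn hadm1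
  obtain ⟨B, hBc, hB⟩ := conflict_cover (n := n) (n₁ := n₁) (by omega) C v hg1 hn₁
  obtain ⟨B', hBc', hB'⟩ := conflict_cover (n := n) (n₁ := n₁) (by omega) C.dual v hg1 hn₁
  have hIncEq : Inc (fun a b => le b a) v = Inc le v := by
    ext x
    exact and_comm
  rw [hIncEq] at hB'
  let J : Finset ℕ := Finset.Icc 1 (n - 1) \ (B ∪ B')
  have hhit : ∀ k ∈ J, ∃ x ∈ Inc le v, g x = k := by
    intro k hk
    have hk := Finset.mem_Icc.1 (Finset.mem_sdiff.1 hk).1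
    obtain ⟨u, hu, hgu⟩ := hg4 v k hk.1 (by omega)
    exact ⟨u, hu, hgu⟩
  have hnB : ∀ k ∈ J, k ∉ B ∧ k ∉ B' := by
    intro k hk
    have := (Finset.mem_sdiff.1 hk).2
    rwa [Finset.mem_union, not_or] at this
  have hadm2 : Adm m (w - 1) J.card :=
    grundy_of_no_conflict C (Inc le v) (inc_cvx C v) (w - 1)
      (fun A hA hAa => antichain_inc_card C v A hAa hA) J hhit
      (fun i hi j hj => hB i j (hnB i hi).1 (hnB j hj).1 (hhit i hi))
      (fun i hi j hj => hB' i j (hnB i hi).2 (hnB j hj).2 (hhit i hi))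
  obtain ⟨N₁, le₁, g₁, a1, a2, a3, a4⟩ := hn₁a
  obtain ⟨N₂, le₂, g₂, b1, b2, b3, b4⟩ := hadm2
  refine ⟨N₁, N₂, le₁, le₂, n₁, J.card, g₁, g₂, a1, a2, a3, a4, b1, b2, b3, b4, ?_⟩
  have hJc : n - 1 ≤ J.card + (B.card + B'.card) := by
    have h1 : Finset.Icc 1 (n - 1) ⊆ J ∪ (B ∪ B') := by
      intro k hk
      by_cases h : k ∈ B ∪ B'
      · exact Finset.mem_union_right _ h
      · exact Finset.mem_union_left _ (Finset.mem_sdiff.2 ⟨hk, h⟩)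
    have h2 := Finset.card_le_card h1
    have h3 := Finset.card_union_le J (B ∪ B')
    have h4 := Finset.card_union_le B B'
    simp only [Nat.card_Icc] at h2
    omega
  have harith : 4 * ((w - 1) * (((m - 1) * w + 1) * (((m - 1) * w + 1) * n₁))) + 1
      ≤ m ^ 2 * w ^ 4 * n₁ := by
    generalize n₁ = t at hn₁1 ⊢
    obtain ⟨a, rfl⟩ : ∃ a, w = a + 2 := ⟨w - 2, by omega⟩
    obtain ⟨b, rfl⟩ : ∃ b, m = b + 1 := ⟨m - 1, by omega⟩
    simp only [Nat.add_sub_cancel, show a + 2 - 1 = a + 1 by omega]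
    have e1 : 4 * (a + 1) ≤ (a + 2) ^ 2 := by nlinarith
    have e2 : (b * (a + 2) + 1) ^ 2 + 1 ≤ ((b + 1) * (a + 2)) ^ 2 := by
      have : b * (a + 2) + 2 ≤ (b + 1) * (a + 2) := by nlinarith
      have := Nat.pow_le_pow_left this 2
      nlinarith
    calc 4 * ((a + 1) * ((b * (a + 2) + 1) * ((b * (a + 2) + 1) * t))) + 1
        = (4 * (a + 1)) * ((b * (a + 2) + 1) ^ 2 * t) + 1 := by ring
      _ ≤ (a + 2) ^ 2 * ((b * (a + 2) + 1) ^ 2 * t) + (a + 2) ^ 2 * t := by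
        have f1 := Nat.mul_le_mul_right ((b * (a + 2) + 1) ^ 2 * t) e1
        have f2 : 1 ≤ (a + 2) ^ 2 * t := Nat.mul_pos (by positivity) hn₁1
        omega
      _ = (a + 2) ^ 2 * (((b * (a + 2) + 1) ^ 2 + 1) * t) := by ring
      _ ≤ (a + 2) ^ 2 * (((b + 1) * (a + 2)) ^ 2 * t) :=
        Nat.mul_le_mul_left _ (Nat.mul_le_mul_right _ e2)
      _ = (b + 1) ^ 2 * (a + 2) ^ 4 * t := by ring
  omega
end

section
/- For all positive integers m and w, every n-Grundy coloring of a finite L_m-free poset of width at most w satisfies n ≤ w^{2.5·lg(2w) + 2·lg m}, where lg denotes the base-2 logarithm. Equivalently, First-Fit uses at most w^{2.5·lg(2w) + 2·lg m} chains on any L_m-free on-line poset of width w. -/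
def HAnti {α : Type*} [PartialOrder α] (S : Finset α) : Prop :=
  ∀ a ∈ S, ∀ b ∈ S, a ≤ b → a = b

def HWidth {α : Type*} [PartialOrder α] (Q : Finset α) (w : ℕ) : Prop :=
  ∀ S : Finset α, S ⊆ Q → HAnti S → S.card ≤ w

open Classical in
theorem dilworth_aux {α : Type*} [PartialOrder α] (Q : Finset α) :
    ∀ k, HWidth Q k → ∃ f : α → ℕ, (∀ x ∈ Q, f x < k) ∧
      ∀ x ∈ Q, ∀ y ∈ Q, f x = f y → x ≤ y ∨ y ≤ x := by
  induction Q using Finset.strongInduction with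
  | H Q ih =>
  intro k hk
  rcases Q.eq_empty_or_nonempty with rfl | hne
  · exact ⟨fun _ => 0, by simp, by simp⟩
  obtain ⟨a, ha⟩ := Q.exists_maximal hne
  have haQ : a ∈ Q := ha.1
  have hamax : ∀ z ∈ Q, a ≤ z → z ≤ a := fun z hz h => ha.2 hz h
  obtain ⟨A0, hA0, hA0max⟩ := Finset.exists_max_image
    ((Q.erase a).powerset.filter HAnti) Finset.card ⟨∅, by simp [HAnti]⟩
  simp only [Finset.mem_filter, Finset.mem_powerset] at hA0 hA0max
  obtain ⟨k', hk'⟩ : ∃ k', k' = A0.card := ⟨_, rfl⟩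
  have hw' : HWidth (Q.erase a) k' := fun S h1 h2 => hk' ▸ hA0max S ⟨h1, h2⟩
  have hkk : k' ≤ k := hk' ▸ hk A0 (hA0.1.trans (Finset.erase_subset _ _)) hA0.2
  obtain ⟨f, hf1, hf2⟩ := ih _ (Finset.erase_ssubset haQ) k' hw'
  have hmeet : ∀ S ⊆ Q.erase a, HAnti S → S.card = k' → ∀ i < k', ∃ s ∈ S, f s = i := by
    intro S hS hanti hcard i hi
    have hinj : Set.InjOn f S := by
      intro x hx y hy hxy
      rcases hf2 x (hS hx) y (hS hy) hxy with h | h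
      · exact hanti x hx y hy h
      · exact (hanti y hy x hx h).symm
    have himg : S.image f = Finset.range k' := by
      apply Finset.eq_of_subset_of_card_le
      · intro j hj
        obtain ⟨s, hs, rfl⟩ := Finset.mem_image.1 hj
        exact Finset.mem_range.2 (hf1 s (hS hs))
      · rw [Finset.card_image_of_injOn hinj, hcard, Finset.card_range]
    have : i ∈ S.image f := by rw [himg]; exact Finset.mem_range.2 hi
    simpa using this
  have hx : ∀ i, ∃ x, i < k' → (x ∈ Q.erase a ∧ f x = i ∧
      (∃ S ⊆ Q.erase a, HAnti S ∧ S.card = k' ∧ x ∈ S) ∧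
      ∀ z ∈ Q.erase a, f z = i → (∃ S ⊆ Q.erase a, HAnti S ∧ S.card = k' ∧ z ∈ S) → z ≤ x) := by
    intro i
    by_cases hi : i < k'
    · obtain ⟨s, hs, hsi⟩ := hmeet A0 hA0.1 hA0.2 hk'.symm i hi
      obtain ⟨x, hx⟩ := ((Q.erase a).filter (fun z => f z = i ∧
        ∃ S ⊆ Q.erase a, HAnti S ∧ S.card = k' ∧ z ∈ S)).exists_maximal
        ⟨s, Finset.mem_filter.2 ⟨hA0.1 hs, hsi, A0, hA0.1, hA0.2, hk'.symm, hs⟩⟩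
      have hx1 := Finset.mem_filter.1 hx.1
      refine ⟨x, fun _ => ⟨hx1.1, hx1.2.1, hx1.2.2, ?_⟩⟩
      intro z hz hzi hzS
      rcases hf2 z hz x hx1.1 (hzi.trans hx1.2.1.symm) with h | h
      · exact h
      · exact hx.2 (Finset.mem_filter.2 ⟨hz, hzi, hzS⟩) h
    · exact ⟨a, fun h => absurd h hi⟩
  choose x hx using hx
  have hxanti : ∀ i < k', ∀ j < k', x i ≤ x j → i = j := by
    intro i hi j hj hij
    obtain ⟨_, hfj, ⟨S, hS, hSa, hSc, hxS⟩, _⟩ := hx j hj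
    obtain ⟨z, hz, hzi⟩ := hmeet S hS hSa hSc i hi
    have h1 := (hx i hi).2.2.2 z (hS hz) hzi ⟨S, hS, hSa, hSc, hz⟩
    have h2 := hSa z hz _ hxS (h1.trans hij)
    rw [← hzi, ← hfj, h2]
  by_cases hcase : ∃ i < k', x i ≤ a
  · obtain ⟨i, hi, hia⟩ := hcase
    obtain ⟨_, hfi, _, hgr⟩ := hx i hi
    set D := Q.filter (fun z => z = a ∨ (f z = i ∧ z ≤ x i)) with hD
    have hDmem : ∀ z ∈ Q, z ∈ D ↔ (z = a ∨ (f z = i ∧ z ≤ x i)) := by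
      intro z hz; simp [hD, hz]
    have hss : Q \ D ⊂ Q := by
      refine Finset.sdiff_ssubset (Finset.filter_subset _ _) ⟨a, (hDmem a haQ).2 (Or.inl rfl)⟩
    have hw2 : HWidth (Q \ D) (k' - 1) := by
      intro S hS hSa
      have hS' : S ⊆ Q.erase a := by
        intro z hz
        have := Finset.mem_sdiff.1 (hS hz)
        refine Finset.mem_erase.2 ⟨?_, this.1⟩
        rintro rfl
        exact this.2 ((hDmem _ haQ).2 (Or.inl rfl))
      have h1 := hw' S hS' hSa
      by_contra hlt
      have hSc : S.card = k' := by omega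
      obtain ⟨z, hz, hzi⟩ := hmeet S hS' hSa hSc i hi
      have h2 := hgr z (hS' hz) hzi ⟨S, hS', hSa, hSc, hz⟩
      have := Finset.mem_sdiff.1 (hS hz)
      exact this.2 ((hDmem _ this.1).2 (Or.inr ⟨hzi, h2⟩))
    obtain ⟨f2, hf21, hf22⟩ := ih _ hss (k' - 1) hw2
    have hDch : ∀ y ∈ D, ∀ z ∈ D, y ≤ z ∨ z ≤ y := by
      intro y hy z hz
      have hyQ := (Finset.mem_filter.1 hy).1
      have hzQ := (Finset.mem_filter.1 hz).1
      rcases (hDmem y hyQ).1 hy with rfl | ⟨hy1, hy2⟩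
      · rcases (hDmem z hzQ).1 hz with rfl | ⟨hz1, hz2⟩
        · exact Or.inl le_rfl
        · exact Or.inr (hz2.trans hia)
      · rcases (hDmem z hzQ).1 hz with rfl | ⟨hz1, hz2⟩
        · exact Or.inl (hy2.trans hia)
        · by_cases hya : y = a
          · exact Or.inr (hya ▸ hz2.trans hia)
          by_cases hza : z = a
          · exact Or.inl (hza ▸ hy2.trans hia)
          exact hf2 y (Finset.mem_erase.2 ⟨hya, hyQ⟩) z (Finset.mem_erase.2 ⟨hza, hzQ⟩)
            (hy1.trans hz1.symm)
    refine ⟨fun z => if z ∈ D then k' - 1 else f2 z, ?_, ?_⟩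
    · intro z hz
      by_cases hzD : z ∈ D
      · simp only [hzD, if_true]; omega
      · simp only [hzD, if_false]
        have := hf21 z (Finset.mem_sdiff.2 ⟨hz, hzD⟩); omega
    · intro y hy z hz hyz
      by_cases hyD : y ∈ D <;> by_cases hzD : z ∈ D
      · exact hDch y hyD z hzD
      · simp only [hyD, hzD, if_true, if_false] at hyz
        have := hf21 z (Finset.mem_sdiff.2 ⟨hz, hzD⟩); omega
      · simp only [hyD, hzD, if_true, if_false] at hyz
        have := hf21 y (Finset.mem_sdiff.2 ⟨hy, hyD⟩); omega
      · simp only [hyD, hzD, if_false] at hyz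
        exact hf22 y (Finset.mem_sdiff.2 ⟨hy, hyD⟩) z (Finset.mem_sdiff.2 ⟨hz, hzD⟩) hyz
  · push Not at hcase
    have hnot : ∀ i < k', ¬ a ≤ x i := by
      intro i hi h
      exact hcase i hi (hamax _ (Finset.mem_of_mem_erase (hx i hi).1) h)
    have hk1 : k' + 1 ≤ k := by
      have hinj : Set.InjOn x (Finset.range k') := by
        intro i hi j hj hij
        simp only [Finset.coe_range, Set.mem_Iio] at hi hj
        exact hxanti i hi j hj hij.le
      have hnotin : a ∉ (Finset.range k').image x := by
        intro h
        obtain ⟨i, hi, hia⟩ := Finset.mem_image.1 h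
        exact hcase i (Finset.mem_range.1 hi) hia.le
      have := hk (insert a ((Finset.range k').image x)) ?_ ?_
      · rwa [Finset.card_insert_of_notMem hnotin, Finset.card_image_of_injOn hinj,
          Finset.card_range] at this
      · intro z hz
        rcases Finset.mem_insert.1 hz with rfl | hz
        · exact haQ
        · obtain ⟨i, hi, rfl⟩ := Finset.mem_image.1 hz
          exact Finset.mem_of_mem_erase (hx i (Finset.mem_range.1 hi)).1
      · intro y hy z hz hyz
        rcases Finset.mem_insert.1 hy with rfl | hy
        · rcases Finset.mem_insert.1 hz with rfl | hz
          · rfl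
          · obtain ⟨i, hi, rfl⟩ := Finset.mem_image.1 hz
            exact absurd hyz (hnot i (Finset.mem_range.1 hi))
        · obtain ⟨i, hi, rfl⟩ := Finset.mem_image.1 hy
          rcases Finset.mem_insert.1 hz with rfl | hz
          · exact absurd hyz (hcase i (Finset.mem_range.1 hi))
          · obtain ⟨j, hj, rfl⟩ := Finset.mem_image.1 hz
            rw [hxanti i (Finset.mem_range.1 hi) j (Finset.mem_range.1 hj) hyz]
    refine ⟨fun z => if z = a then k' else f z, ?_, ?_⟩
    · intro z hz
      by_cases hza : z = a
      · simp only [hza, if_true]; omega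
      · simp only [hza, if_false]
        have := hf1 z (Finset.mem_erase.2 ⟨hza, hz⟩); omega
    · intro y hy z hz hyz
      by_cases hya : y = a <;> by_cases hza : z = a
      · exact Or.inl (hya.trans hza.symm).le
      · simp only [hya, hza, if_true, if_false] at hyz
        have := hf1 z (Finset.mem_erase.2 ⟨hza, hz⟩); omega
      · simp only [hya, hza, if_true, if_false] at hyz
        have := hf1 y (Finset.mem_erase.2 ⟨hya, hy⟩); omega
      · simp only [hya, hza, if_false] at hyz
        exact hf2 y (Finset.mem_erase.2 ⟨hya, hy⟩) z (Finset.mem_erase.2 ⟨hza, hz⟩) hyz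

open Classical in
theorem mirsky_aux (R : ℕ → ℕ → Prop) (htr : ∀ a b c, R a b → R b c → R a c) (k : ℕ) :
    ∀ M : Finset ℕ,
    (∀ l : List ℕ, (∀ c ∈ l, c ∈ M) → l.Pairwise R → l.length ≠ k + 1) →
    ∃ lab : ℕ → ℕ, (∀ c ∈ M, lab c < k) ∧ ∀ i ∈ M, ∀ j ∈ M, R i j → lab i ≠ lab j := by
  induction k with
  | zero =>
    intro M h
    have hM : ∀ c, c ∉ M := by
      intro c hc
      exact h [c] (by simpa using hc) (by simp) (by simp)
    exact ⟨fun _ => 0, fun c hc => absurd hc (hM c), fun i hi => absurd hi (hM i)⟩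
  | succ k ih =>
    intro M h
    obtain ⟨lab, h1, h2⟩ := ih (M.filter (fun j => ∃ i ∈ M, R i j)) (by
      intro l hl hp hlen
      match l, hl, hp, hlen with
      | c :: l, hl, hp, hlen =>
        obtain ⟨hc, i, hi, hic⟩ := Finset.mem_filter.1 (hl c (by simp))
        refine h (i :: c :: l) ?_ ?_ (by simpa using hlen)
        · intro d hd
          rcases List.mem_cons.1 hd with rfl | hd
          · exact hi
          · exact (Finset.mem_filter.1 (hl d hd)).1
        · refine List.pairwise_cons.2 ⟨?_, hp⟩
          intro d hd
          rcases List.mem_cons.1 hd with rfl | hd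
          · exact hic
          · exact htr _ _ _ hic ((List.pairwise_cons.1 hp).1 d hd))
    refine ⟨fun c => if ∃ i ∈ M, R i c then lab c else k, ?_, ?_⟩
    · intro c hc
      by_cases hh : ∃ i ∈ M, R i c
      · simp only [hh, if_true]
        have := h1 c (Finset.mem_filter.2 ⟨hc, hh⟩); omega
      · simp only [hh, if_false]; omega
    · intro i hi j hj hij
      have hjj : ∃ i ∈ M, R i j := ⟨i, hi, hij⟩
      have hj' := h1 j (Finset.mem_filter.2 ⟨hj, hjj⟩)
      by_cases hh : ∃ a ∈ M, R a i
      · simp only [hh, hjj, if_true]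
        exact h2 i (Finset.mem_filter.2 ⟨hi, hh⟩) j (Finset.mem_filter.2 ⟨hj, hjj⟩) hij
      · simp only [hh, hjj, if_true, if_false]; omega

def HGr {α : Type*} [PartialOrder α] (g : α → ℕ) (Q : Finset α) (K : Finset ℕ) : Prop :=
  (∀ y ∈ Q, g y ∈ K) ∧ (∀ c ∈ K, ∃ y ∈ Q, g y = c) ∧
  (∀ x ∈ Q, ∀ y ∈ Q, g x = g y → x ≤ y ∨ y ≤ x) ∧
  (∀ y ∈ Q, ∀ c ∈ K, c < g y → ∃ u ∈ Q, g u = c ∧ ¬ u ≤ y ∧ ¬ y ≤ u)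

def HLF (α : Type*) [PartialOrder α] (m : ℕ) : Prop :=
  ∀ x y : Fin m → α, (∀ i j, i < j → x i < x j) → (∀ i j, i < j → y i < y j) →
    (∀ i, x i < y i) → (∀ i j, i < j → ¬ y i ≤ x j ∧ ¬ x j ≤ y i) → False

theorem ladder_of_list {α : Type*} [PartialOrder α] {m : ℕ} (hf : HLF α m) (l : List ℕ)
    (x y : ℕ → α)
    (h : l.Pairwise (fun i j => x i < x j ∧ y i < y j ∧ ¬ y i ≤ x j ∧ ¬ x j ≤ y i))
    (hxy : ∀ c ∈ l, x c < y c) : l.length ≠ m := by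
  rintro rfl
  rw [List.pairwise_iff_get] at h
  exact hf (fun i => x (l.get i)) (fun i => y (l.get i)) (fun i j hij => (h i j hij).1)
    (fun i j hij => (h i j hij).2.1) (fun i => hxy _ (l.get_mem i))
    (fun i j hij => (h i j hij).2.2)

open Classical in
theorem exists_least_aux {α β : Type*} [PartialOrder α] (M : Finset β) (hM : M.Nonempty)
    (q : β → α) (hq : ∀ c ∈ M, ∀ d ∈ M, q c ≤ q d ∨ q d ≤ q c) :
    ∃ c ∈ M, ∀ d ∈ M, q c ≤ q d := by
  obtain ⟨x, hx⟩ := (M.image q).exists_minimal (hM.image q)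
  obtain ⟨c, hc, rfl⟩ := Finset.mem_image.1 hx.1
  refine ⟨c, hc, fun d hd => ?_⟩
  rcases hq c hc d hd with h | h
  · exact h
  · exact hx.2 (Finset.mem_image_of_mem q hd) h

open Classical in
theorem exists_greatest_aux {α β : Type*} [PartialOrder α] (M : Finset β) (hM : M.Nonempty)
    (q : β → α) (hq : ∀ c ∈ M, ∀ d ∈ M, q c ≤ q d ∨ q d ≤ q c) :
    ∃ c ∈ M, ∀ d ∈ M, q d ≤ q c := by
  obtain ⟨x, hx⟩ := (M.image q).exists_maximal (hM.image q)
  obtain ⟨c, hc, rfl⟩ := Finset.mem_image.1 hx.1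
  refine ⟨c, hc, fun d hd => ?_⟩
  rcases hq c hc d hd with h | h
  · exact hx.2 (Finset.mem_image_of_mem q hd) h
  · exact h

open Classical in
theorem side_aux {α : Type*} [PartialOrder α] (g : α → ℕ) (Q : Finset α) (K : Finset ℕ)
    (w h N m1 : ℕ) (hGr : HGr g Q K) (hW : HWidth Q w) (hLF : HLF α (m1 + 1))
    (hIH : ∀ (Q' : Finset α) (K' : Finset ℕ), HGr g Q' K' → HWidth Q' h → K'.card ≤ N)
    (A : Finset α) (hAQ : A ⊆ Q) (hAa : HAnti A) (hAc : A.card = w)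
    (M : Finset ℕ) (hMK : M ⊆ K) (p r : ℕ → α)
    (hpQ : ∀ c ∈ M, p c ∈ Q) (hpg : ∀ c ∈ M, g (p c) = c)
    (hpr : ∀ c ∈ M, p c < r c)
    (hgap : ∀ c ∈ M, ∀ t ∈ Q, g t = c → t ≤ p c ∨ r c ≤ t)
    (hpA : ∀ c ∈ M, ∃ a ∈ A, p c ≤ a) (hrA : ∀ c ∈ M, ∃ a ∈ A, a ≤ r c)
    (hdis : ∀ c ∈ M, ∀ a ∈ A, p c ≤ a → a ≤ r c → False)
    (hX : ∀ c ∈ M, (A.filter (fun a => p c ≤ a)).card ≤ h)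
    (hpc : ∀ c ∈ M, ∀ d ∈ M, p c ≤ p d ∨ p d ≤ p c)
    (hrc : ∀ c ∈ M, ∀ d ∈ M, r c ≤ r d ∨ r d ≤ r c) :
    M.card ≤ N * (h * (m1 * (w * m1 + 1))) := by
  rcases M.eq_empty_or_nonempty with rfl | hMne
  · simp
  obtain ⟨hG1, hG2, hG3, hG4⟩ := hGr
  obtain ⟨c1, hc1, hc1le⟩ := exists_least_aux M hMne p hpc
  obtain ⟨c2, hc2, hc2le⟩ := exists_least_aux M hMne r hrc
  obtain ⟨z0, hz0A, hz0⟩ := hrA c2 hc2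
  have hz0r : ∀ c ∈ M, z0 ≤ r c := fun c hc => hz0.trans (hc2le c hc)
  set X := A.filter (fun a => p c1 ≤ a) with hXdef
  set B := A.filter (fun a => ¬ p c1 ≤ a) with hBdef
  have hB : ∀ a, a ∈ B ↔ a ∈ A ∧ ¬ p c1 ≤ a := by intro a; simp [hBdef]
  have hz0B : z0 ∈ B := (hB _).2 ⟨hz0A, fun h => hdis c1 hc1 z0 hz0A h (hz0r c1 hc1)⟩
  set Y := Q.filter (fun y => ∀ a ∈ B, ¬ y ≤ a ∧ ¬ a ≤ y) with hYdef
  have hY : ∀ y, y ∈ Y ↔ y ∈ Q ∧ ∀ a ∈ B, ¬ y ≤ a ∧ ¬ a ≤ y := by intro y; simp [hYdef]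
  have hYQ : ∀ y ∈ Y, y ∈ Q := fun y hy => ((hY y).1 hy).1
  have hpY : ∀ c ∈ M, p c ∈ Y := by
    intro c hc
    refine (hY _).2 ⟨hpQ c hc, fun a ha => ⟨fun hle => ?_, fun hle => ?_⟩⟩
    · exact ((hB a).1 ha).2 ((hc1le c hc).trans hle)
    · obtain ⟨a', ha', hpa'⟩ := hpA c hc
      have := hAa a ((hB a).1 ha).1 a' ha' (hle.trans hpa')
      subst this
      exact ((hB a).1 ha).2 ((hc1le c hc).trans hpa')
  have hconv : ∀ x ∈ Y, ∀ y ∈ Y, ∀ t ∈ Q, x ≤ t → t ≤ y → t ∈ Y := by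
    intro x hx y hy t ht hxt hty
    refine (hY t).2 ⟨ht, fun a ha => ⟨fun hle => ?_, fun hle => ?_⟩⟩
    · exact (((hY x).1 hx).2 a ha).1 (hxt.trans hle)
    · exact (((hY y).1 hy).2 a ha).2 (hle.trans hty)
  have hYw : HWidth Y h := by
    intro S hS hSa
    have hdisj : Disjoint S B := by
      rw [Finset.disjoint_left]
      intro s hs hsB
      exact (((hY s).1 (hS hs)).2 s hsB).1 le_rfl
    have h1 := hW (S ∪ B) ?_ ?_
    · rw [Finset.card_union_of_disjoint hdisj] at h1
      have h2 : X.card + B.card = A.card := Finset.card_filter_add_card_filter_not _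
      have h3 : X.card ≤ h := hX c1 hc1
      omega
    · intro t ht
      rcases Finset.mem_union.1 ht with ht | ht
      · exact hYQ t (hS ht)
      · exact hAQ ((hB t).1 ht).1
    · intro a ha b hb hab
      rcases Finset.mem_union.1 ha with ha | ha <;> rcases Finset.mem_union.1 hb with hb | hb
      · exact hSa a ha b hb hab
      · exact absurd hab (((hY a).1 (hS ha)).2 b hb).1
      · exact absurd hab (((hY b).1 (hS hb)).2 a ha).2
      · exact hAa a ((hB a).1 ha).1 b ((hB b).1 hb).1 hab
  have hYp : ∀ c ∈ M, ∀ y ∈ Y, g y = c → y ≤ p c := by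
    intro c hc y hy hyc
    rcases hgap c hc y (hYQ y hy) hyc with h' | h'
    · exact h'
    · exact absurd ((hz0r c hc).trans h') (((hY y).1 hy).2 z0 hz0B).2
  -- least element of each colour inside `Y`
  have hs : ∀ c, ∃ s, c ∈ M → s ∈ Y ∧ g s = c ∧ ∀ t ∈ Y, g t = c → s ≤ t := by
    intro c
    by_cases hc : c ∈ M
    · obtain ⟨s, hs, hsl⟩ := exists_least_aux (Y.filter (fun t => g t = c))
        ⟨p c, Finset.mem_filter.2 ⟨hpY c hc, hpg c hc⟩⟩ id (by
          intro x hx y hy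
          have hx := Finset.mem_filter.1 hx
          have hy := Finset.mem_filter.1 hy
          exact hG3 x (hYQ x hx.1) y (hYQ y hy.1) (hx.2.trans hy.2.symm))
      have hs := Finset.mem_filter.1 hs
      exact ⟨s, fun _ => ⟨hs.1, hs.2, fun t ht htc => hsl t (Finset.mem_filter.2 ⟨ht, htc⟩)⟩⟩
    · exact ⟨p c, fun h => absurd h hc⟩
  choose s hs using hs
  have hz : ∀ c, ∃ z, c ∈ M → (∃ t ∈ Q, g t = c ∧ t < s c) →
      z ∈ Q ∧ g z = c ∧ z < s c ∧ ∀ t ∈ Q, g t = c → t < s c → t ≤ z := by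
    intro c
    by_cases hc : ∃ t ∈ Q, g t = c ∧ t < s c
    · obtain ⟨t0, ht0, ht0c, ht0s⟩ := hc
      obtain ⟨z, hz, hzl⟩ := exists_greatest_aux (Q.filter (fun t => g t = c ∧ t < s c))
        ⟨t0, Finset.mem_filter.2 ⟨ht0, ht0c, ht0s⟩⟩ id (by
          intro x hx y hy
          have hx := Finset.mem_filter.1 hx
          have hy := Finset.mem_filter.1 hy
          exact hG3 x hx.1 y hy.1 (hx.2.1.trans hy.2.1.symm))
      have hz := Finset.mem_filter.1 hz
      exact ⟨z, fun _ _ => ⟨hz.1, hz.2.1, hz.2.2,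
        fun t ht htc hts => hzl t (Finset.mem_filter.2 ⟨ht, htc, hts⟩)⟩⟩
    · exact ⟨p c, fun _ h => absurd h hc⟩
  choose z hz using hz
  obtain ⟨f, hf1, hf2⟩ := dilworth_aux Q w hW
  obtain ⟨fY, hfY1, hfY2⟩ := dilworth_aux Y h hYw
  -- ascending relation
  have hasc : ∀ i ∈ M, ∀ j ∈ M, i < j → p i < p j → ¬ r i ≤ p j ∧ ¬ p j ≤ r i := by
    intro i hi j hj hij hpij
    obtain ⟨u, hu, hui, hu1, hu2⟩ := hG4 (p j) (hpQ j hj) i (hMK hi) (by rw [hpg j hj]; exact hij)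
    refine ⟨fun hle => ?_, fun hle => ?_⟩
    · exact (((hY _).1 (hpY j hj)).2 z0 hz0B).2 ((hz0r i hi).trans hle)
    · rcases hgap i hi u hu hui with h' | h'
      · exact hu1 (h'.trans hpij.le)
      · exact hu2 (hle.trans h')
  obtain ⟨lab1, hl11, hl12⟩ := mirsky_aux (fun i j => i < j ∧ p i < p j)
    (fun a b c h1 h2 => ⟨h1.1.trans h2.1, h1.2.trans h2.2⟩) m1 M (by
      intro l hl hp
      refine ladder_of_list hLF l p r (hp.imp_of_mem ?_) (fun c hc => hpr c (hl c hc))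
      intro i j hi hj hij
      have hi := hl i hi
      have hj := hl j hj
      have h1 := hasc i hi j hj hij.1 hij.2
      refine ⟨hij.2, ?_, h1⟩
      have h2 : ¬ r j ≤ r i := fun h' => h1.2 ((hpr j hj).le.trans h')
      exact lt_of_le_not_ge ((hrc i hi j hj).resolve_right h2) h2)
  -- descending relation
  have hdesc : ∀ i ∈ M, ∀ j ∈ M, i < j → s j < s i → (∃ t ∈ Q, g t = i ∧ t < s i) ∧
      ¬ s j ≤ z i ∧ ¬ z i ≤ s j := by
    intro i hi j hj hij hsji
    obtain ⟨hsiY, hsig, hsil⟩ := hs i hi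
    obtain ⟨hsjY, hsjg, hsjl⟩ := hs j hj
    obtain ⟨u, hu, hui, hu1, hu2⟩ := hG4 (s j) (hYQ _ hsjY) i (hMK hi) (by rw [hsjg]; exact hij)
    have hus : u < s i := by
      have h2 : ¬ s i ≤ u := fun h' => hu2 (hsji.le.trans h')
      exact lt_of_le_not_ge ((hG3 u hu (s i) (hYQ _ hsiY) (hui.trans hsig.symm)).resolve_right h2) h2
    have hex : ∃ t ∈ Q, g t = i ∧ t < s i := ⟨u, hu, hui, hus⟩
    obtain ⟨hzQ, hzg, hzs, hzl⟩ := hz i hi hex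
    refine ⟨hex, fun hle => ?_, fun hle => ?_⟩
    · have hzY : z i ∈ Y := by
        refine (hY _).2 ⟨hzQ, fun a ha => ⟨fun h' => ?_, fun h' => ?_⟩⟩
        · exact (((hY _).1 hsjY).2 a ha).1 (hle.trans h')
        · exact (((hY _).1 hsiY).2 a ha).2 (h'.trans hzs.le)
      exact absurd (hsil _ hzY hzg) (not_le_of_gt hzs)
    · exact hu1 ((hzl u hu hui hus).trans hle)
  obtain ⟨lab2, hl21, hl22⟩ := mirsky_aux
    (fun a b => b < a ∧ s a < s b ∧ (∃ t ∈ Q, g t = a ∧ t < s a) ∧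
      (∃ t ∈ Q, g t = b ∧ t < s b) ∧ f (z a) = f (z b))
    (fun a b c h1 h2 => ⟨h2.1.trans h1.1, h1.2.1.trans h2.2.1, h1.2.2.1, h2.2.2.2.1,
      h1.2.2.2.2.trans h2.2.2.2.2⟩) m1 (M.filter (fun a => ∃ t ∈ Q, g t = a ∧ t < s a)) (by
      intro l hl hp
      refine ladder_of_list hLF l z s (hp.imp_of_mem ?_) (fun c hc => ?_)
      · intro a b ha hb hab
        have ha := (Finset.mem_filter.1 (hl a ha))
        have hb := (Finset.mem_filter.1 (hl b hb))
        obtain ⟨hba, hsab, _, _, hff⟩ := hab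
        obtain ⟨hzaQ, hzag, hzas, hzal⟩ := hz a ha.1 ha.2
        obtain ⟨hzbQ, hzbg, hzbs, hzbl⟩ := hz b hb.1 hb.2
        obtain ⟨_, h1, h2⟩ := hdesc b hb.1 a ha.1 hba hsab
        refine ⟨?_, hsab, h1, h2⟩
        have h3 : ¬ z b ≤ z a := fun h' => h2 (h'.trans hzas.le)
        exact lt_of_le_not_ge ((hf2 _ hzaQ _ hzbQ hff).resolve_right h3) h3
      · have hc := (Finset.mem_filter.1 (hl c hc))
        exact (hz c hc.1 hc.2).2.2.1)
  set L : ℕ → ℕ × ℕ × Option (ℕ × ℕ) := fun c => (fY (s c), lab1 c,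
    if (∃ t ∈ Q, g t = c ∧ t < s c) then some (f (z c), lab2 c) else none) with hL
  have hcard : (Finset.range h ×ˢ Finset.range m1 ×ˢ
      Finset.insertNone (Finset.range w ×ˢ Finset.range m1)).card = h * (m1 * (w * m1 + 1)) := by
    simp [Finset.card_product, Finset.card_insertNone]
  rw [← hcard]
  refine Finset.card_le_mul_card_image_of_maps_to (f := L) ?_ N ?_
  · intro c hc
    simp only [hL, Finset.mem_product, Finset.mem_range]
    refine ⟨hfY1 _ (hs c hc).1, hl11 c hc, ?_⟩
    by_cases hex : ∃ t ∈ Q, g t = c ∧ t < s c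
    · rw [if_pos hex, Finset.some_mem_insertNone]
      simp only [Finset.mem_product, Finset.mem_range]
      exact ⟨hf1 _ (hz c hc hex).1, hl21 c (Finset.mem_filter.2 ⟨hc, hex⟩)⟩
    · rw [if_neg hex]; exact Finset.none_mem_insertNone
  · intro b _
    set K' := M.filter (fun c => L c = b) with hK'
    have hK'M : ∀ c ∈ K', c ∈ M := fun c hc => (Finset.mem_filter.1 hc).1
    have hpp : ∀ i ∈ K', ∀ j ∈ K', i < j → p j ≤ p i ∧ s i ≤ s j := by
      intro i hi j hj hij
      have hLij : L i = L j :=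
        (Finset.mem_filter.1 hi).2.trans (Finset.mem_filter.1 hj).2.symm
      have hi := hK'M i hi
      have hj := hK'M j hj
      simp only [hL, Prod.mk.injEq] at hLij
      obtain ⟨e1, e2, e3⟩ := hLij
      constructor
      · by_contra hn
        have h1 := (hpc i hi j hj).resolve_right hn
        exact hl12 i hi j hj ⟨hij, lt_of_le_not_ge h1 hn⟩ e2
      · by_contra hn
        have h1 := (hfY2 _ (hs i hi).1 _ (hs j hj).1 e1).resolve_left hn
        have hlt := lt_of_le_not_ge h1 hn
        obtain ⟨hexi, _, _⟩ := hdesc i hi j hj hij hlt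
        rw [if_pos hexi] at e3
        by_cases hexj : ∃ t ∈ Q, g t = j ∧ t < s j
        · rw [if_pos hexj] at e3
          simp only [Option.some.injEq, Prod.mk.injEq] at e3
          exact hl22 j (Finset.mem_filter.2 ⟨hj, hexj⟩) i (Finset.mem_filter.2 ⟨hi, hexi⟩)
            ⟨hij, hlt, hexj, hexi, e3.1.symm⟩ e3.2.symm
        · rw [if_neg hexj] at e3
          exact absurd e3 (by simp)
    refine hIH (Y.filter (fun y => g y ∈ K')) K' ⟨?_, ?_, ?_, ?_⟩ ?_
    · intro y hy; exact (Finset.mem_filter.1 hy).2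
    · intro c hc
      obtain ⟨h1, h2, _⟩ := hs c (hK'M c hc)
      exact ⟨s c, Finset.mem_filter.2 ⟨h1, by rw [h2]; exact hc⟩, h2⟩
    · intro x hx y hy
      exact hG3 x (hYQ x (Finset.mem_filter.1 hx).1) y (hYQ y (Finset.mem_filter.1 hy).1)
    · intro y hy c hc hcy
      obtain ⟨hyY, hyK⟩ := Finset.mem_filter.1 hy
      have hcM := hK'M c hc
      obtain ⟨u, hu, huc, hu1, hu2⟩ := hG4 y (hYQ y hyY) c (hMK hcM) hcy
      obtain ⟨h1, h2⟩ := hpp c hc (g y) hyK hcy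
      have hyp := hYp (g y) (hK'M _ hyK) y hyY rfl
      have hsy := (hs (g y) (hK'M _ hyK)).2.2 y hyY rfl
      have hup : u ≤ p c := by
        rcases hgap c hcM u hu huc with h' | h'
        · exact h'
        · exact absurd (hyp.trans (h1.trans ((hpr c hcM).le.trans h'))) hu2
      have hsu : s c ≤ u := by
        rcases hG3 u hu (s c) (hYQ _ (hs c hcM).1) (huc.trans (hs c hcM).2.1.symm) with h' | h'
        · exact absurd (h'.trans (h2.trans hsy)) hu1
        · exact h'
      have huY := hconv _ (hs c hcM).1 _ (hpY c hcM) u hu hsu hup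
      exact ⟨u, Finset.mem_filter.2 ⟨huY, by rw [huc]; exact hc⟩, huc, hu1, hu2⟩
    · intro S hS
      exact hYw S (hS.trans (Finset.filter_subset _ _))

@[reducible]
def dualPO {α : Type*} (P : PartialOrder α) : PartialOrder α where
  le a b := P.le b a
  lt a b := P.lt b a
  le_refl a := P.le_refl a
  le_trans a b c h1 h2 := P.le_trans c b a h2 h1
  le_antisymm a b h1 h2 := P.le_antisymm a b h2 h1
  lt_iff_le_not_ge a b := P.lt_iff_le_not_ge b a

theorem anti_dual {α : Type*} [P : PartialOrder α] (S : Finset α) :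
    @HAnti α (dualPO P) S ↔ HAnti S :=
  ⟨fun h a ha b hb hab => (h b hb a ha hab).symm, fun h a ha b hb hab => (h b hb a ha hab).symm⟩

theorem width_dual {α : Type*} [P : PartialOrder α] (S : Finset α) (w : ℕ) :
    @HWidth α (dualPO P) S w ↔ HWidth S w :=
  ⟨fun h T hT hTa => h T hT ((anti_dual T).2 hTa), fun h T hT hTa => h T hT ((anti_dual T).1 hTa)⟩

theorem gr_dual {α : Type*} [P : PartialOrder α] (g : α → ℕ) (Q : Finset α) (K : Finset ℕ) :
    @HGr α (dualPO P) g Q K ↔ HGr g Q K := by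
  constructor
  · rintro ⟨h1, h2, h3, h4⟩
    refine ⟨h1, h2, fun x hx y hy hxy => (h3 x hx y hy hxy).symm, fun y hy c hc hcy => ?_⟩
    obtain ⟨u, hu, huc, a, b⟩ := h4 y hy c hc hcy
    exact ⟨u, hu, huc, b, a⟩
  · rintro ⟨h1, h2, h3, h4⟩
    refine ⟨h1, h2, fun x hx y hy hxy => (h3 x hx y hy hxy).symm, fun y hy c hc hcy => ?_⟩
    obtain ⟨u, hu, huc, a, b⟩ := h4 y hy c hc hcy
    exact ⟨u, hu, huc, b, a⟩

theorem lf_dual {α : Type*} [P : PartialOrder α] (m : ℕ) (h : HLF α m) :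
    @HLF α (dualPO P) m := by
  intro x y hx hy hxy hn
  refine h (fun i => y i.rev) (fun i => x i.rev) ?_ ?_ ?_ ?_
  · intro i j hij; exact hy _ _ (Fin.rev_lt_rev.2 hij)
  · intro i j hij; exact hx _ _ (Fin.rev_lt_rev.2 hij)
  · intro i; exact hxy _
  · intro i j hij
    exact hn _ _ (Fin.rev_lt_rev.2 hij)

open Classical in
theorem step_aux {α : Type*} [P : PartialOrder α] (g : α → ℕ) (Q : Finset α) (K : Finset ℕ)
    (w N m1 : ℕ) (hw : 1 ≤ w) (hGr : HGr g Q K) (hW : HWidth Q w) (hLF : HLF α (m1 + 1))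
    (hIH : ∀ (Q' : Finset α) (K' : Finset ℕ), HGr g Q' K' → HWidth Q' (w / 2) → K'.card ≤ N)
    (A : Finset α) (hAQ : A ⊆ Q) (hAa : HAnti A) (hAc : A.card = w)
    (M : Finset ℕ) (hMK : M ⊆ K) (hMA : ∀ c ∈ M, ∀ a ∈ A, c < g a) :
    M.card ≤ w ^ 4 * (m1 + 1) ^ 2 * N := by
  have hGr0 := hGr
  obtain ⟨hG1, hG2, hG3, hG4⟩ := hGr
  have hcomp : ∀ t ∈ Q, ∃ a ∈ A, t ≤ a ∨ a ≤ t := by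
    intro t ht
    by_contra hn
    push Not at hn
    have htA : t ∉ A := fun h => (hn t h).1 le_rfl
    have h1 := hW (insert t A) (Finset.insert_subset ht hAQ) ?_
    · rw [Finset.card_insert_of_notMem htA] at h1; omega
    · intro a ha b hb hab
      rcases Finset.mem_insert.1 ha with ha1 | ha1 <;> rcases Finset.mem_insert.1 hb with hb1 | hb1
      · exact ha1.trans hb1.symm
      · exact absurd (ha1 ▸ hab) (hn b hb1).1
      · exact absurd (hb1 ▸ hab) (hn a ha1).2
      · exact hAa a ha1 b hb1 hab
  have hch : ∀ c, ∀ x ∈ Q.filter (fun t => g t = c), ∀ y ∈ Q.filter (fun t => g t = c),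
      x ≤ y ∨ y ≤ x := by
    intro c x hx y hy
    have hx := Finset.mem_filter.1 hx
    have hy := Finset.mem_filter.1 hy
    exact hG3 x hx.1 y hy.1 (hx.2.trans hy.2.symm)
  have hlow : ∀ c ∈ M, ∃ t ∈ Q, g t = c ∧ ∃ a ∈ A, t ≤ a := by
    intro c hc
    obtain ⟨y, hy, hyc⟩ := hG2 c (hMK hc)
    obtain ⟨t, ht, htl⟩ := exists_least_aux (Q.filter (fun t => g t = c))
      ⟨y, Finset.mem_filter.2 ⟨hy, hyc⟩⟩ id (hch c)
    have ht := Finset.mem_filter.1 ht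
    obtain ⟨a, ha, hta | hta⟩ := hcomp t ht.1
    · exact ⟨t, ht.1, ht.2, a, ha, hta⟩
    · obtain ⟨u, hu, huc, hu1, hu2⟩ := hG4 a (hAQ ha) c (hMK hc) (hMA c hc a ha)
      exact absurd (hta.trans (htl u (Finset.mem_filter.2 ⟨hu, huc⟩))) hu2
  have hhigh : ∀ c ∈ M, ∃ t ∈ Q, g t = c ∧ ∀ a ∈ A, ¬ t ≤ a := by
    intro c hc
    obtain ⟨y, hy, hyc⟩ := hG2 c (hMK hc)
    obtain ⟨t, ht, htl⟩ := exists_greatest_aux (Q.filter (fun t => g t = c))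
      ⟨y, Finset.mem_filter.2 ⟨hy, hyc⟩⟩ id (hch c)
    have ht := Finset.mem_filter.1 ht
    refine ⟨t, ht.1, ht.2, fun a ha hta => ?_⟩
    obtain ⟨u, hu, huc, hu1, hu2⟩ := hG4 a (hAQ ha) c (hMK hc) (hMA c hc a ha)
    exact absurd (le_trans (htl u (Finset.mem_filter.2 ⟨hu, huc⟩)) hta) hu1
  obtain ⟨y0, -⟩ : A.Nonempty := Finset.card_pos.1 (by omega)
  have hp : ∀ c, ∃ p, c ∈ M → p ∈ Q ∧ g p = c ∧ (∃ a ∈ A, p ≤ a) ∧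
      ∀ t ∈ Q, g t = c → (∃ a ∈ A, t ≤ a) → t ≤ p := by
    intro c
    by_cases hc : c ∈ M
    · obtain ⟨t, ht, htc, hta⟩ := hlow c hc
      obtain ⟨p, hp, hpl⟩ := exists_greatest_aux (Q.filter (fun t => g t = c ∧ ∃ a ∈ A, t ≤ a))
        ⟨t, Finset.mem_filter.2 ⟨ht, htc, hta⟩⟩ id (by
          intro x hx y hy
          have hx := Finset.mem_filter.1 hx
          have hy := Finset.mem_filter.1 hy
          exact hG3 x hx.1 y hy.1 (hx.2.1.trans hy.2.1.symm))
      have hp := Finset.mem_filter.1 hp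
      exact ⟨p, fun _ => ⟨hp.1, hp.2.1, hp.2.2,
        fun t h1 h2 h3 => hpl t (Finset.mem_filter.2 ⟨h1, h2, h3⟩)⟩⟩
    · exact ⟨y0, fun h => absurd h hc⟩
  have hr : ∀ c, ∃ p, c ∈ M → p ∈ Q ∧ g p = c ∧ (∀ a ∈ A, ¬ p ≤ a) ∧
      ∀ t ∈ Q, g t = c → (∀ a ∈ A, ¬ t ≤ a) → p ≤ t := by
    intro c
    by_cases hc : c ∈ M
    · obtain ⟨t, ht, htc, hta⟩ := hhigh c hc
      obtain ⟨p, hp, hpl⟩ := exists_least_aux (Q.filter (fun t => g t = c ∧ ∀ a ∈ A, ¬ t ≤ a))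
        ⟨t, Finset.mem_filter.2 ⟨ht, htc, hta⟩⟩ id (by
          intro x hx y hy
          have hx := Finset.mem_filter.1 hx
          have hy := Finset.mem_filter.1 hy
          exact hG3 x hx.1 y hy.1 (hx.2.1.trans hy.2.1.symm))
      have hp := Finset.mem_filter.1 hp
      exact ⟨p, fun _ => ⟨hp.1, hp.2.1, hp.2.2,
        fun t h1 h2 h3 => hpl t (Finset.mem_filter.2 ⟨h1, h2, h3⟩)⟩⟩
    · exact ⟨y0, fun h => absurd h hc⟩
  choose p hp using hp
  choose r hr using hr
  have hgap : ∀ c ∈ M, ∀ t ∈ Q, g t = c → t ≤ p c ∨ r c ≤ t := by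
    intro c hc t ht htc
    by_cases hta : ∃ a ∈ A, t ≤ a
    · exact Or.inl ((hp c hc).2.2.2 t ht htc hta)
    · push Not at hta
      exact Or.inr ((hr c hc).2.2.2 t ht htc hta)
  have hpr : ∀ c ∈ M, p c < r c := by
    intro c hc
    have h1 : ¬ r c ≤ p c := by
      intro h'
      obtain ⟨a, ha, hpa⟩ := (hp c hc).2.2.1
      exact (hr c hc).2.2.1 a ha (h'.trans hpa)
    exact lt_of_le_not_ge ((hG3 _ (hp c hc).1 _ (hr c hc).1
      ((hp c hc).2.1.trans (hr c hc).2.1.symm)).resolve_right h1) h1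
  have hrA : ∀ c ∈ M, ∃ a ∈ A, a ≤ r c := by
    intro c hc
    obtain ⟨a, ha, h' | h'⟩ := hcomp _ (hr c hc).1
    · exact absurd h' ((hr c hc).2.2.1 a ha)
    · exact ⟨a, ha, h'⟩
  have hdis : ∀ c ∈ M, ∀ a ∈ A, p c ≤ a → a ≤ r c → False := by
    intro c hc a ha h1 h2
    obtain ⟨u, hu, huc, hu1, hu2⟩ := hG4 a (hAQ ha) c (hMK hc) (hMA c hc a ha)
    rcases hgap c hc u hu huc with h' | h'
    · exact hu1 (h'.trans h1)
    · exact hu2 (h2.trans h')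
  have hXZ : ∀ c ∈ M, (A.filter (fun a => p c ≤ a)).card + (A.filter (fun a => a ≤ r c)).card ≤ w := by
    intro c hc
    rw [← Finset.card_union_of_disjoint, ← hAc]
    · exact Finset.card_le_card (Finset.union_subset (Finset.filter_subset _ _)
        (Finset.filter_subset _ _))
    · rw [Finset.disjoint_left]
      intro a ha hb
      have ha := Finset.mem_filter.1 ha
      have hb := Finset.mem_filter.1 hb
      exact hdis c hc a ha.1 ha.2 hb.2
  obtain ⟨f, hf1, hf2⟩ := dilworth_aux Q w hW
  set L : ℕ → ℕ × ℕ × ℕ := fun c => (f (p c), f (r c),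
    if (A.filter (fun a => p c ≤ a)).card ≤ w / 2 then 0 else 1) with hL
  have hcard : (Finset.range w ×ˢ Finset.range w ×ˢ Finset.range 2).card = w * (w * 2) := by
    simp [Finset.card_product]
  have hmain : M.card ≤ N * ((w / 2) * (m1 * (w * m1 + 1))) * (w * (w * 2)) := by
    rw [← hcard]
    refine Finset.card_le_mul_card_image_of_maps_to (f := L) ?_ _ ?_
    · intro c hc
      simp only [hL, Finset.mem_product, Finset.mem_range]
      refine ⟨hf1 _ (hp c hc).1, hf1 _ (hr c hc).1, ?_⟩
      split_ifs <;> omega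
    · intro b _
      set M' := M.filter (fun c => L c = b) with hM'
      have hM'M : ∀ c ∈ M', c ∈ M := fun c hc => (Finset.mem_filter.1 hc).1
      have hM'K : M' ⊆ K := fun c hc => hMK (hM'M c hc)
      have hLb : ∀ c ∈ M', L c = b := fun c hc => (Finset.mem_filter.1 hc).2
      have hpc : ∀ c ∈ M', ∀ d ∈ M', p c ≤ p d ∨ p d ≤ p c := by
        intro c hc d hd
        have := (hLb c hc).trans (hLb d hd).symm
        simp only [hL, Prod.mk.injEq] at this
        exact hf2 _ (hp c (hM'M c hc)).1 _ (hp d (hM'M d hd)).1 this.1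
      have hrc : ∀ c ∈ M', ∀ d ∈ M', r c ≤ r d ∨ r d ≤ r c := by
        intro c hc d hd
        have := (hLb c hc).trans (hLb d hd).symm
        simp only [hL, Prod.mk.injEq] at this
        exact hf2 _ (hr c (hM'M c hc)).1 _ (hr d (hM'M d hd)).1 this.2.1
      by_cases hb : b.2.2 = 0
      · refine side_aux g Q K w (w / 2) N m1 hGr0 hW hLF hIH A hAQ hAa hAc M' hM'K p r
          (fun c hc => (hp c (hM'M c hc)).1) (fun c hc => (hp c (hM'M c hc)).2.1)
          (fun c hc => hpr c (hM'M c hc)) (fun c hc => hgap c (hM'M c hc))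
          (fun c hc => (hp c (hM'M c hc)).2.2.1) (fun c hc => hrA c (hM'M c hc))
          (fun c hc => hdis c (hM'M c hc)) ?_ hpc hrc
        intro c hc
        have h1 := hLb c hc
        rw [← h1] at hb
        simp only [hL] at hb
        by_contra hn
        rw [if_neg hn] at hb
        omega
      · refine @side_aux α (dualPO P) g Q K w (w / 2) N m1 ((gr_dual g Q K).2 hGr0)
          ((width_dual Q w).2 hW) (lf_dual _ hLF)
          (fun Q' K' h1 h2 => hIH Q' K' ((gr_dual g Q' K').1 h1) ((width_dual Q' _).1 h2))
          A hAQ ((anti_dual A).2 hAa) hAc M' hM'K r p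
          (fun c hc => (hr c (hM'M c hc)).1) (fun c hc => (hr c (hM'M c hc)).2.1)
          (fun c hc => hpr c (hM'M c hc)) (fun c hc t ht htc => (hgap c (hM'M c hc) t ht htc).symm)
          (fun c hc => hrA c (hM'M c hc)) (fun c hc => (hp c (hM'M c hc)).2.2.1)
          (fun c hc a ha h1 h2 => hdis c (hM'M c hc) a ha h2 h1) ?_
          (fun c hc d hd => (hrc c hc d hd).symm) (fun c hc d hd => (hpc c hc d hd).symm)
        intro c hc
        have h1 := hLb c hc
        rw [← h1] at hb
        simp only [hL] at hb
        have h2 := hXZ c (hM'M c hc)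
        have h3 : ¬ (A.filter (fun a => p c ≤ a)).card ≤ w / 2 := by
          intro hn
          rw [if_pos hn] at hb
          exact hb rfl
        have h4 : (A.filter (fun a => a ≤ r c)).card ≤ w / 2 := by omega
        exact h4
  refine hmain.trans ?_
  have h2 : (w / 2) * 2 ≤ w := Nat.div_mul_le_self w 2
  have h3 : m1 * (w * m1 + 1) ≤ w * (m1 + 1) ^ 2 := by nlinarith
  calc N * ((w / 2) * (m1 * (w * m1 + 1))) * (w * (w * 2))
      = (w / 2 * 2) * (m1 * (w * m1 + 1)) * (w * w * N) := by ring
    _ ≤ w * (w * (m1 + 1) ^ 2) * (w * w * N) := by gcongr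
    _ = w ^ 4 * (m1 + 1) ^ 2 * N := by ring

def Fn (m : ℕ) : ℕ → ℕ
  | 0 => 0
  | (w + 1) => Fn m w + 1 + (w + 1) ^ 4 * m ^ 2 * Fn m ((w + 1) / 2)
decreasing_by all_goals omega

open Classical in
theorem grundy_bound {α : Type*} [PartialOrder α] (g : α → ℕ) (m1 : ℕ) (hLF : HLF α (m1 + 1))
    (w : ℕ) : ∀ (Q : Finset α) (K : Finset ℕ), HGr g Q K → HWidth Q w →
      K.card ≤ Fn (m1 + 1) w := by
  induction w using Nat.strong_induction_on with
  | _ w ih =>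
  intro Q K hGr hW
  have hGr0 := hGr
  obtain ⟨hG1, hG2, hG3, hG4⟩ := hGr
  rcases w with _ | w
  · have hK : K = ∅ := by
      rw [Finset.eq_empty_iff_forall_notMem]
      intro c hc
      obtain ⟨y, hy, _⟩ := hG2 c hc
      have := hW {y} (by simpa using hy) (by simp [HAnti])
      simp at this
    simp [hK]
  set T := K.filter (fun c => HWidth (Q.filter (fun y => c ≤ g y)) w) with hT
  have hTb : T.card ≤ Fn (m1 + 1) w := by
    rcases T.eq_empty_or_nonempty with h0 | hne
    · simp [h0]
    set c0 := T.min' hne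
    have hc0 := Finset.mem_filter.1 (T.min'_mem hne)
    refine ih w (by omega) (Q.filter (fun y => c0 ≤ g y)) T ⟨?_, ?_, ?_, ?_⟩ hc0.2
    · intro y hy
      have hy := Finset.mem_filter.1 hy
      refine Finset.mem_filter.2 ⟨hG1 y hy.1, fun S hS => hc0.2 S (hS.trans ?_)⟩
      intro t ht
      have ht := Finset.mem_filter.1 ht
      exact Finset.mem_filter.2 ⟨ht.1, hy.2.trans ht.2⟩
    · intro c hc
      obtain ⟨y, hy, hyc⟩ := hG2 c (Finset.mem_filter.1 hc).1
      exact ⟨y, Finset.mem_filter.2 ⟨hy, hyc ▸ T.min'_le c hc⟩, hyc⟩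
    · intro x hx y hy
      exact hG3 x (Finset.mem_filter.1 hx).1 y (Finset.mem_filter.1 hy).1
    · intro y hy c hc hcy
      obtain ⟨u, hu, huc, h1⟩ := hG4 y (Finset.mem_filter.1 hy).1 c (Finset.mem_filter.1 hc).1 hcy
      exact ⟨u, Finset.mem_filter.2 ⟨hu, huc ▸ T.min'_le c hc⟩, huc, h1⟩
  have hsplit : K.card = T.card + (K \ T).card := by
    have hTK : T ⊆ K := Finset.filter_subset _ _
    have := Finset.card_sdiff_add_card_eq_card hTK
    omega
  have hrest : (K \ T).card ≤ 1 + (w + 1) ^ 4 * (m1 + 1) ^ 2 * Fn (m1 + 1) ((w + 1) / 2) := by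
    rcases (K \ T).eq_empty_or_nonempty with h0 | hne
    · simp [h0]
    obtain ⟨c1, hc1⟩ : ∃ c1, c1 = (K \ T).max' hne := ⟨_, rfl⟩
    have hc1m : c1 ∈ K \ T := hc1 ▸ (K \ T).max'_mem hne
    have hc1' := Finset.mem_sdiff.1 hc1m
    have hnw : ¬ HWidth (Q.filter (fun y => c1 ≤ g y)) w :=
      fun h => hc1'.2 (Finset.mem_filter.2 ⟨hc1'.1, h⟩)
    unfold HWidth at hnw
    push Not at hnw
    obtain ⟨A, hA, hAa, hAc⟩ := hnw
    have hAQ : A ⊆ Q := hA.trans (Finset.filter_subset _ _)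
    have hAc' : A.card = w + 1 := by
      have := hW A hAQ hAa; omega
    have := step_aux g Q K (w + 1) (Fn (m1 + 1) ((w + 1) / 2)) m1 (by omega) hGr0 hW hLF
      (ih ((w + 1) / 2) (by omega)) A hAQ hAa hAc' ((K \ T).erase c1)
      (fun c hc => (Finset.mem_sdiff.1 (Finset.mem_of_mem_erase hc)).1) (by
        intro c hc a ha
        have h1 := Finset.mem_erase.1 hc
        have h2 : c ≤ c1 := hc1 ▸ (K \ T).le_max' c h1.2
        have h3 := (Finset.mem_filter.1 (hA ha)).2
        have h4 := h1.1
        omega)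
    rw [Finset.card_erase_of_mem hc1m] at this
    omega
  rw [Fn, hsplit]
  omega

noncomputable def FR (m x : ℝ) : ℝ :=
  x ^ (2.5 * Real.logb 2 (2 * x) + 2 * Real.logb 2 m)

theorem FR_one (m : ℝ) : FR m 1 = 1 := by simp [FR]

theorem FR_exp_mono (m x y : ℝ) (hx : 1 ≤ x) (hxy : x ≤ y) :
    2.5 * Real.logb 2 (2 * x) + 2 * Real.logb 2 m ≤
      2.5 * Real.logb 2 (2 * y) + 2 * Real.logb 2 m := by
  have : Real.logb 2 (2 * x) ≤ Real.logb 2 (2 * y) :=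
    Real.logb_le_logb_of_le (by norm_num) (by linarith) (by linarith)
  linarith

theorem FR_exp_nonneg (m x : ℝ) (hm : 1 ≤ m) (hx : 1 ≤ x) :
    2.5 ≤ 2.5 * Real.logb 2 (2 * x) + 2 * Real.logb 2 m := by
  have h1 : Real.logb 2 2 ≤ Real.logb 2 (2 * x) :=
    Real.logb_le_logb_of_le (by norm_num) (by norm_num) (by linarith)
  rw [Real.logb_self_eq_one (by norm_num)] at h1
  have h2 : 0 ≤ Real.logb 2 m := Real.logb_nonneg (by norm_num) hm
  linarith

theorem FR_mono (m x y : ℝ) (hm : 1 ≤ m) (hx : 1 ≤ x) (hxy : x ≤ y) : FR m x ≤ FR m y := by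
  unfold FR
  refine (Real.rpow_le_rpow_of_exponent_le hx (FR_exp_mono m x y hx hxy)).trans ?_
  exact Real.rpow_le_rpow (by linarith) hxy
    (by linarith [FR_exp_nonneg m y hm (hx.trans hxy)])

theorem FR_half (m x : ℝ) (hm : 1 ≤ m) (hx : 1 ≤ x) : FR m (x / 2) * (x ^ 5 * m ^ 2) = FR m x := by
  have hx0 : 0 < x := by linarith
  have hm0 : 0 < m := by linarith
  have e1 : x = (2 : ℝ) ^ Real.logb 2 x := (Real.rpow_logb (by norm_num) (by norm_num) hx0).symm
  have e2 : m = (2 : ℝ) ^ Real.logb 2 m := (Real.rpow_logb (by norm_num) (by norm_num) hm0).symm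
  unfold FR
  have e3 : 2 * (x / 2) = x := by ring
  rw [e3, Real.logb_mul (by norm_num) hx0.ne', Real.logb_self_eq_one (by norm_num)]
  set a := Real.logb 2 x
  set b := Real.logb 2 m
  have e4 : x / 2 = (2 : ℝ) ^ (a - 1) := by
    rw [Real.rpow_sub (by norm_num), Real.rpow_one, ← e1]
  have e5 : x ^ 5 = (2 : ℝ) ^ (a * 5) := by
    rw [Real.rpow_mul (by norm_num), ← e1]; norm_cast
  have e6 : m ^ 2 = (2 : ℝ) ^ (b * 2) := by
    rw [Real.rpow_mul (by norm_num), ← e2]; norm_cast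
  have e7 : x ^ (2.5 * (1 + a) + 2 * b) = (2 : ℝ) ^ (a * (2.5 * (1 + a) + 2 * b)) := by
    rw [Real.rpow_mul (by norm_num), ← e1]
  rw [e7, e4, e5, e6, ← Real.rpow_mul (by norm_num), ← Real.rpow_add (by norm_num),
    ← Real.rpow_add (by norm_num)]
  congr 1
  ring

theorem Fn_le (m : ℕ) (hm : 1 ≤ m) (w : ℕ) : 1 ≤ w → (Fn m w : ℝ) ≤ FR m w := by
  induction w using Nat.strong_induction_on with
  | _ w ih =>
  intro hw
  have hmR : (1 : ℝ) ≤ m := by exact_mod_cast hm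
  obtain ⟨k, rfl⟩ : ∃ k, w = k + 1 := ⟨w - 1, by omega⟩
  rcases Nat.eq_zero_or_pos k with rfl | hk
  · have : Fn m (0 + 1) = 1 := by rw [Fn]; simp [Fn]
    rw [this]
    simp [FR_one]
  have hkR : (1 : ℝ) ≤ k := by exact_mod_cast hk
  have h1 := ih k (by omega) hk
  have h2 := ih ((k + 1) / 2) (by omega) (by omega)
  have h3 : FR m (((k + 1) / 2 : ℕ) : ℝ) ≤ FR m (((k : ℝ) + 1) / 2) := by
    apply FR_mono _ _ _ hmR
    · have : 1 ≤ (k + 1) / 2 := by omega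
      exact_mod_cast this
    · have := @Nat.cast_div_le ℝ _ _ _ (k + 1) 2
      push_cast at this
      exact this
  have h4 := FR_half m ((k : ℝ) + 1) hmR (by linarith)
  set E := 2.5 * Real.logb 2 (2 * ((k : ℝ) + 1)) + 2 * Real.logb 2 m with hE
  have hE2 : 2.5 ≤ E := FR_exp_nonneg m _ hmR (by linarith)
  have hFE : FR m ((k : ℝ) + 1) = ((k : ℝ) + 1) ^ E := rfl
  have h5 : ((k : ℝ) + 1) ^ 2 ≤ FR m ((k : ℝ) + 1) := by
    rw [hFE, ← Real.rpow_natCast]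
    exact Real.rpow_le_rpow_of_exponent_le (by linarith) (by push_cast; linarith)
  have h6 : FR m k * ((k : ℝ) + 1) ^ 2 ≤ FR m ((k : ℝ) + 1) * (k : ℝ) ^ 2 := by
    have a1 : FR m k ≤ (k : ℝ) ^ E :=
      Real.rpow_le_rpow_of_exponent_le hkR (FR_exp_mono m k (k + 1) hkR (by linarith))
    have a2 : (k : ℝ) ^ E = (k : ℝ) ^ 2 * (k : ℝ) ^ (E - 2) := by
      rw [← Real.rpow_natCast, ← Real.rpow_add (by linarith)]; congr 1; push_cast; ring
    have a3 : ((k : ℝ) + 1) ^ E = ((k : ℝ) + 1) ^ 2 * ((k : ℝ) + 1) ^ (E - 2) := by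
      rw [← Real.rpow_natCast, ← Real.rpow_add (by linarith)]; congr 1; push_cast; ring
    have a4 : (k : ℝ) ^ (E - 2) ≤ ((k : ℝ) + 1) ^ (E - 2) :=
      Real.rpow_le_rpow (by linarith) (by linarith) (by linarith)
    rw [hFE]
    calc FR m k * ((k : ℝ) + 1) ^ 2 ≤ ((k : ℝ) ^ 2 * (k : ℝ) ^ (E - 2)) * ((k : ℝ) + 1) ^ 2 := by
          rw [← a2]; gcongr
      _ ≤ ((k : ℝ) ^ 2 * ((k : ℝ) + 1) ^ (E - 2)) * ((k : ℝ) + 1) ^ 2 := by gcongr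
      _ = ((k : ℝ) + 1) ^ E * (k : ℝ) ^ 2 := by rw [a3]; ring
  rw [Fn]
  push_cast
  push_cast at h2 h3
  set G := FR m ((k : ℝ) + 1)
  have h7 : ((k : ℝ) + 1) ^ 4 * (m : ℝ) ^ 2 * (Fn m ((k + 1) / 2) : ℝ) * ((k : ℝ) + 1) ≤ G := by
    rw [← h4]
    calc ((k : ℝ) + 1) ^ 4 * (m : ℝ) ^ 2 * (Fn m ((k + 1) / 2) : ℝ) * ((k : ℝ) + 1)
        = (Fn m ((k + 1) / 2) : ℝ) * (((k : ℝ) + 1) ^ 5 * (m : ℝ) ^ 2) := by ring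
      _ ≤ _ := by
        gcongr
        exact h2.trans h3
  have hsq : (0 : ℝ) < ((k : ℝ) + 1) ^ 2 := by positivity
  refine le_of_mul_le_mul_right ?_ hsq
  set V := ((k : ℝ) + 1) ^ 4 * (m : ℝ) ^ 2 * (Fn m ((k + 1) / 2) : ℝ)
  have b1 : (Fn m k : ℝ) * ((k : ℝ) + 1) ^ 2 ≤ G * (k : ℝ) ^ 2 :=
    (mul_le_mul_of_nonneg_right h1 hsq.le).trans h6
  have b2 : V * ((k : ℝ) + 1) ^ 2 ≤ G * ((k : ℝ) + 1) := by
    have := mul_le_mul_of_nonneg_right h7 (by linarith : (0 : ℝ) ≤ (k : ℝ) + 1)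
    calc V * ((k : ℝ) + 1) ^ 2 = V * ((k : ℝ) + 1) * ((k : ℝ) + 1) := by ring
      _ ≤ _ := this
  have hG0 : 0 ≤ G := hsq.le.trans h5
  have b3 : G ≤ G * k := le_mul_of_one_le_right hG0 hkR
  nlinarith

/-- every `n`-Grundy coloring of an `L_m`-free poset of width at
most `w` satisfies `n ≤ w^(2.5·lg(2w) + 2·lg m)`. -/
theorem stmt_12 {α : Type} [Fintype α] (le : α → α → Prop)
    (hle : IsPartialOrder α le) (m w n : ℕ) (hm : 0 < m) (hw : 0 < w)
    (hfree : LFree le m)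
    (hwidth : ∀ S : Finset α, IsAntichainOn le S → S.card ≤ w)
    (g : α → ℕ) (hg : IsGrundy le n g) :
    (n : ℝ) ≤ (w : ℝ) ^
      (2.5 * Real.logb 2 (2 * (w : ℝ)) + 2 * Real.logb 2 (m : ℝ)) := by
  classical
  letI P : PartialOrder α :=
    { le := le
      le_refl := fun a => hle.refl a
      le_trans := fun a b c h1 h2 => hle.trans a b c h1 h2
      le_antisymm := fun a b h1 h2 => hle.antisymm a b h1 h2 }
  obtain ⟨m1, rfl⟩ : ∃ k, m = k + 1 := ⟨m - 1, by omega⟩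
  have hLF : HLF α (m1 + 1) := by
    intro x y h1 h2 h3 h4
    refine hfree ⟨x, y, ?_, ?_, ?_, ?_⟩
    · intro i j hij; exact ⟨(h1 i j hij).le, (h1 i j hij).ne⟩
    · intro i j hij; exact ⟨(h2 i j hij).le, (h2 i j hij).ne⟩
    · intro i; exact ⟨(h3 i).le, (h3 i).ne⟩
    · exact h4
  have hW : HWidth (Finset.univ : Finset α) w := by
    intro S _ hS
    apply hwidth
    intro a ha b hb hab
    exact ⟨fun h => hab (hS a ha b hb h), fun h => hab (hS b hb a ha h).symm⟩
  have hGr : HGr g (Finset.univ : Finset α) (Finset.Icc 1 n) := by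
    obtain ⟨g1, g2, g3, g4⟩ := hg
    refine ⟨fun y _ => Finset.mem_Icc.2 (g1 y), ?_, fun x _ y _ h => g3 x y h, ?_⟩
    · intro c hc
      obtain ⟨v, hv⟩ := g2 c (Finset.mem_Icc.1 hc).1 (Finset.mem_Icc.1 hc).2
      exact ⟨v, Finset.mem_univ _, hv⟩
    · intro y _ c hc hcy
      obtain ⟨u, hu, huc⟩ := g4 y c (Finset.mem_Icc.1 hc).1 hcy
      exact ⟨u, Finset.mem_univ _, huc, hu⟩
  have h1 := grundy_bound g m1 hLF w _ _ hGr hW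
  rw [Nat.card_Icc, Nat.add_sub_cancel] at h1
  have h2 := Fn_le (m1 + 1) (by omega) w hw
  exact le_trans (by exact_mod_cast h1) h2
end

section
/- If (P, A_1,…,A_n) is a regular poset of width w ≥ 1, then every n-Grundy coloring of P satisfies n ≤ w^{2.5·lg(2w) + 2·lg(2w²+1)}; that is, First-Fit uses at most w^{2.5·lg(2w) + 2·lg(2w²+1)} chains on any regular poset of width w. -/
structure RP {α : Type*} [PartialOrder α] {n : ℕ} (w : ℕ) (A : Fin n → Finset α)
    (h : Fin n → ℤ) : Prop where
  cover : ∀ v, ∃ i, v ∈ A i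
  card : ∀ i, (A i).card = w
  anti : ∀ i, ∀ a ∈ A i, ∀ b ∈ A i, a ≤ b → a = b
  hinj : ∀ i j, h i = h j → i = j
  mono : ∀ i j x y, x ∈ A i → y ∈ A j → x ≤ y → h i ≤ h j
  edge : ∀ i j, h i ≤ h j → ∀ x ∈ A i, ∃ y ∈ A j, x ≤ y
  edge' : ∀ i j, h i ≤ h j → ∀ y ∈ A j, ∃ x ∈ A i, x ≤ y
  succ : ∀ i j x y, x ∈ A i → y ∈ A j → x ≤ y → j < i → ∃ k, k < i ∧ h i ≤ h k ∧
    (∀ l, l < i → h i ≤ h l → h k ≤ h l) ∧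
    (∀ x ∈ A i, ∀ y ∈ A k, x ≤ y → ∃ f : α → α, Set.BijOn f ↑(A i) ↑(A k) ∧
      (∀ a ∈ A i, a ≤ f a) ∧ f x = y) ∧ ∃ z ∈ A k, x ≤ z ∧ z ≤ y
  pred : ∀ i j x y, x ∈ A i → y ∈ A j → x ≤ y → i < j → ∃ k, k < j ∧ h k ≤ h j ∧
    (∀ l, l < j → h l ≤ h j → h l ≤ h k) ∧
    (∀ x ∈ A k, ∀ y ∈ A j, x ≤ y → ∃ f : α → α, Set.BijOn f ↑(A k) ↑(A j) ∧
      (∀ a ∈ A k, a ≤ f a) ∧ f x = y) ∧ ∃ z ∈ A k, x ≤ z ∧ z ≤ y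

theorem RP.of_regular {α : Type*} [PartialOrder α] [DecidableEq α] {n w : ℕ} (hw : 1 ≤ w)
    (A : Fin n → Finset α)
    (H : IsRegularPoset (fun a b : α => a ≤ b) w A) : ∃ h, RP w A h := by
  classical
  obtain ⟨hcov, hdis, hanti, hcard, hwid, htot, hsc, hpc, h5⟩ := H
  have anti : ∀ i, ∀ a ∈ A i, ∀ b ∈ A i, a ≤ b → a = b := by
    intro i a ha b hb hab
    by_contra hne
    exact (hanti i a ha b hb hne).1 hab
  have disj : ∀ i j v, v ∈ A i → v ∈ A j → i = j := by
    intro i j v hi hj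
    by_contra hne
    exact hdis i j hne v hi hj
  let R : Fin n → Fin n → Prop := fun i j => Below (fun a b : α => a ≤ b) (A i) (A j)
  have Rtrans : ∀ i j k, R i j → R j k → R i k := by
    intro i j k h1 h2 a ha
    obtain ⟨b, hb, hab⟩ := h1 a ha
    obtain ⟨d, hd, hbd⟩ := h2 b hb
    exact ⟨d, hd, le_trans hab hbd⟩
  have Rrefl : ∀ i, R i i := fun i a ha => ⟨a, ha, le_refl a⟩
  have ne : ∀ i, (A i).Nonempty := by
    intro i; rw [← Finset.card_pos, hcard]; exact hw
  have Redge : ∀ i j x y, x ∈ A i → y ∈ A j → x ≤ y → R i j := by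
    intro i j x y hx hy hxy
    rcases htot i j with h | h
    · exact h
    · obtain ⟨t, ht, hyt⟩ := h y hy
      have e1 := anti i x hx t ht (le_trans hxy hyt)
      subst e1
      have e2 := le_antisymm hxy hyt
      subst e2
      have := disj i j x hx hy
      subst this
      exact Rrefl i
  have Ranti : ∀ i j, R i j → R j i → i = j := by
    intro i j h1 h2
    obtain ⟨x, hx⟩ := ne i
    obtain ⟨y, hy, hxy⟩ := h1 x hx
    obtain ⟨z, hz, hyz⟩ := h2 y hy
    have e1 := anti i x hx z hz (le_trans hxy hyz)
    subst e1
    have e2 := le_antisymm hxy hyz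
    subst e2
    exact disj i j x hx hy
  let h : Fin n → ℤ := fun i => ((Finset.univ.filter (fun l => R l i)).card : ℤ)
  have hmono : ∀ i j, R i j → h i ≤ h j := by
    intro i j hij
    simp only [h]
    norm_cast
    apply Finset.card_le_card
    intro l hl
    simp only [Finset.mem_filter, Finset.mem_univ, true_and] at hl ⊢
    exact Rtrans _ _ _ hl hij
  have hR : ∀ i j, h i ≤ h j → R i j := by
    intro i j hij
    rcases htot i j with h1 | h1
    · exact h1
    · by_contra hn
      have : h j < h i := by
        simp only [h]
        norm_cast
        apply Finset.card_lt_card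
        refine ⟨?_, ?_⟩
        · intro l hl
          simp only [Finset.mem_filter, Finset.mem_univ, true_and] at hl ⊢
          exact Rtrans _ _ _ hl h1
        · intro hs
          have : i ∈ Finset.univ.filter (fun l => R l j) := hs (by simp [Rrefl])
          simp at this
          exact hn this
      omega
  have Ane : ∀ i j, i ≠ j → A i ≠ A j := by
    intro i j hij he
    obtain ⟨x, hx⟩ := ne i
    exact hij (disj i j x hx (he ▸ hx))
  refine ⟨h, hcov, hcard, anti, ?_, ?_, ?_, ?_, ?_, ?_⟩
  · intro i j hij
    exact Ranti i j (hR _ _ hij.le) (hR _ _ hij.ge)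
  · intro i j x y hx hy hxy
    exact hmono _ _ (Redge i j x y hx hy hxy)
  · intro i j hij x hx
    exact hR i j hij x hx
  · intro i j hij y hy
    by_contra hn
    push Not at hn
    by_cases hyi : y ∈ A i
    · exact hn y hyi le_rfl
    have : IsAntichainOn (fun a b : α => a ≤ b) (insert y (A i)) := by
      have key : ∀ x ∈ A i, ¬ x ≤ y ∧ ¬ y ≤ x := by
        intro x hx
        refine ⟨hn x hx, fun hyx => ?_⟩
        have := Redge j i y x hy hx hyx
        have := Ranti _ _ this (hR _ _ hij)
        subst this
        exact hyi hy
      intro a ha b hb hab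
      rw [Finset.mem_insert] at ha hb
      rcases ha with rfl | ha
      · rcases hb with rfl | hb
        · exact absurd rfl hab
        · exact (key b hb).symm
      · rcases hb with rfl | hb
        · exact key a ha
        · exact hanti i a ha b hb hab
    have h2 := hwid.2 _ this
    rw [Finset.card_insert_of_notMem hyi, hcard] at h2
    omega
  · intro i j x y hx hy hxy hji
    have hne : x ≠ y := by
      rintro rfl
      exact absurd (disj i j x hx hy) (by omega)
    obtain ⟨k, hk, z, hz, hxz, _, hzy⟩ := (h5 i j x y hx hy hxy hne).1 hji
    refine ⟨k, hk.1, hmono _ _ hk.2.1.1, ?_, (hsc i k hk).2, z, hz, hxz, hzy⟩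
    intro l hl hil
    exact hmono _ _ (hk.2.2 l hl ⟨hR _ _ hil, Ane _ _ (by omega)⟩)
  · intro i j x y hx hy hxy hji
    have hne : x ≠ y := by
      rintro rfl
      exact absurd (disj i j x hx hy) (by omega)
    obtain ⟨k, hk, z, hz, hxz, hzy, _⟩ := (h5 i j x y hx hy hxy hne).2 hji
    refine ⟨k, hk.1, hmono _ _ hk.2.1.1, ?_, (hpc j k hk).2, z, hz, hxz, hzy⟩
    intro l hl hil
    exact hmono _ _ (hk.2.2 l hl ⟨hR _ _ hil, Ane _ _ (by omega)⟩)

section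
variable {α : Type*} [PartialOrder α] {n w : ℕ} {A : Fin n → Finset α} {h : Fin n → ℤ}

theorem bij_inv {A B : Finset α} {f : α → α} (hf : Set.BijOn f ↑A ↑B)
    (hle : ∀ a ∈ A, a ≤ f a) {x y : α} (hx : x ∈ A) (hxy : f x = y) :
    ∃ f' : α → α, Set.BijOn f' ↑B ↑A ∧ (∀ b ∈ B, f' b ≤ b) ∧ f' y = x := by
  have : Nonempty α := ⟨x⟩
  have hinv := hf.invOn_invFunOn
  have hm : Set.MapsTo (Function.invFunOn f (A : Set α)) B A := hf.surjOn.mapsTo_invFunOn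
  refine ⟨Function.invFunOn f A, hinv.symm.bijOn hm hf.mapsTo, ?_, ?_⟩
  · intro b hb
    have h1 := hle _ (hm hb)
    rwa [hinv.2 hb] at h1
  · rw [← hxy]; exact hinv.1 hx

theorem RP.dual (H : RP w A h) : RP (α := αᵒᵈ) w A (fun i => - h i) where
  cover := H.cover
  card := H.card
  anti := fun i a ha b hb hab => (H.anti i b hb a ha hab).symm
  hinj := fun i j hij => H.hinj i j (by simpa using hij)
  mono := fun i j x y hx hy hxy => by
    have := H.mono j i y x hy hx hxy
    simpa using this
  edge := fun i j hij x hx => H.edge' j i (by simpa using hij) x hx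
  edge' := fun i j hij x hx => H.edge j i (by simpa using hij) x hx
  succ := fun i j x y hx hy hxy hji => by
    obtain ⟨k, hk, hki, hl, hc, z, hz, h1, h2⟩ := H.pred j i y x hy hx hxy hji
    refine ⟨k, hk, by simpa using hki, fun l h1 h2 => by simpa using hl l h1 (by simpa using h2),
      ?_, z, hz, h2, h1⟩
    intro x hx y hy hxy
    obtain ⟨f, hf, hfl, hfx⟩ := hc y hy x hx hxy
    exact bij_inv hf hfl hy hfx
  pred := fun i j x y hx hy hxy hji => by
    obtain ⟨k, hk, hki, hl, hc, z, hz, h1, h2⟩ := H.succ j i y x hy hx hxy hji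
    refine ⟨k, hk, by simpa using hki, fun l h1 h2 => by simpa using hl l h1 (by simpa using h2),
      ?_, z, hz, h2, h1⟩
    intro x hx y hy hxy
    obtain ⟨f, hf, hfl, hfx⟩ := hc y hy x hx hxy
    exact bij_inv hf hfl hy hfx

theorem RP.allcore (H : RP w A h) : ∀ (s : ℕ) (i j : Fin n), i.val + j.val ≤ s →
    ∀ x ∈ A i, ∀ y ∈ A j, x ≤ y →
    ∃ f : α → α, Set.BijOn f ↑(A i) ↑(A j) ∧ (∀ a ∈ A i, a ≤ f a) ∧ f x = y := by
  intro s
  induction s using Nat.strong_induction_on with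
  | _ s ih =>
  intro i j hs x hx y hy hxy
  rcases lt_trichotomy i j with hij | hij | hij
  · obtain ⟨k, hk, hki, hl, hc, z, hz, h1, h2⟩ := H.pred i j x y hx hy hxy hij
    obtain ⟨f, hf, hfl, hfx⟩ := ih (i.val + k.val) (by omega) i k le_rfl x hx z hz h1
    obtain ⟨f', hf', hfl', hfx'⟩ := hc z hz y hy h2
    refine ⟨f' ∘ f, hf'.comp hf, fun a ha => le_trans (hfl a ha) (hfl' _ (hf.mapsTo ha)), ?_⟩
    simp [hfx, hfx']
  · subst hij
    have := H.anti i x hx y hy hxy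
    subst this
    exact ⟨id, Set.bijOn_id _, fun a _ => le_rfl, rfl⟩
  · obtain ⟨k, hk, hki, hl, hc, z, hz, h1, h2⟩ := H.succ i j x y hx hy hxy hij
    obtain ⟨f, hf, hfl, hfx⟩ := ih (k.val + j.val) (by omega) k j le_rfl z hz y hy h2
    obtain ⟨f', hf', hfl', hfx'⟩ := hc x hx z hz h1
    refine ⟨f ∘ f', hf.comp hf', fun a ha => le_trans (hfl' a ha) (hfl _ (hf'.mapsTo ha)), ?_⟩
    simp [hfx, hfx']

theorem RP.disj (H : RP w A h) {i j : Fin n} {v : α} (hi : v ∈ A i) (hj : v ∈ A j) : i = j :=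
  H.hinj _ _ (le_antisymm (H.mono i j v v hi hj le_rfl) (H.mono j i v v hj hi le_rfl))

theorem RP.label_aux (hw : 1 ≤ w) (H : RP w A h) (S : Finset (Fin n)) : ∃ c : α → Fin w,
    (∀ i ∈ S, Set.InjOn c (A i)) ∧
    (∀ i ∈ S, ∀ j ∈ S, h i ≤ h j → ∀ v ∈ A i, ∀ u ∈ A j, c v = c u → v ≤ u) := by
  classical
  induction S using Finset.induction_on_max_value h with
  | empty => exact ⟨fun _ => ⟨0, hw⟩, by simp, by simp⟩
  | insert b S hb hmax ih =>
    obtain ⟨c, hc1, hc2⟩ := ih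
    rcases S.eq_empty_or_nonempty with hS | hS
    · subst hS
      let e := (A b).equivFinOfCardEq (H.card b)
      refine ⟨fun v => if hv : v ∈ A b then e ⟨v, hv⟩ else ⟨0, hw⟩, ?_, ?_⟩
      · intro i hi
        simp at hi
        subst hi
        intro x hx y hy hxy
        have hx' : x ∈ A i := hx
        have hy' : y ∈ A i := hy
        simp only [hx', hy', dif_pos] at hxy
        simpa using e.injective hxy
      · intro i hi j hj _ v hv u hu hvu
        simp at hi hj
        subst hi
        subst hj
        simp only [hv, hu, dif_pos] at hvu
        have := e.injective hvu
        simp at this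
        exact this.le
    · obtain ⟨t, htS, ht⟩ := Finset.exists_max_image S h hS
      have htne : (A t).Nonempty := by rw [← Finset.card_pos, H.card]; exact hw
      obtain ⟨x, hx⟩ := htne
      obtain ⟨y, hy, hxy⟩ := H.edge t b (hmax t htS) x hx
      obtain ⟨f, hf, hfl, hfx⟩ := H.allcore _ t b le_rfl x hx y hy hxy
      obtain ⟨f', hf', hfl', -⟩ := bij_inv hf hfl hx hfx
      have hnb : ∀ i ∈ S, ∀ v ∈ A i, v ∉ A b := by
        intro i hi v hv hvb
        exact hb (H.disj hv hvb ▸ hi)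
      refine ⟨fun v => if v ∈ A b then c (f' v) else c v, ?_, ?_⟩
      · intro i hi u hu v hv huv
        rw [Finset.mem_coe] at hu hv
        rw [Finset.mem_insert] at hi
        rcases hi with rfl | hi
        · simp only [hu, hv, if_true] at huv
          exact hf'.injOn hu hv (hc1 t htS (hf'.mapsTo hu) (hf'.mapsTo hv) huv)
        · simp only [hnb i hi u hu, hnb i hi v hv, if_false] at huv
          exact hc1 i hi hu hv huv
      · intro i hi j hj hij v hv u hu hvu
        rw [Finset.mem_insert] at hi hj
        rcases hi with rfl | hi
        · rcases hj with rfl | hj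
          · simp only [hu, hv, if_true] at hvu
            exact (hf'.injOn hv hu (hc1 t htS (hf'.mapsTo hv) (hf'.mapsTo hu) hvu)).le
          · have := H.hinj _ _ (le_antisymm hij (hmax j hj))
            subst this
            exact absurd hj hb
        · rcases hj with rfl | hj
          · simp only [hu, hnb i hi v hv, if_true, if_false] at hvu
            exact le_trans (hc2 i hi t htS (ht i hi) v hv _ (hf'.mapsTo hu) hvu) (hfl' u hu)
          · simp only [hnb i hi v hv, hnb j hj u hu, if_false] at hvu
            exact hc2 i hi j hj hij v hv u hu hvu

theorem RP.label (hw : 1 ≤ w) (H : RP w A h) : ∃ c : α → Fin w,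
    ∀ u v, c u = c v → u ≤ v ∨ v ≤ u := by
  obtain ⟨c, -, hc⟩ := H.label_aux hw Finset.univ
  refine ⟨c, fun u v huv => ?_⟩
  obtain ⟨i, hi⟩ := H.cover u
  obtain ⟨j, hj⟩ := H.cover v
  rcases le_total (h i) (h j) with hij | hij
  · exact Or.inl (hc i (by simp) j (by simp) hij u hi v hj huv)
  · exact Or.inr (hc j (by simp) i (by simp) hij v hj u hi huv.symm)
end

section
variable {α : Type*} [PartialOrder α] {n w : ℕ} {A : Fin n → Finset α} {h : Fin n → ℤ}

theorem RP.pass (H : RP w A h) (k : Fin n) : ∀ (s : ℕ) (i j : Fin n), i.val + j.val ≤ s →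
    ∀ v ∈ A i, ∀ u ∈ A j, v ≤ u → h i ≤ h k → h k ≤ h j →
    (∀ l, h i ≤ h l → h l ≤ h j → k ≤ l) → ∃ z ∈ A k, v ≤ z ∧ z ≤ u := by
  intro s
  induction s using Nat.strong_induction_on with
  | _ s ih =>
  intro i j hs v hv u hu hvu hik hkj hmin
  have hki := hmin i le_rfl (hik.trans hkj)
  have hkj' := hmin j (hik.trans hkj) le_rfl
  by_cases e1 : i = k
  · subst e1; exact ⟨v, hv, le_rfl, hvu⟩
  by_cases e2 : j = k
  · subst e2; exact ⟨u, hu, hvu, le_rfl⟩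
  rcases lt_trichotomy i j with hij | hij | hij
  · obtain ⟨k', hk', hk'j, hl, -, z, hz, h1, h2⟩ := H.pred i j v u hv hu hvu hij
    obtain ⟨z', hz', h3, h4⟩ := ih (i.val + k'.val) (by omega) i k' le_rfl v hv z hz h1 hik
      (hl k (by omega) hkj) (fun l hl1 hl2 => hmin l hl1 (by omega))
    exact ⟨z', hz', h3, h4.trans h2⟩
  · subst hij
    exact absurd (H.hinj _ _ (le_antisymm hik hkj)) e1
  · obtain ⟨k', hk', hk'j, hl, -, z, hz, h1, h2⟩ := H.succ i j v u hv hu hvu hij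
    obtain ⟨z', hz', h3, h4⟩ := ih (k'.val + j.val) (by omega) k' j le_rfl z hz u hu h2
      (hl k (by omega) hik) hkj (fun l hl1 hl2 => hmin l (by omega) hl2)
    exact ⟨z', hz', h1.trans h3, h4⟩

theorem RP.pass2 (H : RP w A h) (k i : Fin n) (v : α) (hv : v ∈ A i) (hik : h i ≤ h k)
    (hik' : i ≤ k) : ∀ (s : ℕ) (j : Fin n), j.val ≤ s →
    ∀ u ∈ A j, v ≤ u → h k ≤ h j →
    (∀ l, h k ≤ h l → h l ≤ h j → k ≤ l) → ∃ z ∈ A k, v ≤ z ∧ z ≤ u := by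
  intro s
  induction s using Nat.strong_induction_on with
  | _ s ih =>
  intro j hs u hu hvu hkj hmin
  have hkj' := hmin j hkj le_rfl
  by_cases e2 : j = k
  · subst e2; exact ⟨u, hu, hvu, le_rfl⟩
  have hij : i < j := by omega
  obtain ⟨k', hk', hk'j, hl, -, z, hz, h1, h2⟩ := H.pred i j v u hv hu hvu hij
  obtain ⟨z', hz', h3, h4⟩ := ih k'.val (by omega) k' le_rfl z hz h1
    (hl k (by omega) hkj) (fun l hl1 hl2 => hmin l hl1 (by omega))
  exact ⟨z', hz', h3, h4.trans h2⟩

theorem RP.pierce_half (H : RP w A h) {ι : Type*} (I : Finset ι) (x y : ι → α)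
    (e lx ly : ι → Fin n) (p : ℤ)
    (hx : ∀ i ∈ I, x i ∈ A (lx i)) (hy : ∀ i ∈ I, y i ∈ A (ly i))
    (hxy : ∀ i ∈ I, x i ≤ y i)
    (hmon : ∀ i ∈ I, ∀ j ∈ I, (x i ≤ x j ∧ y i ≤ y j) ∨ (x j ≤ x i ∧ y j ≤ y i))
    (hdist : ∀ i ∈ I, ∀ j ∈ I, i ≠ j → ¬ (x i ≤ y j ∧ x j ≤ y i))
    (he1 : ∀ i ∈ I, h (lx i) ≤ h (e i)) (he2 : ∀ i ∈ I, h (e i) ≤ h (ly i))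
    (hemin : ∀ i ∈ I, ∀ l, h (lx i) ≤ h l → h l ≤ h (ly i) → e i ≤ l)
    (hp : ∀ i ∈ I, h (e i) ≤ p ∧ p ≤ h (ly i)) : I.card ≤ w := by
  classical
  rcases I.eq_empty_or_nonempty with rfl | hI
  · simp
  obtain ⟨r, hr, hrmax⟩ := Finset.exists_max_image I (fun i => h (e i)) hI
  have key : ∀ i ∈ I, ∃ z ∈ A (e r), x i ≤ z ∧ z ≤ y i := by
    intro i hi
    obtain ⟨z, hz, h1, h2⟩ := H.pass (e i) _ (lx i) (ly i) le_rfl (x i) (hx i hi) (y i) (hy i hi)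
      (hxy i hi) (he1 i hi) (he2 i hi) (hemin i hi)
    have hr1 := hrmax i hi
    have hpi := hp i hi
    have hpr := hp r hr
    have hr2 := he1 i hi
    have htime : e i ≤ e r := hemin i hi (e r) (by omega) (by omega)
    rcases hmon i hi r hr with ⟨h3, h4⟩ | ⟨h3, h4⟩
    · have h5 := H.mono _ _ _ _ (hy i hi) (hy r hr) h4
      have h6 := he1 r hr
      obtain ⟨z', hz', h7, h8⟩ := H.pass2 (e r) (e i) z hz hr1 htime _ (ly i) le_rfl (y i) (hy i hi)
        h2 (by omega) (fun l hl1 hl2 => hemin r hr l (by omega) (by omega))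
      exact ⟨z', hz', h1.trans h7, h8⟩
    · have h5 := H.mono _ _ _ _ (hx r hr) (hx i hi) h3
      have h6 := hemin r hr (e i) (by omega) (by omega)
      have h7 : e i = e r := by omega
      exact ⟨z, h7 ▸ hz, h1, h2⟩
  have : Nonempty α := ⟨x r⟩
  choose! z hz h1 h2 using key
  rw [← H.card (e r)]
  apply Finset.card_le_card_of_injOn z hz
  intro i hi j hj hij
  by_contra hne
  apply hdist i hi j hj hne
  exact ⟨(h1 i hi).trans (hij ▸ h2 j hj), (h1 j hj).trans (hij ▸ h2 i hi)⟩

theorem RP.pierce (H : RP w A h) {ι : Type*} (I : Finset ι) (x y : ι → α)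
    (lx ly : ι → Fin n) (p : Fin n)
    (hx : ∀ i ∈ I, x i ∈ A (lx i)) (hy : ∀ i ∈ I, y i ∈ A (ly i))
    (hxy : ∀ i ∈ I, x i ≤ y i)
    (hmon : ∀ i ∈ I, ∀ j ∈ I, (x i ≤ x j ∧ y i ≤ y j) ∨ (x j ≤ x i ∧ y j ≤ y i))
    (hdist : ∀ i ∈ I, ∀ j ∈ I, i ≠ j → ¬ (x i ≤ y j ∧ x j ≤ y i))
    (hp : ∀ i ∈ I, h (lx i) ≤ h p ∧ h p ≤ h (ly i)) : I.card ≤ 2 * w := by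
  classical
  have hex : ∀ i ∈ I, ∃ e, h (lx i) ≤ h e ∧ h e ≤ h (ly i) ∧
      ∀ l, h (lx i) ≤ h l → h l ≤ h (ly i) → e ≤ l := by
    intro i hi
    obtain ⟨e, he, hmin⟩ := Finset.exists_min_image
      (Finset.univ.filter (fun l => h (lx i) ≤ h l ∧ h l ≤ h (ly i))) id
      ⟨p, by simpa using hp i hi⟩
    simp only [Finset.mem_filter, Finset.mem_univ, true_and, id] at he hmin
    exact ⟨e, he.1, he.2, fun l h1 h2 => hmin l ⟨h1, h2⟩⟩
  have : Nonempty (Fin n) := ⟨p⟩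
  choose! e he1 he2 hemin using hex
  have c1 : (I.filter (fun i => h (e i) ≤ h p)).card ≤ w := by
    apply H.pierce_half _ x y e lx ly (h p)
    all_goals simp only [Finset.mem_filter, and_imp]
    · intro i hi _; exact hx i hi
    · intro i hi _; exact hy i hi
    · intro i hi _; exact hxy i hi
    · intro i hi _ j hj _; exact hmon i hi j hj
    · intro i hi _ j hj _; exact hdist i hi j hj
    · intro i hi _; exact he1 i hi
    · intro i hi _; exact he2 i hi
    · intro i hi _; exact hemin i hi
    · intro i hi h1; exact ⟨h1, (hp i hi).2⟩
  have c2 : (I.filter (fun i => ¬ h (e i) ≤ h p)).card ≤ w := by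
    apply H.dual.pierce_half _ y x e ly lx (-h p)
    all_goals simp only [Finset.mem_filter, and_imp]
    · intro i hi _; exact hy i hi
    · intro i hi _; exact hx i hi
    · intro i hi _; exact hxy i hi
    · intro i hi _ j hj _
      rcases hmon i hi j hj with ⟨a, b⟩ | ⟨a, b⟩
      · exact Or.inr ⟨b, a⟩
      · exact Or.inl ⟨b, a⟩
    · intro i hi _ j hj _ hij ⟨a, b⟩; exact hdist i hi j hj hij ⟨b, a⟩
    · intro i hi _; have := he2 i hi; omega
    · intro i hi _; have := he1 i hi; omega
    · intro i hi _ l h1 h2; exact hemin i hi l (by omega) (by omega)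
    · intro i hi h1; have := (hp i hi).1; omega
  have := Finset.card_filter_add_card_filter_not (s := I) (fun i => h (e i) ≤ h p)
  omega

theorem RP.up_card [DecidableLE α] (hw : 1 ≤ w) (H : RP w A h) (y0 : α) {a b : Fin n} (hab : h a ≤ h b) :
    ((A a).filter (fun v => y0 ≤ v)).card ≤ ((A b).filter (fun v => y0 ≤ v)).card := by
  have hne : (A a).Nonempty := by rw [← Finset.card_pos, H.card]; exact hw
  obtain ⟨x, hx⟩ := hne
  obtain ⟨y, hy, hxy⟩ := H.edge a b hab x hx
  obtain ⟨f, hf, hfl, -⟩ := H.allcore _ a b le_rfl x hx y hy hxy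
  apply Finset.card_le_card_of_injOn f
  · intro v hv
    simp only [Finset.coe_filter, Set.mem_ofPred_eq] at hv ⊢
    exact ⟨hf.mapsTo hv.1, hv.2.trans (hfl v hv.1)⟩
  · exact hf.injOn.mono (by intro v hv; simp at hv; exact hv.1)

theorem RP.up_eq [DecidableLE α] [DecidableEq α] (H : RP w A h) (y0 : α) {a b : Fin n}
    (hc : ((A a).filter (fun v => y0 ≤ v)).card = ((A b).filter (fun v => y0 ≤ v)).card)
    {v u : α} (hv : v ∈ A a) (hu : u ∈ A b) (hvu : v ≤ u) (hy : y0 ≤ u) : y0 ≤ v := by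
  obtain ⟨f, hf, hfl, hfv⟩ := H.allcore _ a b le_rfl v hv u hu hvu
  have himg : ((A a).filter (fun v => y0 ≤ v)).image f = (A b).filter (fun v => y0 ≤ v) := by
    apply Finset.eq_of_subset_of_card_le
    · intro t ht
      rw [Finset.mem_image] at ht
      obtain ⟨s, hs, rfl⟩ := ht
      rw [Finset.mem_filter] at hs ⊢
      exact ⟨hf.mapsTo hs.1, hs.2.trans (hfl s hs.1)⟩
    · rw [Finset.card_image_of_injOn, hc]
      exact hf.injOn.mono (by intro v hv; simp at hv; exact hv.1)
  have : u ∈ ((A a).filter (fun v => y0 ≤ v)).image f := by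
    rw [himg, Finset.mem_filter]; exact ⟨hu, hy⟩
  rw [Finset.mem_image] at this
  obtain ⟨s, hs, hsu⟩ := this
  rw [Finset.mem_filter] at hs
  have : s = v := hf.injOn hs.1 hv (hsu.trans hfv.symm)
  exact this ▸ hs.2

theorem RP.lfree (hw : 1 ≤ w) (H : RP w A h) :
    LFree (fun a b : α => a ≤ b) (2 * w ^ 2 + 1) := by
  classical
  rintro ⟨x, y, hx, hy, hxy, hinc⟩
  choose lev hlev using H.cover
  have hx' : ∀ i j, i ≤ j → x i ≤ x j := by
    intro i j hij
    rcases hij.eq_or_lt with rfl | h1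
    · exact le_rfl
    · exact (hx i j h1).1
  have hy' : ∀ i j, i ≤ j → y i ≤ y j := by
    intro i j hij
    rcases hij.eq_or_lt with rfl | h1
    · exact le_rfl
    · exact (hy i j h1).1
  let y0 := y 0
  let F : Fin (2 * w ^ 2 + 1) → ℕ := fun i => ((A (lev (y i))).filter (fun v => y0 ≤ v)).card
  have hF : ∀ i ∈ (Finset.univ : Finset (Fin (2 * w ^ 2 + 1))), F i ∈ Finset.Icc 1 w := by
    intro i _
    rw [Finset.mem_Icc]
    refine ⟨?_, ?_⟩
    · apply Finset.card_pos.2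
      exact ⟨y i, Finset.mem_filter.2 ⟨hlev _, hy' _ _ (Fin.zero_le i)⟩⟩
    · rw [← H.card (lev (y i))]
      exact Finset.card_filter_le _ _
  obtain ⟨t, -, ht⟩ := Finset.exists_lt_card_fiber_of_mul_lt_card_of_maps_to (n := 2 * w) hF
    (by simp; nlinarith)
  set I := Finset.univ.filter (fun i => F i = t) with hI
  have hne : I.Nonempty := by rw [← Finset.card_pos]; omega
  set i0 := I.min' hne with hi0
  have hi0I : F i0 = t := by
    exact (Finset.mem_filter.1 (I.min'_mem hne)).2
  have := H.pierce I x y (fun i => lev (x i)) (fun i => lev (y i)) (lev (y i0))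
    (fun i _ => hlev _) (fun i _ => hlev _) (fun i _ => (hxy i).1) ?_ ?_ ?_
  · omega
  · intro i _ j _
    rcases le_total i j with hij | hij
    · exact Or.inl ⟨hx' _ _ hij, hy' _ _ hij⟩
    · exact Or.inr ⟨hx' _ _ hij, hy' _ _ hij⟩
  · intro i _ j _ hij ⟨h1, h2⟩
    rcases lt_or_gt_of_ne hij with hij | hij
    · exact (hinc i j hij).2 h2
    · exact (hinc j i hij).2 h1
  · intro j hj
    have hjt : F j = t := by
      rw [hI, Finset.mem_filter] at hj
      exact hj.2
    have hij : i0 ≤ j := I.min'_le j hj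
    have hup := H.mono _ _ _ _ (hlev (y i0)) (hlev (y j)) (hy' _ _ hij)
    refine ⟨?_, hup⟩
    have hxyj := H.mono _ _ _ _ (hlev (x j)) (hlev (y j)) (hxy j).1
    rcases hij.eq_or_lt with he | hlt
    · rw [he]; exact hxyj
    by_contra hcon
    push Not at hcon
    have c1 := H.up_card hw y0 hcon.le
    have c2 := H.up_card hw y0 hxyj
    have c3 := H.up_eq y0 (le_antisymm c2 (by
      have : F j ≤ F i0 := by rw [hi0I, hjt]
      exact this.trans c1)) (hlev (x j)) (hlev (y j)) (hxy j).1 (hy' 0 j (Fin.zero_le j))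
    exact (hinc 0 j (lt_of_le_of_lt (Fin.zero_le i0) hlt)).1 c3
end

section
variable {α : Type*} [PartialOrder α]

theorem chain_enum [Fintype α] (X : Finset α) (hX : ∀ a ∈ X, ∀ b ∈ X, a ≤ b ∨ b ≤ a) :
    ∃ e : Fin X.card → α, StrictMono e ∧ ∀ i, e i ∈ X := by
  classical
  let ht : α → ℕ := fun v => (Finset.univ.filter (fun u => u ≤ v)).card
  have hmono : ∀ u v, u ≤ v → ht u ≤ ht v := by
    intro u v huv
    apply Finset.card_le_card
    intro l hl
    simp only [Finset.mem_filter, Finset.mem_univ, true_and] at hl ⊢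
    exact hl.trans huv
  have hlt : ∀ u ∈ X, ∀ v ∈ X, ht u < ht v → u < v := by
    intro u hu v hv huv
    rcases hX u hu v hv with h | h
    · exact lt_of_le_of_ne h (by rintro rfl; omega)
    · have := hmono _ _ h; omega
  have hinj : Set.InjOn ht X := by
    intro u hu v hv huv
    have key : ∀ u v, u ≤ v → ht u = ht v → u = v := by
      intro u v h1 h2
      have := Finset.eq_of_subset_of_card_le (s := Finset.univ.filter (fun t => t ≤ u))
        (t := Finset.univ.filter (fun t => t ≤ v)) (by
          intro l hl
          simp only [Finset.mem_filter, Finset.mem_univ, true_and] at hl ⊢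
          exact hl.trans h1) h2.ge
      have hv : v ∈ Finset.univ.filter (fun t => t ≤ u) := by rw [this]; simp
      simp at hv
      exact le_antisymm h1 hv
    rcases hX u hu v hv with h | h
    · exact key _ _ h huv
    · exact (key _ _ h huv.symm).symm
  have hcard : (X.image ht).card = X.card := Finset.card_image_of_injOn hinj
  let f := (X.image ht).orderEmbOfFin hcard
  have hf : ∀ i, ∃ v ∈ X, ht v = f i := by
    intro i
    exact Finset.mem_image.1 (Finset.orderEmbOfFin_mem _ hcard i)
  choose e he hef using hf
  refine ⟨e, ?_, he⟩
  intro i j hij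
  apply hlt _ (he i) _ (he j)
  rw [hef, hef]
  exact f.strictMono hij

theorem lfree_dual {m : ℕ} (H : LFree (fun a b : α => a ≤ b) m) :
    LFree (fun a b : αᵒᵈ => a ≤ b) m := by
  rintro ⟨x, y, hx, hy, hxy, hinc⟩
  apply H
  refine ⟨fun i => OrderDual.ofDual (y i.rev), fun i => OrderDual.ofDual (x i.rev), ?_, ?_, ?_, ?_⟩
  · intro i j hij
    have := hy _ _ (Fin.rev_lt_rev.2 hij)
    exact ⟨this.1, this.2.symm⟩
  · intro i j hij
    have := hx _ _ (Fin.rev_lt_rev.2 hij)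
    exact ⟨this.1, this.2.symm⟩
  · intro i
    have := hxy i.rev
    exact ⟨this.1, this.2.symm⟩
  · intro i j hij
    have := hinc _ _ (Fin.rev_lt_rev.2 hij)
    exact ⟨this.1, this.2⟩

open Classical in
theorem lo_count [Fintype α] {w m : ℕ} {c : α → Fin w} (hc : ∀ u v, c u = c v → u ≤ v ∨ v ≤ u)
    (hl : LFree (fun a b : α => a ≤ b) m) (k : Fin w) (X : Finset α)
    (hX : ∀ a ∈ X, ∀ b ∈ X, a ≤ b ∨ b ≤ a)
    (hnm : ∀ x ∈ X, ∀ x' ∈ X, ∀ d, c d = k → x' ≤ d → d ≤ x → False) :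
    (X.image (fun x => Finset.univ.filter (fun d => c d = k ∧ d ≤ x))).card ≤ m := by
  by_contra hcon
  push Not at hcon
  set Lo : α → Finset α := fun x => Finset.univ.filter (fun d => c d = k ∧ d ≤ x) with hLo
  have hm : ∀ d x, d ∈ Lo x ↔ c d = k ∧ d ≤ x := by intro d x; simp [hLo]
  obtain ⟨X', hX', hcard⟩ : ∃ X' ⊆ X, X'.card = (X.image Lo).card ∧ Set.InjOn Lo X' := by
    obtain ⟨X', h1, h2, h3⟩ := Finset.exists_subset_injOn_image_eq_of_surjOn (f := Lo) (X : Set α)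
      (X.image Lo) (by rw [Finset.coe_image]; exact Set.surjOn_image Lo X)
    exact ⟨X', by exact_mod_cast h1, by rw [← h3, Finset.card_image_of_injOn h2], h2⟩
  obtain ⟨hcard, hinj⟩ := hcard
  obtain ⟨e, he, heX⟩ := chain_enum X' (fun a ha b hb => hX a (hX' ha) b (hX' hb))
  have hlt : ∀ a : Fin m, a.val + 1 < X'.card := by intro a; omega
  let lo : Fin m → α := fun a => e ⟨a.val, by have := hlt a; omega⟩
  let hi : Fin m → α := fun a => e ⟨a.val + 1, hlt a⟩
  have hlohi : ∀ a, lo a < hi a := by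
    intro a; apply he; simp [Fin.lt_def]
  have hilo : ∀ a b, a < b → hi a ≤ lo b := by
    intro a b hab; apply he.monotone; rw [Fin.le_def]; simp; omega
  have hihi : ∀ a b, a < b → hi a < hi b := fun a b hab => (hilo a b hab).trans_lt (hlohi b)
  have hiX : ∀ a, hi a ∈ X := fun a => hX' (heX _)
  have hd : ∀ a : Fin m, ∃ d, c d = k ∧ d ≤ hi a ∧ ¬ d ≤ lo a := by
    intro a
    by_contra hno
    push Not at hno
    have : Lo (lo a) = Lo (hi a) := by
      ext d
      rw [hm, hm]
      constructor
      · rintro ⟨h1, h2⟩; exact ⟨h1, h2.trans (hlohi a).le⟩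
      · rintro ⟨h1, h2⟩; exact ⟨h1, hno d h1 h2⟩
    have := hinj (heX _) (heX _) this
    exact (hlohi a).ne this
  choose d hdk hdhi hdlo using hd
  apply hl
  have hnd : ∀ a b, a < b → ¬ d b ≤ hi a := fun a b hab h => hdlo b (h.trans (hilo a b hab))
  refine ⟨d, hi, ?_, ?_, ?_, ?_⟩
  · intro a b hab
    have h1 : ¬ d b ≤ d a := fun h => hnd a b hab (h.trans (hdhi a))
    refine ⟨(hc (d a) (d b) (by rw [hdk, hdk])).resolve_right h1, ?_⟩
    intro h; exact h1 h.ge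
  · intro a b hab
    exact ⟨(hihi a b hab).le, (hihi a b hab).ne⟩
  · intro a
    refine ⟨hdhi a, fun h => ?_⟩
    exact hnm _ (hiX a) _ (hiX a) (d a) (hdk a) h.ge h.le
  · intro a b hab
    refine ⟨fun h => ?_, hnd a b hab⟩
    exact hnm _ (hiX b) _ (hiX a) (d b) (hdk b) h (hdhi b)

open Classical in
theorem up_count [Fintype α] {w m : ℕ} {c : α → Fin w} (hc : ∀ u v, c u = c v → u ≤ v ∨ v ≤ u)
    (hl : LFree (fun a b : α => a ≤ b) m) (k : Fin w) (X : Finset α)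
    (hX : ∀ a ∈ X, ∀ b ∈ X, a ≤ b ∨ b ≤ a)
    (hnm : ∀ x ∈ X, ∀ x' ∈ X, ∀ d, c d = k → x' ≤ d → d ≤ x → False) :
    (X.image (fun x => Finset.univ.filter (fun d => c d = k ∧ x ≤ d))).card ≤ m :=
  lo_count (α := αᵒᵈ) (c := c) (fun u v h => (hc u v h).symm) (lfree_dual hl) k X
    (fun a ha b hb => (hX a ha b hb).symm)
    (fun x hx x' hx' d hd h1 h2 => hnm x' hx' x hx d hd h2 h1)

def SameK {w : ℕ} (c : α → Fin w) (k : Fin w) (u v : α) : Prop :=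
  ∀ d, c d = k → ((d ≤ u ↔ d ≤ v) ∧ (u ≤ d ↔ v ≤ d))

def NoMid {w : ℕ} (c : α → Fin w) (k : Fin w) (X : Finset α) : Prop :=
  ∀ x ∈ X, ∀ x' ∈ X, ∀ d, c d = k → x' ≤ d → d ≤ x → False

def GoodSet {w : ℕ} (c : α → Fin w) (g : α → ℕ) (B : Finset (Fin w)) (U : Finset α) : Prop :=
  Set.InjOn g U ∧ ∀ k, k ∉ B → ∀ u ∈ U, ∀ v ∈ U, SameK c k u v

theorem SameK.symm {w : ℕ} {c : α → Fin w} {k : Fin w} {u v : α} (h : SameK c k u v) :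
    SameK c k v u := fun d hd => ⟨(h d hd).1.symm, (h d hd).2.symm⟩

theorem SameK.trans {w : ℕ} {c : α → Fin w} {k : Fin w} {u v x : α} (h : SameK c k u v)
    (h' : SameK c k v x) : SameK c k u x :=
  fun d hd => ⟨(h d hd).1.trans (h' d hd).1, (h d hd).2.trans (h' d hd).2⟩

structure Ctx_s13 {w : ℕ} (c : α → Fin w) (g : α → ℕ) (m : ℕ) : Prop where
  lab : ∀ u v, c u = c v → u ≤ v ∨ v ≤ u
  lf : LFree (fun a b : α => a ≤ b) m
  m1 : 1 ≤ m
  col : ∀ u v, g u = g v → u ≤ v ∨ v ≤ u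
  pos : ∀ v, 1 ≤ g v
  wit : ∀ v i, 1 ≤ i → i < g v → ∃ u, (¬ u ≤ v ∧ ¬ v ≤ u) ∧ g u = i

theorem Ctx_s13.compress [Fintype α] {w m : ℕ} {c : α → Fin w} {g : α → ℕ} (H : Ctx_s13 c g m)
    (B : Finset (Fin w)) (X : Finset α) (s : ℕ)
    (hX : ∀ a ∈ X, ∀ b ∈ X, a ≤ b ∨ b ≤ a) (hg : Set.InjOn g X)
    (hk : ∀ k, k ∉ B → NoMid c k X ∨ ∀ x ∈ X, ∀ x' ∈ X, SameK c k x x')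
    (hs : (2 * m * w + 1) * s ≤ X.card) :
    ∃ X' ⊆ X, s ≤ X'.card ∧ GoodSet c g B X' := by
  classical
  let Lo : Fin w → α → Finset α := fun k x => Finset.univ.filter (fun d => c d = k ∧ d ≤ x)
  let Up : Fin w → α → Finset α := fun k x => Finset.univ.filter (fun d => c d = k ∧ x ≤ d)
  have hm : ∀ k d x, d ∈ Lo k x ↔ c d = k ∧ d ≤ x := by intro k d x; simp [Lo]
  have hm' : ∀ k d x, d ∈ Up k x ↔ c d = k ∧ x ≤ d := by intro k d x; simp [Up]
  have cLo : ∀ k, k ∉ B → (X.image (Lo k)).card ≤ m := by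
    intro k hkB
    rcases hk k hkB with h | h
    · exact lo_count H.lab H.lf k X hX h
    · refine le_trans (Finset.card_le_one.2 ?_) H.m1
      intro a ha b hb
      rw [Finset.mem_image] at ha hb
      obtain ⟨x, hx, rfl⟩ := ha
      obtain ⟨y, hy, rfl⟩ := hb
      ext d
      rw [hm, hm]
      exact and_congr_right fun hd => (h x hx y hy d hd).1
  have cUp : ∀ k, k ∉ B → (X.image (Up k)).card ≤ m := by
    intro k hkB
    rcases hk k hkB with h | h
    · exact up_count H.lab H.lf k X hX h
    · refine le_trans (Finset.card_le_one.2 ?_) H.m1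
      intro a ha b hb
      rw [Finset.mem_image] at ha hb
      obtain ⟨x, hx, rfl⟩ := ha
      obtain ⟨y, hy, rfl⟩ := hb
      ext d
      rw [hm', hm']
      exact and_congr_right fun hd => (h x hx y hy d hd).2
  let D : α → Finset α := fun x => X.filter (fun y => y ≤ x)
  have hD : ∀ x x', x ≤ x' → D x ⊆ D x' := by
    intro x x' h y hy
    rw [Finset.mem_filter] at hy ⊢
    exact ⟨hy.1, hy.2.trans h⟩
  let F : Fin w → α → ℕ := fun k x => ((D x).image (Lo k)).card + ((D x).image (Up k)).card
  have hFm : ∀ k x x', x ≤ x' → F k x ≤ F k x' := by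
    intro k x x' h
    exact add_le_add (Finset.card_le_card (Finset.image_subset_image (hD _ _ h)))
      (Finset.card_le_card (Finset.image_subset_image (hD _ _ h)))
  let rho : α → ℕ := fun x => ∑ k ∈ Bᶜ, F k x
  have hrho : ∀ x ∈ X, rho x ∈ Finset.range (2 * m * w + 1) := by
    intro x _
    rw [Finset.mem_range, Nat.lt_succ_iff]
    calc rho x ≤ ∑ k ∈ Bᶜ, 2 * m := by
          apply Finset.sum_le_sum
          intro k hk
          rw [Finset.mem_compl] at hk
          have h1 := cLo k hk
          have h2 := cUp k hk
          have h3 := Finset.card_le_card (Finset.image_subset_image (f := Lo k)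
            (Finset.filter_subset (fun y => y ≤ x) X))
          have h4 := Finset.card_le_card (Finset.image_subset_image (f := Up k)
            (Finset.filter_subset (fun y => y ≤ x) X))
          simp only [F, D]
          omega
      _ = Bᶜ.card * (2 * m) := by simp
      _ ≤ w * (2 * m) := by
          apply Nat.mul_le_mul_right
          simpa using Finset.card_le_univ Bᶜ
      _ = 2 * m * w := by ring
  obtain ⟨t, -, ht⟩ := Finset.exists_le_card_fiber_of_mul_le_card_of_maps_to (n := s) hrho
    (by simp) (by simpa using hs)
  refine ⟨X.filter (fun x => rho x = t), Finset.filter_subset _ _, ht, ?_, ?_⟩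
  · exact hg.mono (by intro v hv; simp at hv; exact hv.1)
  · have key : ∀ k, k ∉ B → ∀ u ∈ X, ∀ v ∈ X, rho u = rho v → u ≤ v → SameK c k u v := by
      intro k hkB u hu v hv huv hle
      have hF : F k u = F k v := by
        have := (Finset.sum_eq_sum_iff_of_le (s := Bᶜ) (fun i _ => hFm i u v hle)).1 huv
        exact this k (Finset.mem_compl.2 hkB)
      have s1 := Finset.image_subset_image (f := Lo k) (hD _ _ hle)
      have s2 := Finset.image_subset_image (f := Up k) (hD _ _ hle)
      have k1 := Finset.card_le_card s1
      have k2 := Finset.card_le_card s2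
      simp only [F] at hF
      have e1 := Finset.eq_of_subset_of_card_le s1 (by omega)
      have e2 := Finset.eq_of_subset_of_card_le s2 (by omega)
      have hvD : v ∈ D v := Finset.mem_filter.2 ⟨hv, le_rfl⟩
      have m1 : Lo k v ∈ (D u).image (Lo k) := by
        rw [e1]; exact Finset.mem_image_of_mem _ hvD
      have m2 : Up k v ∈ (D u).image (Up k) := by
        rw [e2]; exact Finset.mem_image_of_mem _ hvD
      rw [Finset.mem_image] at m1 m2
      obtain ⟨x, hx, hxe⟩ := m1
      obtain ⟨y, hy, hye⟩ := m2
      rw [Finset.mem_filter] at hx hy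
      intro d hd
      refine ⟨⟨fun h => h.trans hle, fun h => ?_⟩, ⟨fun h => ?_, fun h => hle.trans h⟩⟩
      · have : d ∈ Lo k x := by rw [hxe, hm]; exact ⟨hd, h⟩
        exact ((hm _ _ _).1 this).2.trans hx.2
      · have : d ∈ Up k y := by rw [hm']; exact ⟨hd, hy.2.trans h⟩
        rw [hye, hm'] at this
        exact this.2
    intro k hkB u hu v hv
    rw [Finset.mem_filter] at hu hv
    rcases hX u hu.1 v hv.1 with h | h
    · exact key k hkB u hu.1 v hv.1 (hu.2.trans hv.2.symm) h
    · exact (key k hkB v hv.1 u hu.1 (hv.2.trans hu.2.symm) h).symm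
end

section
variable {α : Type*} [PartialOrder α]

theorem Ctx_s13.final {w m : ℕ} {c : α → Fin w} {g : α → ℕ} (H : Ctx_s13 c g m)
    (B : Finset (Fin w)) (U : Finset α) (hG : GoodSet c g B U) (hB : B.card ≤ 1) :
    U.card ≤ 1 := by
  have key : ∀ u ∈ U, ∀ u' ∈ U, g u < g u' → False := by
    intro u hu u' hu' hlt
    obtain ⟨z, ⟨hz1, hz2⟩, hzg⟩ := H.wit u' (g u) (H.pos u) hlt
    have h1 : c z ∈ B := by
      by_contra hn
      have := hG.2 _ hn u hu u' hu' z rfl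
      rcases H.col z u hzg with h | h
      · exact hz1 (this.1.1 h)
      · exact hz2 (this.2.1 h)
    have h2 : c u' ∈ B := by
      by_contra hn
      have := hG.2 _ hn u hu u' hu' u' rfl
      have := le_antisymm (this.1.2 le_rfl) (this.2.2 le_rfl)
      subst this
      omega
    have := Finset.card_le_one.1 hB _ h1 _ h2
    rcases H.lab z u' this with h | h
    · exact hz1 h
    · exact hz2 h
  rw [Finset.card_le_one]
  intro a ha b hb
  by_contra hne
  have : g a ≠ g b := fun h => hne (hG.1 ha hb h)
  rcases lt_or_gt_of_ne this with h | h
  · exact key a ha b hb h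
  · exact key b hb a ha h

theorem Ctx_s13.cover [Fintype α] {w m : ℕ} {c : α → Fin w} {g : α → ℕ} (H : Ctx_s13 c g m)
    (B M : Finset (Fin w)) (s : ℕ) (u0 a b : α)
    (ha : ∀ k, k ∉ B → SameK c k a u0) (hb : ∀ k, k ∉ B → SameK c k b u0)
    (hM : ∀ k ∈ M, ∃ d, c d = k ∧ a ≤ d ∧ d ≤ b)
    (S : Finset ℕ) (hS : 2 * w * ((2 * m * w + 1) * s) ≤ S.card)
    (hz : ∀ i ∈ S, ∃ z, g z = i ∧ (¬ z ≤ a ∧ ¬ a ≤ z) ∧ (¬ z ≤ b ∧ ¬ b ≤ z))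
    (hv : ∀ i ∈ S, ∃ v, g v = i ∧ ∀ k, k ∉ B → SameK c k v u0) :
    ∃ X' : Finset α, s ≤ X'.card ∧ GoodSet c g (B \ M) X' := by
  classical
  have : Nonempty α := ⟨a⟩
  choose! z hzg hza hzb using hz
  choose! v hvg hvs using hv
  have hw : 0 < w := (c a).pos
  have : Nonempty (Fin w) := ⟨c a⟩
  obtain ⟨⟨t, j⟩, -, hL⟩ := Finset.exists_le_card_fiber_of_mul_le_card_of_maps_to
    (s := S) (t := (Finset.univ : Finset (Bool × Fin w)))
    (f := fun i => (decide (z i ≤ v i), c (z i))) (n := (2 * m * w + 1) * s)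
    (fun i _ => Finset.mem_univ _) Finset.univ_nonempty (by simpa using hS)
  set L := S.filter (fun i => (decide (z i ≤ v i), c (z i)) = (t, j)) with hLdef
  have hLm : ∀ i, i ∈ L ↔ i ∈ S ∧ (decide (z i ≤ v i) = t ∧ c (z i) = j) := by
    intro i; rw [hLdef, Finset.mem_filter, Prod.mk.injEq]
  have hzinj : Set.InjOn z L := by
    intro i hi i' hi' h
    have h1 := hzg i ((hLm i).1 hi).1
    have h2 := hzg i' ((hLm i').1 hi').1
    rw [← h1, ← h2, h]
  have hcomp := H.compress (B \ M) (L.image z) s ?_ ?_ ?_ ?_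
  · obtain ⟨X', -, h1, h2⟩ := hcomp
    exact ⟨X', h1, h2⟩
  · intro x hx y hy
    rw [Finset.mem_image] at hx hy
    obtain ⟨i, hi, rfl⟩ := hx
    obtain ⟨i', hi', rfl⟩ := hy
    rw [hLm] at hi hi'
    exact H.lab _ _ (hi.2.2.trans hi'.2.2.symm)
  · intro x hx y hy hxy
    rw [Finset.mem_coe, Finset.mem_image] at hx hy
    obtain ⟨i, hi, rfl⟩ := hx
    obtain ⟨i', hi', rfl⟩ := hy
    rw [hLm] at hi hi'
    rw [hzg i hi.1, hzg i' hi'.1] at hxy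
    rw [hxy]
  · intro k hk
    left
    intro x hx x' hx' d hd hx'd hdx
    rw [Finset.mem_image] at hx hx'
    obtain ⟨i, hi, rfl⟩ := hx
    obtain ⟨i', hi', rfl⟩ := hx'
    rw [hLm] at hi hi'
    by_cases hkM : k ∈ M
    · obtain ⟨d0, hd0, h1, h2⟩ := hM k hkM
      rcases H.lab d d0 (hd.trans hd0.symm) with h | h
      · exact (hzb i' hi'.1).1 (hx'd.trans (h.trans h2))
      · exact (hza i hi.1).2 (h1.trans (h.trans hdx))
    · have hkB : k ∉ B := fun h => hk (Finset.mem_sdiff.2 ⟨h, hkM⟩)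
      have hsi := (hvs i hi.1 k hkB).trans (ha k hkB).symm
      have hsi' := (hvs i' hi'.1 k hkB).trans (ha k hkB).symm
      by_cases ht : z i ≤ v i
      · exact (hza i' hi'.1).1 (hx'd.trans ((hsi d hd).1.1 (hdx.trans ht)))
      · have ht' : ¬ z i' ≤ v i' := by
          have e := hi.2.1.trans hi'.2.1.symm
          intro h
          apply ht
          simpa [h] using e
        have hvz : v i' ≤ z i' := (H.col (z i') (v i')
          ((hzg i' hi'.1).trans (hvg i' hi'.1).symm)).resolve_left ht'
        exact (hza i hi.1).2 (((hsi' d hd).2.1 (hvz.trans hx'd)).trans hdx)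
  · rw [Finset.card_image_of_injOn hzinj]; exact hL

theorem exists_top (T : Finset ℕ) : ∀ r, r ≤ T.card → ∃ T1 ⊆ T, T1.card = r ∧
    ∀ i ∈ T \ T1, ∀ j ∈ T1, i < j := by
  intro r
  induction r with
  | zero => intro _; exact ⟨∅, by simp, by simp, by simp⟩
  | succ r ih =>
    intro hr
    obtain ⟨T1, h1, h2, h3⟩ := ih (by omega)
    have hne : (T \ T1).Nonempty := by
      rw [← Finset.card_pos, Finset.card_sdiff_of_subset h1]; omega
    set M := (T \ T1).max' hne with hM
    have hMm : M ∈ T \ T1 := Finset.max'_mem _ _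
    have hMm' := Finset.mem_sdiff.1 hMm
    refine ⟨insert M T1, ?_, ?_, ?_⟩
    · intro x hx
      rw [Finset.mem_insert] at hx
      rcases hx with rfl | hx
      · exact hMm'.1
      · exact h1 hx
    · rw [Finset.card_insert_of_notMem hMm'.2, h2]
    · intro i hi j hj
      rw [Finset.mem_sdiff, Finset.mem_insert, not_or] at hi
      have hi' : i ∈ T \ T1 := Finset.mem_sdiff.2 ⟨hi.1, hi.2.2⟩
      rw [Finset.mem_insert] at hj
      rcases hj with rfl | hj
      · exact lt_of_le_of_ne (Finset.le_max' _ _ hi') hi.2.1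
      · exact h3 i hi' j hj

theorem chain_split [Fintype α] [DecidableLE α] (Y : Finset α)
    (hY : ∀ a ∈ Y, ∀ b ∈ Y, a ≤ b ∨ b ≤ a)
    (q : ℕ) (hq : 1 ≤ q) (hc : 2 * q ≤ Y.card) :
    ∃ y0 ∈ Y, ∃ p ∈ Y, ∃ y2 ∈ Y, y0 < p ∧ p ≤ y2 ∧
      q ≤ (Y.filter (fun y => y0 ≤ y ∧ y ≤ p)).card ∧
      q ≤ (Y.filter (fun y => p ≤ y ∧ y ≤ y2)).card := by
  classical
  obtain ⟨e, he, heY⟩ := chain_enum Y hY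
  let i0 : Fin Y.card := ⟨0, by omega⟩
  let i1 : Fin Y.card := ⟨q, by omega⟩
  let i2 : Fin Y.card := ⟨Y.card - 1, by omega⟩
  have cnt : ∀ a b : Fin Y.card, b.val + 1 - a.val ≤
      (Y.filter (fun y => e a ≤ y ∧ y ≤ e b)).card := by
    intro a b
    rw [← Fin.card_Icc a b, ← Finset.card_image_of_injective _ he.injective]
    apply Finset.card_le_card
    intro y hy
    rw [Finset.mem_image] at hy
    obtain ⟨i, hi, rfl⟩ := hy
    rw [Finset.mem_Icc] at hi
    rw [Finset.mem_filter]
    exact ⟨heY i, he.monotone hi.1, he.monotone hi.2⟩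
  refine ⟨e i0, heY _, e i1, heY _, e i2, heY _, he ?_, he.monotone ?_, ?_, ?_⟩
  · rw [Fin.lt_def]; simp [i0, i1]; omega
  · rw [Fin.le_def]; simp [i1, i2]; omega
  · refine le_trans ?_ (cnt i0 i1); simp [i0, i1]
  · refine le_trans ?_ (cnt i1 i2); simp [i1, i2]; omega

theorem Ctx_s13.inner_core [Fintype α] {w m : ℕ} {c : α → Fin w} {g : α → ℕ} (H : Ctx_s13 c g m)
    (B : Finset (Fin w)) (s : ℕ) (hs : 1 ≤ s) (u0 : α) (Ap : Finset α) (T : Finset ℕ)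
    (hApi : Set.InjOn c Ap) (hApB : ∀ p ∈ Ap, c p ∈ B)
    (hT : ∀ i ∈ T, ∃ v, g v = i ∧ (∀ k, k ∉ B → SameK c k v u0) ∧ ∀ p ∈ Ap, ¬ v ≤ p ∧ ¬ p ≤ v)
    (hTc : 2 * w * ((2 * m * w + 1) * s) ≤ T.card) :
    (∃ B' U', GoodSet c g B' U' ∧ 2 * B'.card ≤ B.card ∧ s ≤ U'.card) ∨
    (2 * Ap.card < B.card ∧ ∃ (Ap' : Finset α) (T' : Finset ℕ), Ap'.card = Ap.card + 1 ∧
      Set.InjOn c Ap' ∧ (∀ p ∈ Ap', c p ∈ B) ∧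
      (∀ i ∈ T', ∃ v, g v = i ∧ (∀ k, k ∉ B → SameK c k v u0) ∧
        ∀ p ∈ Ap', ¬ v ≤ p ∧ ¬ p ≤ v) ∧
      T.card ≤ T'.card + 6 * w * ((2 * m * w + 1) * s)) := by
  classical
  set q := (2 * m * w + 1) * s with hq
  have hq1 : 1 ≤ q := Nat.mul_pos (by omega) hs
  obtain ⟨T1, hT1T, hT1c, hT1lt⟩ := exists_top T _ hTc
  have : Nonempty α := ⟨u0⟩
  have : Nonempty (Fin w) := ⟨c u0⟩
  have hT' := hT
  choose! v hvg hvs hvA using hT'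
  obtain ⟨j, -, hL⟩ := Finset.exists_le_card_fiber_of_mul_le_card_of_maps_to
    (s := T1) (t := (Finset.univ : Finset (Fin w)))
    (f := fun i => c (v i)) (n := 2 * q)
    (fun i _ => Finset.mem_univ _) Finset.univ_nonempty (by simp [hT1c]; nlinarith)
  set L := T1.filter (fun i => c (v i) = j) with hLdef
  have hLm : ∀ i, i ∈ L ↔ i ∈ T1 ∧ c (v i) = j := by
    intro i; rw [hLdef, Finset.mem_filter]
  set Y := L.image v with hYdef
  have hvinj : Set.InjOn v L := by
    intro i hi i' hi' h
    have h1 := hvg i (hT1T ((hLm i).1 hi).1)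
    have h2 := hvg i' (hT1T ((hLm i').1 hi').1)
    rw [← h1, ← h2, h]
  have hYc : 2 * q ≤ Y.card := by rw [hYdef, Finset.card_image_of_injOn hvinj]; exact hL
  have hYp : ∀ y ∈ Y, g y ∈ T1 ∧ c y = j ∧ (∀ k, k ∉ B → SameK c k y u0) ∧
      ∀ p ∈ Ap, ¬ y ≤ p ∧ ¬ p ≤ y := by
    intro y hy
    rw [hYdef, Finset.mem_image] at hy
    obtain ⟨i, hi, rfl⟩ := hy
    rw [hLm] at hi
    have hiT := hT1T hi.1
    exact ⟨by rw [hvg i hiT]; exact hi.1, hi.2, hvs i hiT, hvA i hiT⟩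
  have hYg : Set.InjOn g Y := by
    intro x hx y hy hxy
    rw [Finset.mem_coe, hYdef, Finset.mem_image] at hx hy
    obtain ⟨i, hi, rfl⟩ := hx
    obtain ⟨i', hi', rfl⟩ := hy
    rw [hLm] at hi hi'
    rw [hvg i (hT1T hi.1), hvg i' (hT1T hi'.1)] at hxy
    rw [hxy]
  have hYch : ∀ a ∈ Y, ∀ b ∈ Y, a ≤ b ∨ b ≤ a := fun a ha b hb =>
    H.lab _ _ ((hYp a ha).2.1.trans (hYp b hb).2.1.symm)
  obtain ⟨y0, hy0, p, hp, y2, hy2, h0p, hp2, hc1, hc2⟩ := chain_split Y hYch q hq1 hYc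
  have hjB : j ∈ B := by
    by_contra hj
    have := ((hYp y0 hy0).2.2.1 j hj).trans ((hYp p hp).2.2.1 j hj).symm
    exact h0p.not_ge ((this p (hYp p hp).2.1).1.2 le_rfl)
  have hw : 0 < w := (c u0).pos
  let M : α → α → Finset (Fin w) := fun a b =>
    Finset.univ.filter (fun k => ∃ d, c d = k ∧ a ≤ d ∧ d ≤ b)
  have hMm : ∀ a b k, k ∈ M a b ↔ ∃ d, c d = k ∧ a ≤ d ∧ d ≤ b := by intro a b k; simp [M]
  have hMB : ∀ a ∈ Y, ∀ b ∈ Y, M a b ⊆ B \ Ap.image c := by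
    intro a ha b hb k hk
    rw [hMm] at hk
    obtain ⟨d, hd, had, hdb⟩ := hk
    rw [Finset.mem_sdiff, Finset.mem_image]
    refine ⟨?_, ?_⟩
    · by_contra hkB
      have := ((hYp a ha).2.2.1 k hkB).trans ((hYp b hb).2.2.1 k hkB).symm
      have h1 := le_antisymm had ((this d hd).1.2 hdb)
      subst h1
      rw [(hYp a ha).2.1] at hd
      exact hkB (hd ▸ hjB)
    · rintro ⟨r, hr, hrk⟩
      rcases H.lab d r (hd.trans hrk.symm) with h | h
      · exact ((hYp a ha).2.2.2 r hr).1 (had.trans h)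
      · exact ((hYp b hb).2.2.2 r hr).2 (h.trans hdb)
  have hAc : (Ap.image c).card = Ap.card := Finset.card_image_of_injOn hApi
  have hAs : Ap.image c ⊆ B := by
    intro k hk
    rw [Finset.mem_image] at hk
    obtain ⟨r, hr, rfl⟩ := hk
    exact hApB r hr
  -- either a good piece, or the two-point pair has few doubly incomparable colours
  have piece : ∀ a ∈ Y, ∀ b ∈ Y, q ≤ (Y.filter (fun y => a ≤ y ∧ y ≤ b)).card →
      2 * (M a b).card ≤ B.card →
      (∃ B' U', GoodSet c g B' U' ∧ 2 * B'.card ≤ B.card ∧ s ≤ U'.card) := by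
    intro a ha b hb hcab hM
    obtain ⟨X', -, h1, h2⟩ := H.compress (M a b) (Y.filter (fun y => a ≤ y ∧ y ≤ b)) s
      (fun x hx y hy => hYch x (Finset.mem_filter.1 hx).1 y (Finset.mem_filter.1 hy).1)
      (hYg.mono (by intro v hv; simp at hv; exact hv.1))
      (fun k hk => Or.inl (by
        intro x hx x' hx' d hd h1 h2
        rw [Finset.mem_filter] at hx hx'
        apply hk
        rw [hMm]
        exact ⟨d, hd, hx'.2.1.trans h1, h2.trans hx.2.2⟩)) hcab
    exact ⟨M a b, X', h2, hM, h1⟩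
  let S : α → α → Finset ℕ := fun a b => (T \ T1).filter (fun i =>
    ∃ z, g z = i ∧ (¬ z ≤ a ∧ ¬ a ≤ z) ∧ (¬ z ≤ b ∧ ¬ b ≤ z))
  have cov : ∀ a ∈ Y, ∀ b ∈ Y, B.card < 2 * (M a b).card → 2 * w * q ≤ (S a b).card →
      (∃ B' U', GoodSet c g B' U' ∧ 2 * B'.card ≤ B.card ∧ s ≤ U'.card) := by
    intro a ha b hb hM hS
    obtain ⟨X', h1, h2⟩ := H.cover B (M a b) s u0 a b (hYp a ha).2.2.1 (hYp b hb).2.2.1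
      (fun k hk => (hMm _ _ _).1 hk) (S a b) hS (fun i hi => (Finset.mem_filter.1 hi).2)
      (fun i hi => by
        have := (Finset.mem_sdiff.1 (Finset.mem_filter.1 hi).1).1
        exact ⟨v i, hvg i this, hvs i this⟩)
    refine ⟨_, X', h2, ?_, h1⟩
    rw [Finset.card_sdiff_of_subset ((hMB a ha b hb).trans Finset.sdiff_subset)]
    omega
  by_cases hM1 : 2 * (M y0 p).card ≤ B.card
  · exact Or.inl (piece y0 hy0 p hp hc1 hM1)
  by_cases hM2 : 2 * (M p y2).card ≤ B.card
  · exact Or.inl (piece p hp y2 hy2 hc2 hM2)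
  by_cases hS1 : 2 * w * q ≤ (S y0 p).card
  · exact Or.inl (cov y0 hy0 p hp (by omega) hS1)
  by_cases hS2 : 2 * w * q ≤ (S p y2).card
  · exact Or.inl (cov p hp y2 hy2 (by omega) hS2)
  right
  have hpA : p ∉ Ap := fun h => ((hYp p hp).2.2.2 p h).1 le_rfl
  refine ⟨?_, insert p Ap, (T \ T1) \ (S y0 p ∪ S p y2), ?_, ?_, ?_, ?_, ?_⟩
  · have h1 := Finset.card_le_card (hMB y0 hy0 p hp)
    rw [Finset.card_sdiff_of_subset hAs, hAc] at h1
    omega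
  · exact Finset.card_insert_of_notMem hpA
  · rw [Finset.coe_insert, Set.injOn_insert (by simpa using hpA)]
    refine ⟨hApi, ?_⟩
    rintro ⟨r, hr, hrp⟩
    have hn := (hYp p hp).2.2.2 r hr
    rcases H.lab r p hrp with h | h
    · exact hn.2 h
    · exact hn.1 h
  · intro r hr
    rw [Finset.mem_insert] at hr
    rcases hr with rfl | hr
    · rw [(hYp r hp).2.1]; exact hjB
    · exact hApB r hr
  · intro i hi
    rw [Finset.mem_sdiff, Finset.mem_union, not_or] at hi
    obtain ⟨hiT, hi1, hi2⟩ := hi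
    have hlt : i < g p := hT1lt i hiT _ (hYp p hp).1
    have hipos : 1 ≤ i := by
      rw [← hvg i (Finset.mem_sdiff.1 hiT).1]; exact H.pos _
    obtain ⟨z, hzp, hzi⟩ := H.wit p i hipos hlt
    have h0z : y0 ≤ z := by
      by_contra hn
      apply hi1
      rw [Finset.mem_filter]
      exact ⟨hiT, z, hzi, ⟨fun h => hzp.1 (h.trans h0p.le), hn⟩, hzp⟩
    have hz2 : z ≤ y2 := by
      by_contra hn
      apply hi2
      rw [Finset.mem_filter]
      exact ⟨hiT, z, hzi, hzp, ⟨hn, fun h => hzp.2 (hp2.trans h)⟩⟩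
    refine ⟨z, hzi, ?_, ?_⟩
    · intro k hk d hd
      have e0 := (hYp y0 hy0).2.2.1 k hk d hd
      have e2 := (hYp y2 hy2).2.2.1 k hk d hd
      exact ⟨⟨fun h => e2.1.1 (h.trans hz2), fun h => (e0.1.2 h).trans h0z⟩,
        ⟨fun h => e0.2.1 (h0z.trans h), fun h => hz2.trans (e2.2.2 h)⟩⟩
    · intro r hr
      rw [Finset.mem_insert] at hr
      rcases hr with rfl | hr
      · exact hzp
      · exact ⟨fun h => ((hYp y0 hy0).2.2.2 r hr).1 (h0z.trans h),
          fun h => ((hYp y2 hy2).2.2.2 r hr).2 (h.trans hz2)⟩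
  · have h1 := Finset.le_card_sdiff (S y0 p ∪ S p y2) (T \ T1)
    have h2 := Finset.card_union_le (S y0 p) (S p y2)
    rw [Finset.card_sdiff_of_subset hT1T, hT1c] at h1
    have e : 6 * w * q = 2 * w * q + 2 * w * q + 2 * w * q := by ring
    omega

theorem Ctx_s13.inner [Fintype α] {w m : ℕ} {c : α → Fin w} {g : α → ℕ} (H : Ctx_s13 c g m)
    (B : Finset (Fin w)) (s : ℕ) (hs : 1 ≤ s) (u0 : α) : ∀ (n' : ℕ) (Ap : Finset α) (T : Finset ℕ),
    Set.InjOn c Ap → (∀ p ∈ Ap, c p ∈ B) →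
    (∀ i ∈ T, ∃ v, g v = i ∧ (∀ k, k ∉ B → SameK c k v u0) ∧ ∀ p ∈ Ap, ¬ v ≤ p ∧ ¬ p ≤ v) →
    B.card ≤ 2 * (Ap.card + n') →
    n' * (6 * w * ((2 * m * w + 1) * s)) + 2 * w * ((2 * m * w + 1) * s) ≤ T.card →
    ∃ B' U', GoodSet c g B' U' ∧ 2 * B'.card ≤ B.card ∧ s ≤ U'.card := by
  intro n'
  induction n' with
  | zero =>
    intro Ap T h1 h2 h3 h4 h5
    rcases H.inner_core B s hs u0 Ap T h1 h2 h3 (by omega) with h | ⟨h, -⟩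
    · exact h
    · omega
  | succ n' ih =>
    intro Ap T h1 h2 h3 h4 h5
    rcases H.inner_core B s hs u0 Ap T h1 h2 h3 (by omega) with h | ⟨-, Ap', T', e, k1, k2, k3, k4⟩
    · exact h
    · rw [Nat.succ_mul] at h5
      exact ih Ap' T' k1 k2 k3 (by omega) (by omega)

theorem Ctx_s13.step [Fintype α] {w m : ℕ} {c : α → Fin w} {g : α → ℕ} (H : Ctx_s13 c g m) (hw : 1 ≤ w)
    (B : Finset (Fin w)) (U : Finset α) (hG : GoodSet c g B U) (s : ℕ) (hs : 1 ≤ s)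
    (hU : (3 * w ^ 2 + 5 * w) * (2 * m * w + 1) * s ≤ U.card) :
    ∃ B' U', GoodSet c g B' U' ∧ 2 * B'.card ≤ B.card ∧ s ≤ U'.card := by
  classical
  have hne : U.Nonempty := by
    rw [← Finset.card_pos]
    refine lt_of_lt_of_le ?_ hU
    have : 0 < w := hw
    positivity
  obtain ⟨u0, hu0⟩ := hne
  have hBw : B.card ≤ w := by simpa using Finset.card_le_univ B
  apply H.inner B s hs u0 ((B.card + 1) / 2) ∅ (U.image g) (by simp) (by simp)
  · intro i hi
    rw [Finset.mem_image] at hi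
    obtain ⟨u, hu, rfl⟩ := hi
    exact ⟨u, rfl, fun k hk => hG.2 k hk u hu u0 hu0, by simp⟩
  · simp; omega
  · rw [Finset.card_image_of_injOn hG.1]
    refine le_trans ?_ hU
    have h1 : 2 * ((B.card + 1) / 2) ≤ w + 1 := by omega
    generalize (B.card + 1) / 2 = n' at h1
    generalize (2 * m * w + 1) = Q
    have h2 : n' * (6 * w * (Q * s)) = (2 * n') * (3 * w * (Q * s)) := by ring
    rw [h2]
    calc _ ≤ (w + 1) * (3 * w * (Q * s)) + 2 * w * (Q * s) := by gcongr
      _ = _ := by ring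

theorem Ctx_s13.iterate [Fintype α] {w m : ℕ} {c : α → Fin w} {g : α → ℕ} (H : Ctx_s13 c g m) (hw : 1 ≤ w) :
    ∀ (r : ℕ) (B : Finset (Fin w)) (U : Finset α), B.card < 2 ^ (r + 1) → GoodSet c g B U →
    U.card < 2 * ((3 * w ^ 2 + 5 * w) * (2 * m * w + 1)) ^ r := by
  intro r
  induction r with
  | zero =>
    intro B U hB hG
    have := H.final B U hG (by simpa [Nat.lt_succ_iff] using hB)
    simp; omega
  | succ r ih =>
    intro B U hB hG
    by_contra hcon
    push Not at hcon
    obtain ⟨B', U', h1, h2, h3⟩ := H.step hw B U hG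
      (2 * ((3 * w ^ 2 + 5 * w) * (2 * m * w + 1)) ^ r) (by
        have : 0 < w := hw
        have : 0 < 2 * ((3 * w ^ 2 + 5 * w) * (2 * m * w + 1)) ^ r := by positivity
        exact this) (by
        refine le_trans (le_of_eq ?_) hcon
        ring)
    have := ih B' U' (by rw [pow_succ] at hB; omega) h1
    omega

theorem Ctx_s13.bound [Fintype α] {w m : ℕ} {c : α → Fin w} {g : α → ℕ} (H : Ctx_s13 c g m) (hw : 1 ≤ w)
    (N : ℕ) (hN : ∀ i, 1 ≤ i → i ≤ N → ∃ v, g v = i) :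
    N < 2 * ((3 * w ^ 2 + 5 * w) * (2 * m * w + 1)) ^ (Nat.log 2 w) := by
  classical
  have hN' : ∀ i ∈ Finset.Icc 1 N, ∃ v, g v = i := by
    intro i hi
    rw [Finset.mem_Icc] at hi
    exact hN i hi.1 hi.2
  rcases Nat.eq_zero_or_pos N with rfl | hpos
  · have : 0 < w := hw
    positivity
  obtain ⟨v0, -⟩ := hN 1 le_rfl hpos
  have : Nonempty α := ⟨v0⟩
  choose! f hf using hN'
  have hinj : Set.InjOn f (Finset.Icc 1 N) := by
    intro i hi j hj hij
    rw [← hf i hi, ← hf j hj, hij]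
  have := H.iterate hw (Nat.log 2 w) Finset.univ ((Finset.Icc 1 N).image f)
    (by simpa using Nat.lt_pow_succ_log_self (by norm_num) w) ?_
  · rwa [Finset.card_image_of_injOn hinj, Nat.card_Icc, Nat.add_sub_cancel] at this
  · refine ⟨?_, by simp⟩
    intro x hx y hy hxy
    rw [Finset.mem_coe, Finset.mem_image] at hx hy
    obtain ⟨i, hi, rfl⟩ := hx
    obtain ⟨j, hj, rfl⟩ := hy
    rw [hf i hi, hf j hj] at hxy
    rw [hxy]
end

theorem poly_bound (w : ℕ) (hw : 3 ≤ w) :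
    ((3 * (w : ℝ) ^ 2 + 5 * w) * (2 * (2 * (w : ℝ) ^ 2 + 1) * w + 1)) ^ 2 ≤
      (w : ℝ) ^ 5 * (2 * (w : ℝ) ^ 2 + 1) ^ 4 := by
  obtain ⟨t, rfl⟩ := Nat.exists_eq_add_of_le hw
  rw [← sub_nonneg]
  push_cast
  have ht : (0 : ℝ) ≤ t := Nat.cast_nonneg t
  generalize (t : ℝ) = x at ht
  ring_nf
  positivity

theorem numeric (w N : ℕ) (hw : 1 ≤ w)
    (h : N < 2 * ((3 * w ^ 2 + 5 * w) * (2 * (2 * w ^ 2 + 1) * w + 1)) ^ (Nat.log 2 w)) :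
    (N : ℝ) ≤ (w : ℝ) ^
      (2.5 * Real.logb 2 (2 * (w : ℝ)) +
        2 * Real.logb 2 (2 * (w : ℝ) ^ 2 + 1)) := by
  have hw0 : (0 : ℝ) < w := by exact_mod_cast hw
  have hw1 : (1 : ℝ) ≤ w := by exact_mod_cast hw
  set M : ℝ := 2 * (w : ℝ) ^ 2 + 1 with hM
  have hM0 : 0 < M := by positivity
  have hM1 : 1 ≤ M := by rw [hM]; nlinarith
  set L := Real.logb 2 (w : ℝ) with hL
  have hswap : (w : ℝ) ^ (2 * Real.logb 2 M) = (M ^ (2 : ℝ)) ^ L := by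
    have e1 : (w : ℝ) = (2 : ℝ) ^ L := (Real.rpow_logb (by norm_num) (by norm_num) hw0).symm
    have e2 : M = (2 : ℝ) ^ Real.logb 2 M :=
      (Real.rpow_logb (by norm_num) (by norm_num) hM0).symm
    generalize Real.logb 2 M = K at *
    rw [e1, e2, ← Real.rpow_mul (by positivity), ← Real.rpow_mul (by positivity),
      ← Real.rpow_mul (by positivity)]
    congr 1
    ring
  have hrhs : (w : ℝ) ^ (2.5 * Real.logb 2 (2 * (w : ℝ)) + 2 * Real.logb 2 M) =
      (w : ℝ) ^ (2.5 : ℝ) * ((w : ℝ) ^ (2.5 : ℝ) * M ^ 2) ^ L := by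
    rw [Real.logb_mul (by norm_num) hw0.ne', Real.logb_self_eq_one (by norm_num), ← hL,
      Real.rpow_add hw0, hswap, Real.mul_rpow (by positivity) (by positivity),
      ← Real.rpow_mul hw0.le, mul_add, Real.rpow_add hw0, mul_one, Real.rpow_two, mul_assoc]
  rw [hrhs]
  have hsq : ((w : ℝ) ^ (2.5 : ℝ)) ^ 2 = (w : ℝ) ^ 5 := by
    rw [← Real.rpow_natCast, ← Real.rpow_mul hw0.le, ← Real.rpow_natCast]
    norm_num
  set E := (w : ℝ) ^ (2.5 : ℝ) with hE
  have hE1 : 1 ≤ E := Real.one_le_rpow hw1 (by norm_num)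
  have hN : (N : ℝ) ≤ 2 * ((3 * (w : ℝ) ^ 2 + 5 * w) * (2 * M * w + 1)) ^ (Nat.log 2 w) := by
    rw [hM]
    exact_mod_cast h.le
  rcases Nat.lt_or_ge w 3 with hw3 | hw3
  · interval_cases w
    · have : N ≤ 1 := by simpa [Nat.lt_succ_iff] using h
      have h1 : (N : ℝ) ≤ 1 := by exact_mod_cast this
      refine h1.trans ?_
      have : L = 0 := by rw [hL]; simp
      rw [this, Real.rpow_zero, mul_one]
      exact hE1
    · have hl : L = 1 := by rw [hL]; norm_num
      have hlog : Nat.log 2 2 = 1 := by norm_num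
      rw [hl, Real.rpow_one]
      refine hN.trans ?_
      rw [hlog, hM]
      have : E * (E * (2 * ((2 : ℕ) : ℝ) ^ 2 + 1) ^ 2) = E ^ 2 * 81 := by push_cast; ring
      rw [this, hsq]
      norm_num
  · have hC : (3 * (w : ℝ) ^ 2 + 5 * w) * (2 * M * w + 1) ≤ E * M ^ 2 := by
      apply le_of_sq_le_sq _ (by positivity)
      rw [mul_pow, mul_pow E, hsq, ← mul_pow]
      have := poly_bound w hw3
      rw [← hM] at this
      calc _ ≤ _ := this
        _ = _ := by ring
    have hD1 : 1 ≤ E * M ^ 2 := one_le_mul_of_one_le_of_one_le hE1 (one_le_pow₀ hM1)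
    have hE2 : 2 ≤ E := by
      have : (w : ℝ) ^ (1 : ℝ) ≤ E := Real.rpow_le_rpow_of_exponent_le hw1 (by norm_num)
      rw [Real.rpow_one] at this
      have h3 : (3 : ℝ) ≤ w := by exact_mod_cast hw3
      linarith
    have hlog : ((Nat.log 2 w : ℕ) : ℝ) ≤ L := by
      rw [hL]
      exact_mod_cast Real.natLog_le_logb w 2
    refine hN.trans ?_
    apply mul_le_mul hE2 _ (by positivity) (by linarith)
    calc _ ≤ (E * M ^ 2) ^ (Nat.log 2 w) := pow_le_pow_left₀ (by positivity) hC _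
      _ = (E * M ^ 2) ^ ((Nat.log 2 w : ℕ) : ℝ) := (Real.rpow_natCast _ _).symm
      _ ≤ _ := Real.rpow_le_rpow_of_exponent_le hD1 hlog

/-- every `N`-Grundy coloring of a regular poset of width
`w ≥ 1` satisfies `N ≤ w^(2.5·lg(2w) + 2·lg(2w²+1))`. -/
theorem stmt_13 {α : Type} [Fintype α] (le : α → α → Prop)
    (hle : IsPartialOrder α le) (w : ℕ) (hw : 1 ≤ w) {n : ℕ}
    (A : Fin n → Finset α) (hreg : IsRegularPoset le w A)
    (N : ℕ) (g : α → ℕ) (hg : IsGrundy le N g) :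
    (N : ℝ) ≤ (w : ℝ) ^
      (2.5 * Real.logb 2 (2 * (w : ℝ)) +
        2 * Real.logb 2 (2 * (w : ℝ) ^ 2 + 1)) := by
  classical
  let _ : PartialOrder α :=
    { le := le
      le_refl := fun a => hle.refl a
      le_trans := fun a b c => hle.trans a b c
      le_antisymm := fun a b => hle.antisymm a b }
  obtain ⟨h, H⟩ := RP.of_regular hw A hreg
  obtain ⟨c, hc⟩ := H.label hw
  obtain ⟨hg1, hg2, hg3, hg4⟩ := hg
  have ctx : Ctx_s13 c g (2 * w ^ 2 + 1) :=
    ⟨hc, H.lfree hw, by omega, hg3, fun v => (hg1 v).1, hg4⟩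
  exact numeric w N hw (ctx.bound hw N hg2)
end
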